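/- (Nekhoroshev theorem for quasi-integrable symplectic maps) There exist positive constants ε₀, c₁, c₂, c₃ such that for every 0 < ε ≤ ε₀ and every initial condition (I₀,φ₀) ∈ B_R × ℝ^d, the trajectory (I_k,φ_k) = F_ε^k(I₀,φ₀) satisfies |I_k − I₀| < c₁ ε^{1/(2(d+1))} for every integer k with 0 ≤ k ≤ c₂·exp(c₃ ε^{−1/(2(d+1))}). -/

import Mathlib

/-- Real phase space `ℝ^d × ℝ^d` (actions–angles, sup norm), a lift of `ℝ^d × 𝕋^d`. -/
abbrev RPhase (d : ℕ) := (Fin d → ℝ) × (Fin d → ℝ)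

/-- Complex phase space `ℂ^d × ℂ^d` with the sup norm. -/
abbrev CPhase (d : ℕ) := (Fin d → ℂ) × (Fin d → ℂ)

/-- Complexification of a real vector. -/
def cx (d : ℕ) (v : Fin d → ℝ) : Fin d → ℂ := fun i => (v i : ℂ)

/-!
Near an initial action with frequency `ω₀`, Dirichlet's theorem provides a frequency `Ω` with
`T Ω ∈ ℤᵈ` so close to `ω₀` that in the scaled coordinates `J = (I - I₀) / ρ`, `ψ = φ - k Ω` the
map is a `T`-periodic composition of near-identity exact symplectic maps. Its `T`-th iterate `f` is
then near the identity as well, and Newton interpolation through the iterates of `f` (the truncated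
logarithm of the shift in terms of forward differences) gives a vector field whose flow agrees with
`f` up to an exponentially small error: the interpolation defect has many zeros, so the Schwarz
lemma applies. Exactness makes this field Hamiltonian. Its energy is conserved by `f` up to the
exponentially small error and is close to a convex function of `J`, hence a barrier between two
energy levels confines the actions for an exponentially long time.
-/

namespace Nekhoroshev

open Metric

/-! ### Cauchy estimates on balls -/

section CauchyEstimates

variable {X Y : Type*} [NormedAddCommGroup X] [NormedSpace ℂ X]
  [NormedAddCommGroup Y] [NormedSpace ℂ Y] {g : X → Y} {x₀ : X} {δ M : ℝ}

/-- `g` is holomorphic and bounded by `M` on the open ball of radius `δ` about `x₀`: the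
quantitative analyticity assumption of every estimate below. A map `f` that is `μ`-close to the
identity is encoded by applying it to `fun x ↦ f x - x`. -/
structure HolomorphicBddOn (g : X → Y) (x₀ : X) (δ M : ℝ) : Prop where
  differentiableOn : DifferentiableOn ℂ g (ball x₀ δ)
  norm_le : ∀ x ∈ ball x₀ δ, ‖g x‖ ≤ M

namespace HolomorphicBddOn

theorem nonneg (hg : HolomorphicBddOn g x₀ δ M) (hδ : 0 < δ) : 0 ≤ M :=
  (norm_nonneg _).trans (hg.norm_le x₀ (mem_ball_self hδ))

theorem mono (hg : HolomorphicBddOn g x₀ δ M) {x : X} {a : ℝ} (h : ball x a ⊆ ball x₀ δ) :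
    HolomorphicBddOn g x a M :=
  ⟨hg.differentiableOn.mono h, fun y hy ↦ hg.norm_le y (h hy)⟩

theorem mono_radius (hg : HolomorphicBddOn g x₀ δ M) {a : ℝ} (h : a ≤ δ) :
    HolomorphicBddOn g x₀ a M :=
  hg.mono (ball_subset_ball h)

theorem differentiableAt (hg : HolomorphicBddOn g x₀ δ M) {x : X} (hx : x ∈ ball x₀ δ) :
    DifferentiableAt ℂ g x :=
  hg.differentiableOn.differentiableAt (isOpen_ball.mem_nhds hx)

theorem of_sub_id {f : X → X} (hf : HolomorphicBddOn (fun x ↦ f x - x) x₀ δ M) :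
    DifferentiableOn ℂ f (ball x₀ δ) :=
  (hf.differentiableOn.add differentiableOn_id).congr fun x _ ↦ by simp

theorem norm_fderiv_apply_le (hg : HolomorphicBddOn g x₀ δ M) (hδ : 0 < δ) {ρ : ℝ} (hρ : 0 < ρ)
    {v : X} (hv : ρ * ‖v‖ < δ) : ‖fderiv ℂ g x₀ v‖ ≤ M / ρ := by
  have hline (t : ℂ) : HasDerivAt (fun t : ℂ ↦ x₀ + t • v) v t := by
    simpa using ((hasDerivAt_id t).smul_const v).const_add x₀
  have hmem (t : ℂ) (ht : ‖t‖ ≤ ρ) : x₀ + t • v ∈ ball x₀ δ := by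
    rw [mem_ball, dist_eq_norm, add_sub_cancel_left, norm_smul]
    exact (mul_le_mul_of_nonneg_right ht (norm_nonneg v)).trans_lt hv
  have hderiv : deriv (fun t : ℂ ↦ g (x₀ + t • v)) 0 = fderiv ℂ g x₀ v := by
    have hg₀ : HasFDerivAt g (fderiv ℂ g x₀) (x₀ + (0 : ℂ) • v) := by
      simpa using (hg.differentiableAt (mem_ball_self hδ)).hasFDerivAt
    exact (hg₀.comp_hasDerivAt (0 : ℂ) (hline 0)).deriv
  rw [← hderiv]
  refine Complex.norm_deriv_le_of_forall_mem_sphere_norm_le hρ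
    (DifferentiableOn.diffContOnCl fun t ht ↦ ?_)
    fun t ht ↦ hg.norm_le _ (hmem t (by simpa using ht.le))
  rw [closure_ball _ hρ.ne', mem_closedBall_zero_iff] at ht
  exact ((hg.differentiableAt (hmem t ht)).comp t
    (hline t).differentiableAt).differentiableWithinAt

theorem norm_fderiv_le (hg : HolomorphicBddOn g x₀ δ M) (hδ : 0 < δ) :
    ‖fderiv ℂ g x₀‖ ≤ M / δ := by
  have hM := hg.nonneg hδ
  refine ContinuousLinearMap.opNorm_le_bound _ (by positivity) fun v ↦ ?_
  rcases eq_or_ne v 0 with rfl | hv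
  · simp
  have hv' := norm_pos_iff.2 hv
  have hlim : Filter.Tendsto (fun ρ ↦ M / ρ) (nhdsWithin (δ / ‖v‖) (Set.Iio (δ / ‖v‖)))
      (nhds (M / (δ / ‖v‖))) :=
    (continuousAt_const.div continuousAt_id (div_pos hδ hv').ne').continuousWithinAt
  rw [div_mul_eq_mul_div, ← div_div_eq_mul_div]
  refine ge_of_tendsto hlim ?_
  filter_upwards [Ioo_mem_nhdsLT (by positivity : 0 < δ / ‖v‖)] with ρ hρ
  exact hg.norm_fderiv_apply_le hδ hρ.1 ((lt_div_iff₀ hv').1 hρ.2)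

theorem norm_fderiv_le_of_mem (hg : HolomorphicBddOn g x₀ δ M) {a : ℝ} (ha : 0 < a) {x : X}
    (hx : x ∈ ball x₀ (δ - a)) : ‖fderiv ℂ g x‖ ≤ M / a :=
  (hg.mono (ball_subset_ball' (by rw [mem_ball] at hx; linarith))).norm_fderiv_le ha

theorem norm_image_sub_le (hg : HolomorphicBddOn g x₀ δ M) {a : ℝ} (ha : 0 < a) {x y : X}
    (hx : x ∈ ball x₀ (δ - a)) (hy : y ∈ ball x₀ (δ - a)) :
    ‖g y - g x‖ ≤ M / a * ‖y - x‖ :=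
  (convex_ball x₀ (δ - a)).norm_image_sub_le_of_norm_fderiv_le (𝕜 := ℂ)
    (fun _ hz ↦ hg.differentiableAt (ball_subset_ball (by linarith) hz))
    (fun _ hz ↦ hg.norm_fderiv_le_of_mem ha hz) hx hy

end HolomorphicBddOn

end CauchyEstimates

/-! ### Finite differences along a map -/

section FiniteDifferences

variable {X Y : Type*}

/-- The forward difference `g ∘ f - g` of an observable `g` along a map `f`. -/
def fwdDiffAlong [AddCommGroup Y] (f : X → X) (g : X → Y) : X → Y := fun x ↦ g (f x) - g x

section Algebra

variable [AddCommGroup Y] {f : X → X} {g : X → Y}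

theorem fwdDiffAlong_iterate_eq_fwdDiff (j k : ℕ) (x : X) :
    (fwdDiffAlong f)^[j] g (f^[k] x) = (fwdDiff 1)^[j] (fun k ↦ g (f^[k] x)) k := by
  induction j generalizing k with
  | zero => simp
  | succ j ih =>
    rw [Function.iterate_succ_apply', Function.iterate_succ_apply', fwdDiff, ← ih, ← ih,
      Function.iterate_succ_apply' f]
    rfl

theorem fwdDiffAlong_iterate_congr {X' : Type*} {f' : X' → X'} {g' : X' → Y} {j : ℕ} {x : X}
    {x' : X'} (h : ∀ i ≤ j, g' (f'^[i] x') = g (f^[i] x)) :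
    (fwdDiffAlong f')^[j] g' x' = (fwdDiffAlong f)^[j] g x := by
  have hx := fwdDiffAlong_iterate_eq_fwdDiff (f := f) (g := g) j 0 x
  have hx' := fwdDiffAlong_iterate_eq_fwdDiff (f := f') (g := g') j 0 x'
  rw [Function.iterate_zero_apply] at hx hx'
  rw [hx, hx', fwdDiff_iter_eq_sum_shift, fwdDiff_iter_eq_sum_shift]
  refine Finset.sum_congr rfl fun i hi ↦ ?_
  simp [h i (by simpa [Nat.lt_succ_iff] using hi)]

theorem fwdDiffAlong_iterate_succ_sub_const (c : Y) (j : ℕ) :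
    (fwdDiffAlong f)^[j + 1] (fun x ↦ g x - c) = (fwdDiffAlong f)^[j + 1] g := by
  rw [Function.iterate_succ_apply, Function.iterate_succ_apply]
  congr 1
  funext x
  simp [fwdDiffAlong]

theorem sum_choose_smul_fwdDiffAlong (x : X) {k m : ℕ} (hk : k ≤ m) :
    ∑ j ∈ Finset.range (m + 1), k.choose j • (fwdDiffAlong f)^[j] g x = g (f^[k] x) := by
  have h := shift_eq_sum_fwdDiff_iter (h := 1) (fun k ↦ g (f^[k] x)) k 0
  simp only [smul_eq_mul, mul_one, zero_add, ← fwdDiffAlong_iterate_eq_fwdDiff,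
    Function.iterate_zero_apply] at h
  rw [h]
  refine (Finset.sum_subset (by simpa using hk) fun i _ hi ↦ ?_).symm
  rw [Nat.choose_eq_zero_of_lt (by simpa using hi), zero_smul]

end Algebra

variable [NormedAddCommGroup X] [NormedSpace ℂ X] [NormedAddCommGroup Y] [NormedSpace ℂ Y]
  {f : X → X} {g : X → Y} {x₀ : X} {δ a μ M : ℝ}

theorem HolomorphicBddOn.fwdDiffAlong (hf : HolomorphicBddOn (fun x ↦ f x - x) x₀ δ μ) {ρ : ℝ}
    (hρ : ρ ≤ δ) (ha : 0 < a) (hμa : 2 * μ ≤ a) (hg : HolomorphicBddOn g x₀ ρ M) :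
    HolomorphicBddOn (fwdDiffAlong f g) x₀ (ρ - a) (2 * μ / a * M) := by
  have hsub : ball x₀ (ρ - a) ⊆ ball x₀ δ := ball_subset_ball (by linarith)
  have hmaps : ∀ y ∈ ball x₀ (ρ - a), f y ∈ ball x₀ (ρ - a / 2) := fun y hy ↦ by
    have hy' := hf.norm_le y (hsub hy)
    rw [← dist_eq_norm] at hy'
    rw [mem_ball] at hy ⊢
    linarith [dist_triangle (f y) y x₀]
  refine ⟨?_, fun y hy ↦ ?_⟩
  · refine DifferentiableOn.sub (hg.differentiableOn.comp (hf.of_sub_id.mono hsub) fun y hy ↦ ?_)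
      (hg.mono_radius (by linarith)).differentiableOn
    exact ball_subset_ball (by linarith) (hmaps y hy)
  · have hM : 0 ≤ M := (norm_nonneg _).trans
      (hg.norm_le y (ball_subset_ball (by linarith) hy))
    calc ‖g (f y) - g y‖ ≤ M / (a / 2) * ‖f y - y‖ :=
          hg.norm_image_sub_le (by linarith) (ball_subset_ball (by linarith) hy) (hmaps y hy)
      _ ≤ M / (a / 2) * μ := by gcongr; exact hf.norm_le y (hsub hy)
      _ = 2 * μ / a * M := by field_simp

theorem HolomorphicBddOn.fwdDiffAlong_iterate (hf : HolomorphicBddOn (fun x ↦ f x - x) x₀ δ μ)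
    (ha : 0 < a) (hμa : 2 * μ ≤ a) (hg : HolomorphicBddOn g x₀ δ M) (j : ℕ) :
    HolomorphicBddOn ((Nekhoroshev.fwdDiffAlong f)^[j] g) x₀ (δ - j * a) ((2 * μ / a) ^ j * M) := by
  induction j with
  | zero => simpa using hg
  | succ j ih =>
    rw [Function.iterate_succ_apply']
    convert hf.fwdDiffAlong (sub_le_self δ (by positivity)) ha hμa ih using 1
    · push_cast; ring
    · ring

theorem norm_fwdDiffAlong_iterate_le (hδ : 0 < δ)
    (hf : HolomorphicBddOn (fun x ↦ f x - x) x₀ δ μ) (hg : HolomorphicBddOn g x₀ δ M) (j : ℕ)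
    (hj : 4 * j * μ ≤ δ) : ‖(fwdDiffAlong f)^[j] g x₀‖ ≤ (4 * j * μ / δ) ^ j * M := by
  rcases Nat.eq_zero_or_pos j with rfl | hj₀
  · simpa using hg.norm_le x₀ (mem_ball_self hδ)
  have : (0 : ℝ) < j := mod_cast hj₀
  -- the loss of domain `δ / 2` is shared equally between the `j` differences
  have hdiff := (hf.fwdDiffAlong_iterate (a := δ / (2 * j)) (by positivity)
    (by rw [le_div_iff₀ (by positivity)]; linarith) hg j).norm_le x₀
    (mem_ball_self (by field_simp; linarith))
  refine hdiff.trans_eq ?_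
  congr 2
  field_simp
  ring

end FiniteDifferences

/-! ### Binomial polynomials and holomorphic functions with many zeros -/

section BinomialPolynomials

theorem choose_eq_prod_div (t : ℂ) (j : ℕ) :
    Ring.choose t j = (∏ i ∈ Finset.range j, (t - i)) / j.factorial := by
  rw [Ring.choose_eq_smul, ← Polynomial.aeval_eq_smeval, Polynomial.aeval_def,
    Polynomial.eval₂_eq_eval_map, descPochhammer_map, descPochhammer_eval_eq_prod_range,
    smul_eq_mul, div_eq_inv_mul]

theorem norm_choose_le {t : ℂ} {m j : ℕ} (ht : ‖t‖ ≤ 3 * m) (hj : j ≤ m) :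
    ‖Ring.choose t j‖ ≤ (4 * m : ℝ) ^ j / j.factorial := by
  rw [choose_eq_prod_div, norm_div, norm_prod, Complex.norm_natCast]
  gcongr
  have hfactor : ∀ i ∈ Finset.range j, ‖t - i‖ ≤ 4 * m := fun i hi ↦ by
    have hi' : (i : ℝ) ≤ m := mod_cast (Finset.mem_range.1 hi).le.trans hj
    have := norm_sub_le t i
    rw [Complex.norm_natCast] at this
    linarith
  simpa using Finset.prod_le_prod (fun _ _ ↦ norm_nonneg _) hfactor

/-- The coefficients `1, -1/2, 1/3, …` of `log (1 + Δ) = Δ - Δ² / 2 + Δ³ / 3 - ⋯`: the `j`-th one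
multiplies `Δ ^ (j + 1)`. -/
noncomputable def logCoeff (j : ℕ) : ℂ := (-1) ^ j / (j + 1)

@[simp]
theorem logCoeff_zero : logCoeff 0 = 1 := by simp [logCoeff]

theorem norm_logCoeff_le_one (j : ℕ) : ‖logCoeff j‖ ≤ 1 := by
  rw [logCoeff, norm_div, norm_pow, norm_neg, norm_one, one_pow, ← Nat.cast_succ,
    Complex.norm_natCast]
  exact div_le_one_of_le₀ (by simp) (by positivity)

theorem hasDerivAt_choose_succ_zero (j : ℕ) :
    HasDerivAt (fun t : ℂ ↦ Ring.choose t (j + 1)) (logCoeff j) 0 := by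
  set p : ℂ → ℂ := fun t ↦ (∏ i ∈ Finset.range j, (t - (i + 1 : ℕ))) / (j + 1).factorial with hp
  have hfactor : (fun t : ℂ ↦ Ring.choose t (j + 1)) = fun t ↦ t * p t := by
    funext t
    rw [choose_eq_prod_div, Finset.prod_range_succ', Nat.cast_zero, sub_zero, hp]
    ring
  have hp₀ : p 0 = logCoeff j := by
    simp only [hp, zero_sub, Finset.prod_neg, Finset.card_range, logCoeff]
    rw [← Nat.cast_prod, Finset.prod_range_add_one_eq_factorial, Nat.factorial_succ]
    have := j.factorial_ne_zero
    push_cast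
    field_simp
  have hpd : DifferentiableAt ℂ p 0 := by fun_prop
  rw [hfactor]
  simpa [hp₀] using (hasDerivAt_id' (0 : ℂ)).fun_mul hpd.hasDerivAt

theorem pow_self_le_three_pow_mul_factorial (j : ℕ) : (j : ℝ) ^ j ≤ 3 ^ j * j.factorial := by
  have h := Real.pow_div_factorial_le_exp j j.cast_nonneg j
  rw [div_le_iff₀ (by positivity), ← Real.exp_one_pow] at h
  exact h.trans (by gcongr; exact Real.exp_one_lt_three.le)

end BinomialPolynomials

section ZerosOfHolomorphic

variable {Y : Type*} [NormedAddCommGroup Y] [NormedSpace ℂ Y] {q : ℂ → Y} {c t : ℂ}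
  {a ρ ρ' M : ℝ} {n : ℕ}

theorem norm_dslope_le (hc : q c = 0) (ha : 0 < a) (ht : a ≤ ‖t - c‖) :
    ‖dslope q c t‖ ≤ ‖q t‖ / a := by
  have h := congrArg norm (sub_smul_dslope q c t)
  rw [hc, sub_zero, norm_smul] at h
  rw [le_div_iff₀ ha, mul_comm, ← h]
  gcongr

theorem dslope_eq_zero (hc : q c = 0) (ht : q t = 0) (hne : t ≠ c) : dslope q c t = 0 := by
  simp [dslope_of_ne q hne, slope_def_module, hc, ht]

variable [CompleteSpace Y]

theorem norm_apply_zero_le_of_zeros (ha : 0 < a) (hρ : ρ < ρ') (hnρ : n + a ≤ ρ)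
    (hq : DifferentiableOn ℂ q (ball 0 ρ')) (hM : ∀ t ∈ sphere (0 : ℂ) ρ, ‖q t‖ ≤ M)
    (hz : ∀ k : ℕ, 1 ≤ k → k ≤ n → q k = 0) : ‖q 0‖ ≤ n.factorial / a ^ n * M := by
  have hρ₀ : 0 < ρ := by linarith [n.cast_nonneg (α := ℝ)]
  induction n generalizing q M with
  | zero =>
    simpa using Complex.norm_le_of_forall_mem_frontier_norm_le isBounded_ball
      (DifferentiableOn.diffContOnCl <| by
        rw [closure_ball _ hρ₀.ne']; exact hq.mono (closedBall_subset_ball hρ))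
      (by rwa [frontier_ball _ hρ₀.ne']) (subset_closure (mem_ball_self hρ₀))
  | succ n ih =>
    have hqc : q (n + 1 : ℕ) = 0 := hz _ (by omega) le_rfl
    have hc : ((n + 1 : ℕ) : ℂ) ∈ ball (0 : ℂ) ρ' := by
      rw [mem_ball_zero_iff, Complex.norm_natCast]; linarith
    have hquot := ih (q := dslope q (n + 1 : ℕ)) (M := M / a) (by push_cast at hnρ; linarith)
      ((Complex.differentiableOn_dslope (isOpen_ball.mem_nhds hc)).2 hq)
      (fun t ht ↦ by
        have hdist := norm_sub_norm_le t (n + 1 : ℕ)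
        rw [mem_sphere_zero_iff_norm.1 ht, Complex.norm_natCast] at hdist
        exact (norm_dslope_le hqc ha (by linarith)).trans (by gcongr; exact hM t ht))
      (fun k hk₁ hkn ↦ dslope_eq_zero hqc (hz k hk₁ (by omega)) (mod_cast (by omega)))
    have h₀ := congrArg norm (sub_smul_dslope q (n + 1 : ℕ) 0)
    rw [hqc, sub_zero, zero_sub, norm_smul, norm_neg, Complex.norm_natCast] at h₀
    calc ‖q 0‖ = (n + 1 : ℕ) * ‖dslope q (n + 1 : ℕ) 0‖ := h₀.symm
      _ ≤ (n + 1 : ℕ) * (n.factorial / a ^ n * (M / a)) := by gcongr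
      _ = (n + 1).factorial / a ^ (n + 1) * M := by
        rw [Nat.factorial_succ]; push_cast; field_simp; ring

theorem norm_deriv_zero_le_of_zeros (ha : 0 < a) (hρ : ρ < ρ') (hnρ : n + a ≤ ρ)
    (hq : DifferentiableOn ℂ q (ball 0 ρ')) (hM : ∀ t ∈ sphere (0 : ℂ) ρ, ‖q t‖ ≤ M)
    (hz : ∀ k : ℕ, k ≤ n → q k = 0) : ‖deriv q 0‖ ≤ n.factorial / a ^ n * (M / ρ) := by
  have hρ₀ : 0 < ρ := by linarith [n.cast_nonneg (α := ℝ)]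
  have hq₀ : q 0 = 0 := mod_cast hz 0 n.zero_le
  rw [← dslope_same]
  refine norm_apply_zero_le_of_zeros ha hρ hnρ ((Complex.differentiableOn_dslope
    (ball_mem_nhds 0 (hρ₀.trans hρ))).2 hq) (fun t ht ↦ ?_) fun k hk₁ hkn ↦
    dslope_eq_zero hq₀ (hz k hkn) (mod_cast (by omega))
  exact (norm_dslope_le hq₀ hρ₀ (by simpa using ht.ge)).trans (by gcongr; exact hM t ht)

end ZerosOfHolomorphic

/-! ### The truncated logarithm of a near-identity map -/

section TruncatedLogarithm

section Algebra

variable {X Y : Type*} [AddCommGroup Y] [Module ℂ Y] {f : X → X} {g : X → Y} {x : X} {m : ℕ}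

/-- The truncation to order `m` of `log (1 + Δ)`, where `Δ` is the forward difference along `f`,
applied to the observable `g`. For a near-identity map `f` it approximates the derivative of `g`
along the vector field `truncLogAlong m f id`, whose time-one flow approximates `f`. -/
noncomputable def truncLogAlong (m : ℕ) (f : X → X) (g : X → Y) (x : X) : Y :=
  ∑ j ∈ Finset.range m, logCoeff j • (fwdDiffAlong f)^[j + 1] g x

/-- The truncation to order `m` of `log (1 + Δ) / Δ` applied to the observable `g`; see
`truncLogAlong`. -/
noncomputable def truncLogQuotAlong (m : ℕ) (f : X → X) (g : X → Y) (x : X) : Y :=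
  ∑ j ∈ Finset.range m, logCoeff j • (fwdDiffAlong f)^[j] g x

theorem truncLogQuotAlong_fwdDiffAlong :
    truncLogQuotAlong m f (fwdDiffAlong f g) x = truncLogAlong m f g x := by
  simp only [truncLogQuotAlong, truncLogAlong, Function.iterate_succ_apply]

theorem fwdDiffAlong_truncLogQuotAlong :
    fwdDiffAlong f (truncLogQuotAlong m f g) x = truncLogAlong m f g x := by
  simp only [truncLogAlong, Function.iterate_succ_apply', fwdDiffAlong, smul_sub,
    Finset.sum_sub_distrib, truncLogQuotAlong]

theorem truncLogAlong_congr {X' : Type*} {f' : X' → X'} {g' : X' → Y} {x' : X'}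
    (h : ∀ i ≤ m, g' (f'^[i] x') = g (f^[i] x)) :
    truncLogAlong m f' g' x' = truncLogAlong m f g x :=
  Finset.sum_congr rfl fun j hj ↦ by
    rw [fwdDiffAlong_iterate_congr fun i hi ↦ h i (by simp at hj; omega)]

theorem truncLogQuotAlong_congr {X' : Type*} {f' : X' → X'} {g' : X' → Y} {x' : X'}
    (h : ∀ i ≤ m, g' (f'^[i] x') = g (f^[i] x)) :
    truncLogQuotAlong m f' g' x' = truncLogQuotAlong m f g x :=
  Finset.sum_congr rfl fun j hj ↦ by
    rw [fwdDiffAlong_iterate_congr fun i hi ↦ h i (by simp at hj; omega)]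

/-- The polynomial of degree at most `m` interpolating `k ↦ g (f^[k] x)` at `0, …, m`, in Newton's
form, as a function of a complex time. -/
noncomputable def orbitInterp (m : ℕ) (f : X → X) (g : X → Y) (x : X) (t : ℂ) : Y :=
  ∑ j ∈ Finset.range (m + 1), Ring.choose t j • (fwdDiffAlong f)^[j] g x

theorem orbitInterp_natCast {k : ℕ} (hk : k ≤ m) : orbitInterp m f g x k = g (f^[k] x) := by
  simp only [orbitInterp, Ring.choose_natCast, Nat.cast_smul_eq_nsmul,
    sum_choose_smul_fwdDiffAlong x hk]

theorem orbitInterp_eq_add (t : ℂ) : orbitInterp m f g x t =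
    (∑ j ∈ Finset.range m, Ring.choose t (j + 1) • (fwdDiffAlong f)^[j + 1] g x) + g x := by
  simp [orbitInterp, Finset.sum_range_succ']

theorem orbitInterp_sub_const (c : Y) (t : ℂ) :
    orbitInterp m f (fun x ↦ g x - c) x t = orbitInterp m f g x t - c := by
  simp only [orbitInterp_eq_add, fwdDiffAlong_iterate_succ_sub_const, add_sub_assoc]

theorem truncLogAlong_sub_const (c : Y) :
    truncLogAlong m f (fun x ↦ g x - c) x = truncLogAlong m f g x := by
  simp only [truncLogAlong, fwdDiffAlong_iterate_succ_sub_const]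

end Algebra

variable {X Y : Type*} [NormedAddCommGroup Y] [NormedSpace ℂ Y] {f : X → X} {g : X → Y} {x₀ : X}
  {δ μ M : ℝ} {m : ℕ}

theorem hasDerivAt_orbitInterp_zero :
    HasDerivAt (orbitInterp m f g x₀) (truncLogAlong m f g x₀) 0 := by
  simp only [funext orbitInterp_eq_add]
  exact (HasDerivAt.fun_sum fun j _ ↦
    (hasDerivAt_choose_succ_zero j).smul_const ((fwdDiffAlong f)^[j + 1] g x₀)).add_const _

theorem differentiable_orbitInterp : Differentiable ℂ (orbitInterp m f g x₀) := by
  unfold orbitInterp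
  simp only [choose_eq_prod_div]
  fun_prop

variable [NormedAddCommGroup X] [NormedSpace ℂ X]

/-- Stirling's bound on `j ^ j / j !` turns the loss `(4 j μ / δ) ^ j` of the Cauchy estimates into
a geometric factor. -/
theorem norm_choose_mul_le {t : ℂ} {j : ℕ} (hδ : 0 < δ) (hμ : 0 ≤ μ) (hm : 200 * m * μ ≤ δ)
    (ht : ‖t‖ ≤ 3 * m) (hj : j ≤ m) :
    ‖Ring.choose t j‖ * (4 * j * μ / δ) ^ j ≤ (1 / 4) ^ j := by
  calc ‖Ring.choose t j‖ * (4 * j * μ / δ) ^ j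
      ≤ (4 * m : ℝ) ^ j / j.factorial * (4 * j * μ / δ) ^ j := by
        gcongr; exact norm_choose_le ht hj
    _ = (16 * m * μ / δ) ^ j * (j ^ j / j.factorial) := by
        rw [div_mul_eq_mul_div, mul_div_assoc', ← mul_pow, ← mul_pow]
        ring_nf
    _ ≤ (16 * m * μ / δ) ^ j * 3 ^ j := by
        gcongr
        rw [div_le_iff₀ (by positivity)]
        exact pow_self_le_three_pow_mul_factorial j
    _ = (48 * m * μ / δ) ^ j := by
        rw [← mul_pow]; ring_nf
    _ ≤ (1 / 4) ^ j := by
        refine pow_le_pow_left₀ (by positivity) ?_ j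
        rw [div_le_iff₀ hδ]
        linarith [mul_nonneg m.cast_nonneg hμ]

theorem norm_orbitInterp_sub_le (hδ : 0 < δ) (hf : HolomorphicBddOn (fun x ↦ f x - x) x₀ δ μ)
    (hg : HolomorphicBddOn g x₀ δ M) (hm : 200 * m * μ ≤ δ) {t : ℂ} (ht : ‖t‖ ≤ 3 * m) :
    ‖orbitInterp m f g x₀ t - g x₀‖ ≤ 1 / 3 * M := by
  have hμ := hf.nonneg hδ
  have hM := hg.nonneg hδ
  have hterm : ∀ j ∈ Finset.Ico 1 (m + 1),
      ‖Ring.choose t j • (fwdDiffAlong f)^[j] g x₀‖ ≤ (1 / 4) ^ j * M := fun j hj ↦ by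
    have hjm : j ≤ m := by simp at hj; omega
    have hjm' : 4 * j * μ ≤ δ := by
      have : (j : ℝ) * μ ≤ m * μ := by gcongr
      linarith [mul_nonneg m.cast_nonneg hμ]
    calc ‖Ring.choose t j • (fwdDiffAlong f)^[j] g x₀‖
        ≤ ‖Ring.choose t j‖ * ((4 * j * μ / δ) ^ j * M) := by
          rw [norm_smul]; gcongr; exact norm_fwdDiffAlong_iterate_le hδ hf hg j hjm'
      _ = ‖Ring.choose t j‖ * (4 * j * μ / δ) ^ j * M := by ring
      _ ≤ (1 / 4) ^ j * M := by gcongr; exact norm_choose_mul_le hδ hμ hm ht hjm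
  rw [orbitInterp, Finset.range_eq_Ico, Finset.sum_eq_sum_Ico_succ_bot m.succ_pos]
  simp only [Ring.choose_zero_right, one_smul, Function.iterate_zero_apply, zero_add,
    add_sub_cancel_left]
  refine (norm_sum_le_of_le _ hterm).trans ?_
  rw [← Finset.sum_mul]
  gcongr
  exact (geom_sum_Ico_le_of_lt_one (by norm_num) (by norm_num)).trans (by norm_num)

theorem orbitInterp_id_mem_ball (hδ : 0 < δ)
    (hf : HolomorphicBddOn (fun x ↦ f x - x) x₀ δ μ) (hm : 200 * m * μ ≤ δ) {t : ℂ}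
    (ht : ‖t‖ ≤ 3 * m) : orbitInterp m f id x₀ t ∈ ball x₀ δ := by
  have hid : HolomorphicBddOn (fun x : X ↦ id x - x₀) x₀ δ δ :=
    ⟨by fun_prop, fun y hy ↦ (mem_ball_iff_norm.1 hy).le⟩
  have h := norm_orbitInterp_sub_le hδ hf hid hm ht
  rw [orbitInterp_sub_const, sub_sub_sub_cancel_right] at h
  exact mem_ball_iff_norm.2 (h.trans_lt (by linarith))

theorem factorial_div_pow_le {m : ℕ} (hm : 1 ≤ m) :
    (m.factorial : ℝ) / (3 / 2 * m) ^ m ≤ (2 / 3) ^ m := by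
  have : (0 : ℝ) < m := mod_cast hm
  rw [div_le_iff₀ (by positivity), mul_pow, ← mul_assoc, ← mul_pow]
  norm_num
  exact mod_cast m.factorial_le_pow

theorem hasDerivAt_comp_orbitInterp_sub_zero (hg : DifferentiableAt ℂ g x₀) :
    HasDerivAt (fun t ↦ g (orbitInterp m f id x₀ t) - orbitInterp m f g x₀ t)
      (fderiv ℂ g x₀ (truncLogAlong m f id x₀) - truncLogAlong m f g x₀) 0 := by
  have h₀ : orbitInterp m f id x₀ 0 = x₀ := by
    simpa using orbitInterp_natCast (f := f) (g := id) (x := x₀) m.zero_le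
  have hg₀ : HasFDerivAt g (fderiv ℂ g x₀) (orbitInterp m f id x₀ 0) := by
    rw [h₀]; exact hg.hasFDerivAt
  exact (hg₀.comp_hasDerivAt 0 hasDerivAt_orbitInterp_zero).fun_sub hasDerivAt_orbitInterp_zero

/-- `g` composed with the interpolation of the orbit and the interpolation of `g` along the orbit
agree at the times `0, …, m`, so their derivatives at `0` are exponentially close. -/
theorem norm_truncLogAlong_sub_fderiv_le [CompleteSpace Y] (hδ : 0 < δ)
    (hf : HolomorphicBddOn (fun x ↦ f x - x) x₀ δ μ) (hg : HolomorphicBddOn g x₀ δ M)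
    (hm₁ : 1 ≤ m) (hm : 200 * m * μ ≤ δ) :
    ‖truncLogAlong m f g x₀ - fderiv ℂ g x₀ (truncLogAlong m f id x₀)‖ ≤ 2 * M * (2 / 3) ^ m := by
  have hM := hg.nonneg hδ
  have hm₁' : (1 : ℝ) ≤ m := mod_cast hm₁
  set P := orbitInterp m f id x₀
  set Q := orbitInterp m f g x₀
  have hdiff : DifferentiableOn ℂ (fun t ↦ g (P t) - Q t) (ball 0 (3 * m)) := fun t ht ↦
    (((hg.differentiableAt (orbitInterp_id_mem_ball hδ hf hm (mem_ball_zero_iff.1 ht).le)).comp t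
      (differentiable_orbitInterp t)).sub (differentiable_orbitInterp t)).differentiableWithinAt
  have hbound : ∀ t ∈ sphere (0 : ℂ) (5 / 2 * m), ‖g (P t) - Q t‖ ≤ 4 * M := fun t ht ↦ by
    have ht' : ‖t‖ ≤ 3 * m := by rw [mem_sphere_zero_iff_norm.1 ht]; linarith
    have h₁ := hg.norm_le _ (orbitInterp_id_mem_ball hδ hf hm ht')
    have h₂ := norm_orbitInterp_sub_le hδ hf hg hm ht'
    have h₃ := hg.norm_le _ (mem_ball_self hδ)
    have h₄ := norm_sub_norm_le (Q t) (g x₀)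
    linarith [norm_sub_le (g (P t)) (Q t)]
  have hzero : ∀ k : ℕ, k ≤ m → g (P k) - Q k = 0 := fun k hk ↦ by
    simp [P, Q, orbitInterp_natCast hk]
  rw [norm_sub_rev,
    ← (hasDerivAt_comp_orbitInterp_sub_zero (hg.differentiableAt (mem_ball_self hδ))).deriv]
  calc ‖deriv (fun t ↦ g (P t) - Q t) 0‖
      ≤ m.factorial / (3 / 2 * m : ℝ) ^ m * (4 * M / (5 / 2 * m)) :=
        norm_deriv_zero_le_of_zeros (by linarith) (by linarith) (by linarith) hdiff hbound hzero
    _ ≤ (2 / 3) ^ m * (2 * M) := by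
        gcongr
        · exact factorial_div_pow_le hm₁
        · rw [div_le_iff₀ (by linarith)]
          nlinarith
    _ = 2 * M * (2 / 3) ^ m := by ring

theorem norm_fwdDiffAlong_iterate_succ_le (hδ : 0 < δ)
    (hf : HolomorphicBddOn (fun x ↦ f x - x) x₀ δ μ) (hg : HolomorphicBddOn g x₀ δ M) {j : ℕ}
    (hj : j < m) (hm : 200 * m * μ ≤ δ) :
    ‖(fwdDiffAlong f)^[j + 1] g x₀‖ ≤ 4 * M * μ / δ * (1 / 4) ^ j := by
  have hμ := hf.nonneg hδ
  have hM := hg.nonneg hδ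
  have hjμ : 200 * (j + 1 : ℕ) * μ ≤ δ := le_trans (by gcongr; exact mod_cast hj) hm
  have hsmall : 4 * (j + 1 : ℕ) * μ / δ ≤ 1 / 16 := by
    rw [div_le_iff₀ hδ]
    linarith [mul_nonneg (j + 1).cast_nonneg hμ]
  have hlin : ((j + 1 : ℕ) : ℝ) ≤ 4 ^ j := by
    have := one_add_mul_le_pow (a := (3 : ℝ)) (by norm_num) j
    norm_num at this ⊢
    linarith [j.cast_nonneg (α := ℝ)]
  calc ‖(fwdDiffAlong f)^[j + 1] g x₀‖
      ≤ (4 * (j + 1 : ℕ) * μ / δ) ^ (j + 1) * M :=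
        norm_fwdDiffAlong_iterate_le hδ hf hg _ (by linarith [mul_nonneg (j + 1).cast_nonneg hμ])
    _ = (4 * (j + 1 : ℕ) * μ / δ) ^ j * (j + 1 : ℕ) * (4 * M * μ / δ) := by ring
    _ ≤ (1 / 16) ^ j * 4 ^ j * (4 * M * μ / δ) := by gcongr
    _ = 4 * M * μ / δ * (1 / 4) ^ j := by rw [← mul_pow]; norm_num; ring

theorem norm_truncLogQuotAlong_sub_le (hδ : 0 < δ)
    (hf : HolomorphicBddOn (fun x ↦ f x - x) x₀ δ μ) (hg : HolomorphicBddOn g x₀ δ M)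
    (hm₁ : 1 ≤ m) (hm : 200 * m * μ ≤ δ) :
    ‖truncLogQuotAlong m f g x₀ - g x₀‖ ≤ 6 * M * μ / δ := by
  have hμ := hf.nonneg hδ
  have hM := hg.nonneg hδ
  obtain ⟨l, rfl⟩ := Nat.exists_eq_add_of_le' hm₁
  rw [truncLogQuotAlong, Finset.sum_range_succ', logCoeff_zero, one_smul,
    Function.iterate_zero_apply, add_sub_cancel_right]
  calc ‖∑ j ∈ Finset.range l, logCoeff (j + 1) • (fwdDiffAlong f)^[j + 1] g x₀‖
      ≤ ∑ j ∈ Finset.range l, 4 * M * μ / δ * (1 / 4) ^ j := norm_sum_le_of_le _ fun j hj ↦ by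
        rw [norm_smul]
        refine (mul_le_of_le_one_left (norm_nonneg _) (norm_logCoeff_le_one _)).trans ?_
        exact norm_fwdDiffAlong_iterate_succ_le hδ hf hg (by simp at hj; omega) hm
    _ ≤ 4 * M * μ / δ * (4 / 3) := by
        rw [← Finset.mul_sum, Finset.range_eq_Ico]
        gcongr
        exact (geom_sum_Ico_le_of_lt_one (by norm_num) (by norm_num)).trans (by norm_num)
    _ = 16 / 3 * (M * μ / δ) := by ring
    _ ≤ 6 * (M * μ / δ) := by gcongr; norm_num
    _ = 6 * M * μ / δ := by ring

theorem norm_truncLogAlong_id_sub_le (hδ : 0 < δ)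
    (hf : HolomorphicBddOn (fun x ↦ f x - x) x₀ δ μ) (hm₁ : 1 ≤ m) (hm : 200 * m * μ ≤ δ) :
    ‖truncLogAlong m f id x₀ - (f x₀ - x₀)‖ ≤ 6 * μ ^ 2 / δ := by
  rw [← truncLogQuotAlong_fwdDiffAlong]
  exact (norm_truncLogQuotAlong_sub_le hδ hf hf hm₁ hm).trans_eq (by ring)

end TruncatedLogarithm

/-! ### The interpolating energy of an orbit -/

section Energy

open Matrix

variable {d m n : ℕ} {f : CPhase d → CPhase d} {S : CPhase d → ℂ} {y : ℕ → CPhase d} {Sq : ℕ → ℂ}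
  {δ μ MS MJ : ℝ}

theorem norm_dotProduct_le {R : Type*} [NormedRing R] (v w : Fin d → R) :
    ‖v ⬝ᵥ w‖ ≤ d * (‖v‖ * ‖w‖) := by
  have hterm : ∀ i ∈ Finset.univ, ‖v i * w i‖ ≤ ‖v‖ * ‖w‖ := fun i _ ↦
    (norm_mul_le _ _).trans (by gcongr <;> exact norm_le_pi_norm _ i)
  exact (norm_sum_le_of_le _ hterm).trans_eq (by simp)

/-- `f` is exact symplectic at `z` with primitive `S`: at `z`, the differential of `S` is
`f^*(I dφ) - I dφ`. -/
def IsExactAt (f : CPhase d → CPhase d) (S : CPhase d → ℂ) (z : CPhase d) : Prop :=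
  ∀ v, fderiv ℂ S z v = (f z).1 ⬝ᵥ (fderiv ℂ f z v).2 - z.1 ⬝ᵥ v.2

/-- The energy at time `n` of an orbit `y` along which the primitive takes the values `Sq`. For
the orbit of an exact symplectic near-identity map it is, up to a constant, the value of the
Hamiltonian whose time-one flow interpolates the map. -/
noncomputable def energy (m : ℕ) (y : ℕ → CPhase d) (Sq : ℕ → ℂ) (n : ℕ) : ℂ :=
  (y n).1 ⬝ᵥ (truncLogAlong m (· + 1) y n).2 - truncLogQuotAlong m (· + 1) Sq n

theorem eq_iterate_of_forall_step (hy : ∀ i ≤ m, y (n + i + 1) = f (y (n + i))) {i : ℕ}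
    (hi : i ≤ m + 1) : y ((· + 1)^[i] n) = f^[i] (y n) := by
  simp only [add_right_iterate, smul_eq_mul, mul_one]
  induction i with
  | zero => rfl
  | succ i ih => rw [Function.iterate_succ_apply', ← ih (by omega), ← hy i (by omega)]; rfl

theorem eq_comp_iterate_of_forall_step (hy : ∀ i ≤ m, y (n + i + 1) = f (y (n + i)))
    (hS : ∀ i ≤ m, Sq (n + i) = S (y (n + i))) {i : ℕ} (hi : i ≤ m) :
    Sq ((· + 1)^[i] n) = S (f^[i] (y n)) := by
  rw [← eq_iterate_of_forall_step hy (by omega)]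
  simpa only [add_right_iterate, smul_eq_mul, mul_one] using hS i hi

theorem energy_succ_sub_energy (hex : IsExactAt f S (y n))
    (hy : ∀ i ≤ m, y (n + i + 1) = f (y (n + i))) (hS : ∀ i ≤ m, Sq (n + i) = S (y (n + i))) :
    energy m y Sq (n + 1) - energy m y Sq n =
      (f (y n)).1 ⬝ᵥ (truncLogAlong m f f (y n) -
          fderiv ℂ f (y n) (truncLogAlong m f id (y n))).2 -
        (truncLogAlong m f S (y n) - fderiv ℂ S (y n) (truncLogAlong m f id (y n))) := by
  have hnow : truncLogAlong m (· + 1) y n = truncLogAlong m f id (y n) :=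
    truncLogAlong_congr fun i hi ↦ eq_iterate_of_forall_step hy (by omega)
  have hnext : truncLogAlong m (· + 1) y (n + 1) = truncLogAlong m f f (y n) :=
    truncLogAlong_congr fun i hi ↦ by
      rw [← Function.iterate_succ_apply, eq_iterate_of_forall_step hy (by omega),
        Function.iterate_succ_apply']
  have haction : truncLogQuotAlong m (· + 1) Sq (n + 1) - truncLogQuotAlong m (· + 1) Sq n =
      truncLogAlong m f S (y n) :=
    fwdDiffAlong_truncLogQuotAlong.trans
      (truncLogAlong_congr fun i hi ↦ eq_comp_iterate_of_forall_step hy hS hi)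
  have hstep : y (n + 1) = f (y n) := hy 0 m.zero_le
  rw [energy, energy, hnow, hnext, hstep, hex, ← haction, Prod.snd_sub, dotProduct_sub]
  ring

theorem norm_energy_succ_sub_le (hδ : 0 < δ)
    (hf : HolomorphicBddOn (fun z ↦ f z - z) (y n) δ μ) (hSb : HolomorphicBddOn S (y n) δ MS)
    (hMJ : ‖(y (n + 1)).1‖ ≤ MJ) (hex : IsExactAt f S (y n))
    (hy : ∀ i ≤ m, y (n + i + 1) = f (y (n + i))) (hS : ∀ i ≤ m, Sq (n + i) = S (y (n + i)))
    (hm₁ : 1 ≤ m) (hm : 200 * m * μ ≤ δ) :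
    ‖energy m y Sq (n + 1) - energy m y Sq n‖ ≤ (2 * MS + 4 * d * MJ * δ) * (2 / 3) ^ m := by
  have hm₁' : (1 : ℝ) ≤ m := mod_cast hm₁
  have hMJ₀ : 0 ≤ MJ := (norm_nonneg _).trans hMJ
  have hμδ : μ ≤ δ := by nlinarith [hf.nonneg hδ]
  have hfb : HolomorphicBddOn (fun z ↦ f z - y n) (y n) δ (2 * δ) := by
    refine ⟨hf.of_sub_id.sub_const _, fun z hz ↦ ?_⟩
    rw [← sub_add_sub_cancel _ z]
    linarith [norm_add_le (f z - z) (z - y n), hf.norm_le z hz, mem_ball_iff_norm.1 hz]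
  have hf' := norm_truncLogAlong_sub_fderiv_le hδ hf hfb hm₁ hm
  rw [truncLogAlong_sub_const, fderiv_sub_const] at hf'
  have hS' := norm_truncLogAlong_sub_fderiv_le hδ hf hSb hm₁ hm
  have hstep : y (n + 1) = f (y n) := hy 0 m.zero_le
  rw [energy_succ_sub_energy hex hy hS, ← hstep]
  refine (norm_sub_le _ _).trans ((add_le_add ((norm_dotProduct_le _ _).trans (?_ :
    _ ≤ d * (MJ * (2 * (2 * δ) * (2 / 3) ^ m)))) hS').trans_eq (by ring))
  gcongr
  exact (norm_snd_le _).trans hf'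

theorem norm_energy_sub_le (hδ : 0 < δ)
    (hf : HolomorphicBddOn (fun z ↦ f z - z) (y n) δ μ) (hSb : HolomorphicBddOn S (y n) δ MS)
    (hMJ : ‖(y n).1‖ ≤ MJ)
    (hy : ∀ i ≤ m, y (n + i + 1) = f (y (n + i))) (hS : ∀ i ≤ m, Sq (n + i) = S (y (n + i)))
    (hm₁ : 1 ≤ m) (hm : 200 * m * μ ≤ δ) :
    ‖energy m y Sq n - ((y n).1 ⬝ᵥ ((y (n + 1)).2 - (y n).2) - Sq n)‖ ≤
      6 * d * MJ * μ ^ 2 / δ + 6 * MS * μ / δ := by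
  have hMJ₀ : 0 ≤ MJ := (norm_nonneg _).trans hMJ
  have hnow : truncLogAlong m (· + 1) y n = truncLogAlong m f id (y n) :=
    truncLogAlong_congr fun i hi ↦ eq_iterate_of_forall_step hy (by omega)
  have haction : truncLogQuotAlong m (· + 1) Sq n = truncLogQuotAlong m f S (y n) :=
    truncLogQuotAlong_congr fun i hi ↦ eq_comp_iterate_of_forall_step hy hS hi
  have hstep : y (n + 1) = f (y n) := hy 0 m.zero_le
  have hSn : Sq n = S (y n) := hS 0 m.zero_le
  have hsplit : energy m y Sq n - ((y n).1 ⬝ᵥ ((y (n + 1)).2 - (y n).2) - Sq n) =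
      (y n).1 ⬝ᵥ (truncLogAlong m f id (y n) - (f (y n) - y n)).2 -
        (truncLogQuotAlong m f S (y n) - S (y n)) := by
    simp only [energy, hnow, haction, hstep, hSn, Prod.snd_sub, dotProduct_sub]
    ring
  rw [hsplit]
  refine (norm_sub_le _ _).trans ((add_le_add ((norm_dotProduct_le _ _).trans (?_ :
    _ ≤ d * (MJ * (6 * μ ^ 2 / δ))))
    (norm_truncLogQuotAlong_sub_le hδ hf hSb hm₁ hm)).trans_eq (by ring))
  gcongr
  exact (norm_snd_le _).trans (norm_truncLogAlong_id_sub_le hδ hf hm₁ hm)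

end Energy

/-! ### Maps generated by a small function of the new actions and the old angles -/

/-- `g` is analytic and bounded by `M` on the open ball of radius `δ` about `x₀`. For generating
functions, whose gradients enter the dynamics, this is preferred to `HolomorphicBddOn`, since
Mathlib derives analyticity from differentiability in one complex variable only. -/
structure AnalyticBddOn {E : Type*} [NormedAddCommGroup E] [NormedSpace ℂ E] (g : E → ℂ) (x₀ : E)
    (δ M : ℝ) : Prop where
  analyticOnNhd : AnalyticOnNhd ℂ g (ball x₀ δ)
  norm_le : ∀ x ∈ ball x₀ δ, ‖g x‖ ≤ M

section AnalyticBddOn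

variable {E : Type*} [NormedAddCommGroup E] [NormedSpace ℂ E] {g : E → ℂ} {x₀ : E} {δ M : ℝ}

theorem AnalyticBddOn.holomorphicBddOn (hg : AnalyticBddOn g x₀ δ M) : HolomorphicBddOn g x₀ δ M :=
  ⟨hg.analyticOnNhd.differentiableOn, hg.norm_le⟩

end AnalyticBddOn

section NearIdentityInverse

variable {E : Type*} [NormedAddCommGroup E] [NormedSpace ℂ E] {a : E → E} {x₀ : E} {τ κ : ℝ}

theorem HolomorphicBddOn.approximatesLinearOn_add_id (hτ : 0 < τ)
    (ha : HolomorphicBddOn a x₀ (6 * τ) κ) (hκ : 2 * κ ≤ τ) :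
    ApproximatesLinearOn (fun z ↦ a z + z) (ContinuousLinearEquiv.refl ℂ E : E →L[ℂ] E)
      (ball x₀ (5 * τ)) (1 / 2) := by
  intro z hz w hw
  rw [show 5 * τ = 6 * τ - τ by ring] at hz hw
  simp only [ContinuousLinearEquiv.coe_coe, ContinuousLinearEquiv.refl_apply]
  rw [show a z + z - (a w + w) - (z - w) = a z - a w by abel]
  have hhalf : κ / τ ≤ 2⁻¹ := by rw [div_le_iff₀ hτ]; linarith
  simpa using (ha.norm_image_sub_le hτ hw hz).trans (by gcongr)

theorem HolomorphicBddOn.exists_add_id_eq (hτ : 0 < τ) [CompleteSpace E]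
    (ha : HolomorphicBddOn a x₀ (6 * τ) κ) (hκ : 2 * κ ≤ τ) {y : E} (hy : y ∈ ball x₀ (4 * τ)) :
    ∃ z ∈ ball x₀ (5 * τ), a z + z = y := by
  have hball : closedBall y τ ⊆ ball x₀ (5 * τ) := fun z hz ↦ by
    rw [mem_ball] at hy ⊢
    linarith [dist_triangle z y x₀, mem_closedBall.1 hz]
  let idInverse :
      ((ContinuousLinearEquiv.refl ℂ E : E ≃L[ℂ] E) : E →L[ℂ] E).NonlinearRightInverse :=
    ⟨id, 1, by simp, by simp⟩
  have hsurj := (ha.approximatesLinearOn_add_id hτ hκ).surjOn_closedBall_of_nonlinearRightInverse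
    idInverse hτ.le hball
  have hmem : y ∈ closedBall (a y + y) (((idInverse.nnnorm : ℝ)⁻¹ - (1 / 2 : NNReal)) * τ) := by
    have hay := ha.norm_le y (ball_subset_ball (by linarith) hy)
    rw [mem_closedBall, dist_comm, dist_eq_norm, add_sub_cancel_right]
    refine hay.trans ?_
    norm_num [idInverse]
    linarith
  obtain ⟨z, hz, hzy⟩ := hsurj hmem
  exact ⟨z, hball hz, hzy⟩

theorem HolomorphicBddOn.exists_rightInverse_add_id [CompleteSpace E] (hτ : 0 < τ)
    (ha : HolomorphicBddOn a x₀ (6 * τ) κ) (hκ : 2 * κ ≤ τ) :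
    ∃ b : E → E, DifferentiableOn ℂ b (ball x₀ (4 * τ)) ∧ ∀ y ∈ ball x₀ (4 * τ),
      b y ∈ ball x₀ (5 * τ) ∧ a (b y) + b y = y ∧
      ∀ z ∈ ball x₀ (5 * τ), a z + z = y → z = b y := by
  have hlin := ha.approximatesLinearOn_add_id hτ hκ
  have hnontriv : Subsingleton E ∨
      (1 / 2 : NNReal) < ‖((ContinuousLinearEquiv.refl ℂ E).symm : E →L[ℂ] E)‖₊⁻¹ := by
    refine (ContinuousLinearEquiv.subsingleton_or_nnnorm_symm_pos (.refl ℂ E)).imp_right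
      fun hpos ↦ ?_
    refine (NNReal.half_lt_self one_ne_zero).trans_le ((one_le_inv₀ hpos).2 ?_)
    exact ContinuousLinearMap.norm_id_le
  let e := hlin.toOpenPartialHomeomorph _ _ hnontriv isOpen_ball
  have htarget : ball x₀ (4 * τ) ⊆ e.target := fun y hy ↦ ha.exists_add_id_eq hτ hκ hy
  have hderiv (z) (hz : z ∈ ball x₀ (5 * τ)) : ‖-fderiv ℂ a z‖ < 1 := by
    rw [norm_neg]
    refine (ha.norm_fderiv_le_of_mem hτ (by rwa [show 6 * τ - τ = 5 * τ by ring])).trans_lt ?_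
    rw [div_lt_one hτ]
    linarith
  refine ⟨e.symm, fun y hy ↦ ?_, fun y hy ↦ ⟨e.map_target (htarget hy),
    e.right_inv (htarget hy), fun z hz hzy ↦ ?_⟩⟩
  · have hy' := e.map_target (htarget hy)
    have hinv : HasFDerivAt (fun z ↦ a z + z) ((ContinuousLinearEquiv.ofUnit
        (Units.oneSub _ (hderiv _ hy')) : E ≃L[ℂ] E) : E →L[ℂ] E) (e.symm y) := by
      refine ((ha.differentiableAt (ball_subset_ball (by linarith) hy')).hasFDerivAt.add
        (hasFDerivAt_id _)).congr_fderiv ?_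
      change _ = (Units.oneSub _ (hderiv _ hy') : E →L[ℂ] E)
      rw [Units.val_oneSub, sub_neg_eq_add, add_comm]
      rfl
    exact (e.hasFDerivAt_symm (htarget hy) hinv).differentiableAt.differentiableWithinAt
  · rw [← hzy]
    exact (e.left_inv hz).symm

end NearIdentityInverse

section GeneratedMap

open Matrix

variable {d : ℕ} {g : CPhase d → ℂ} {x₀ z z' : CPhase d} {τ κ J : ℝ}

/-- The gradient of `g` with respect to the actions. -/
noncomputable def actionGrad (g : CPhase d → ℂ) (z : CPhase d) : Fin d → ℂ :=
  fun i ↦ fderiv ℂ g z (Pi.single i 1, 0)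

/-- The gradient of `g` with respect to the angles. -/
noncomputable def angleGrad (g : CPhase d → ℂ) (z : CPhase d) : Fin d → ℂ :=
  fun i ↦ fderiv ℂ g z (0, Pi.single i 1)

theorem norm_actionGrad_le : ‖actionGrad g z‖ ≤ ‖fderiv ℂ g z‖ :=
  (pi_norm_le_iff_of_nonneg (norm_nonneg _)).2 fun i ↦
    (ContinuousLinearMap.le_opNorm _ _).trans_eq (by simp [Prod.norm_def, Pi.norm_single])

theorem norm_angleGrad_le : ‖angleGrad g z‖ ≤ ‖fderiv ℂ g z‖ :=
  (pi_norm_le_iff_of_nonneg (norm_nonneg _)).2 fun i ↦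
    (ContinuousLinearMap.le_opNorm _ _).trans_eq (by simp [Prod.norm_def, Pi.norm_single])

theorem linearMap_apply_eq_dotProduct (L : (Fin d → ℂ) →ₗ[ℂ] ℂ) (u : Fin d → ℂ) :
    L u = (fun i ↦ L (Pi.single i 1)) ⬝ᵥ u := by
  conv_lhs => rw [← LinearMap.sum_single_apply (fun _ : Fin d ↦ ℂ) u]
  simp_rw [map_sum, dotProduct]
  refine Finset.sum_congr rfl fun i _ ↦ ?_
  rw [← mul_one (u i), ← smul_eq_mul, Pi.single_smul, map_smul, smul_eq_mul, smul_eq_mul,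
    mul_one, mul_comm]

theorem fderiv_apply_eq_dotProduct (v : CPhase d) :
    fderiv ℂ g z v = actionGrad g z ⬝ᵥ v.1 + angleGrad g z ⬝ᵥ v.2 := by
  rw [← (fderiv ℂ g z).comp_inl_add_comp_inr]
  exact congrArg₂ (· + ·)
    (linearMap_apply_eq_dotProduct ((fderiv ℂ g z).comp (.inl ℂ _ _)).toLinearMap v.1)
    (linearMap_apply_eq_dotProduct ((fderiv ℂ g z).comp (.inr ℂ _ _)).toLinearMap v.2)

theorem differentiableAt_dotProduct {X : Type*} [NormedAddCommGroup X] [NormedSpace ℂ X]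
    {u v : X → Fin d → ℂ} {x : X} (hu : DifferentiableAt ℂ u x) (hv : DifferentiableAt ℂ v x) :
    DifferentiableAt ℂ (fun x ↦ u x ⬝ᵥ v x) x :=
  .fun_sum fun i _ ↦ (differentiableAt_pi.1 hu i).mul (differentiableAt_pi.1 hv i)

theorem fderiv_dotProduct_apply {X : Type*} [NormedAddCommGroup X] [NormedSpace ℂ X]
    {u v : X → Fin d → ℂ} {u' v' : X →L[ℂ] Fin d → ℂ} {x : X} (hu : HasFDerivAt u u' x)
    (hv : HasFDerivAt v v' x) (w : X) :
    fderiv ℂ (fun x ↦ u x ⬝ᵥ v x) x w = u' w ⬝ᵥ v x + u x ⬝ᵥ v' w := by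
  let B := (dotProductBilin ℂ ℂ : (Fin d → ℂ) →ₗ[ℂ] _).mkContinuous₂ d fun v w ↦ by
    rw [mul_assoc]
    exact norm_dotProduct_le v w
  have h := congrArg (· w) (B.hasFDerivAt_of_bilinear hu hv).fderiv
  exact h.trans (add_comm _ _)

/-- `z'` is the image of `z` under the exact symplectic map with generating function
`z'.1 · z.2 + g (z'.1, z.2)`. -/
structure IsStep (g : CPhase d → ℂ) (z z' : CPhase d) : Prop where
  fst_eq : z'.1 = z.1 - angleGrad g (z'.1, z.2)
  snd_eq : z'.2 = z.2 + actionGrad g (z'.1, z.2)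

/-- The action picked up in one step: as a function of `z` along the generated map it is a
primitive of `z'.1 · dz'.2 - z.1 · dz.2`. -/
def stepAction (g : CPhase d → ℂ) (z z' : CPhase d) : ℂ :=
  z'.1 ⬝ᵥ (z'.2 - z.2) - g (z'.1, z.2)

theorem fst_snd_mem_ball_of_norm_fst_sub_le (hτ : 0 < τ) (hz : z ∈ ball x₀ (4 * τ))
    (h : ‖z'.1 - z.1‖ ≤ τ / 2) : (z'.1, z.2) ∈ ball x₀ (5 * τ) := by
  have hdist : dist (z'.1, z.2) z ≤ τ / 2 := by
    rw [dist_eq_norm, Prod.norm_def]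
    exact max_le h (by simpa using (half_pos hτ).le)
  rw [mem_ball] at hz ⊢
  linarith [dist_triangle (z'.1, z.2) z x₀]

namespace AnalyticBddOn

variable (hg : AnalyticBddOn g x₀ (8 * τ) (2 * τ * κ))

include hg

theorem differentiableOn_fderiv_apply (v : CPhase d) :
    DifferentiableOn ℂ (fun z ↦ fderiv ℂ g z v) (ball x₀ (8 * τ)) :=
  hg.analyticOnNhd.fderiv.differentiableOn.clm_apply (differentiableOn_const v)

theorem norm_fderiv_le (hτ : 0 < τ) (hz : z ∈ ball x₀ (6 * τ)) : ‖fderiv ℂ g z‖ ≤ κ := by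
  refine (hg.holomorphicBddOn.norm_fderiv_le_of_mem (a := 2 * τ) (by positivity) ?_).trans_eq ?_
  · rwa [show 8 * τ - 2 * τ = 6 * τ by ring]
  · field_simp

theorem norm_sub_le_of_isStep (hτ : 0 < τ) (hstep : IsStep g z z')
    (hz : (z'.1, z.2) ∈ ball x₀ (6 * τ)) : ‖z' - z‖ ≤ κ := by
  have hκ := hg.norm_fderiv_le hτ hz
  rw [Prod.norm_def, Prod.fst_sub, Prod.snd_sub]
  refine max_le ?_ ?_
  · rw [norm_sub_rev, sub_eq_of_eq_add (eq_add_of_sub_eq' hstep.fst_eq.symm)]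
    exact norm_angleGrad_le.trans hκ
  · rw [sub_eq_of_eq_add' hstep.snd_eq]
    exact norm_actionGrad_le.trans hκ

theorem exists_isStep (hτ : 0 < τ) (hκ : 2 * κ ≤ τ) :
    ∃ G : CPhase d → CPhase d, DifferentiableOn ℂ G (ball x₀ (4 * τ)) ∧
      ∀ z ∈ ball x₀ (4 * τ), ((G z).1, z.2) ∈ ball x₀ (5 * τ) ∧ IsStep g z (G z) ∧
        ∀ z', IsStep g z z' → (z'.1, z.2) ∈ ball x₀ (5 * τ) → z' = G z := by
  have hangle : HolomorphicBddOn (fun z ↦ (angleGrad g z, (0 : Fin d → ℂ))) x₀ (6 * τ) κ := by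
    refine ⟨.prodMk (differentiableOn_pi.2 fun i ↦ ?_) (differentiableOn_const 0), fun z hz ↦ ?_⟩
    · exact (hg.differentiableOn_fderiv_apply _).mono (ball_subset_ball (by linarith))
    · have hgrad := norm_angleGrad_le.trans (hg.norm_fderiv_le hτ hz)
      exact max_le hgrad (by simpa using (norm_nonneg _).trans hgrad)
  obtain ⟨b, hb, hinv⟩ := hangle.exists_rightInverse_add_id hτ hκ
  have hsnd (z) (hz : z ∈ ball x₀ (4 * τ)) : (b z).2 = z.2 := by
    simpa using congrArg Prod.snd (hinv z hz).2.1
  have hbz (z) (hz : z ∈ ball x₀ (4 * τ)) : ((b z).1, z.2) = b z := by rw [← hsnd z hz]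
  refine ⟨fun z ↦ ((b z).1, z.2 + actionGrad g (b z)), hb.fst.prodMk ?_, fun z hz ↦ ?_⟩
  · refine differentiableOn_snd.add (differentiableOn_pi.2 fun i ↦ ?_)
    exact (hg.differentiableOn_fderiv_apply _).comp hb fun z hz ↦
      ball_subset_ball (by linarith) (hinv z hz).1
  obtain ⟨hmem, hsolve, huniq⟩ := hinv z hz
  refine ⟨(hbz z hz).symm ▸ hmem, ⟨?_, by simp only [hbz z hz]⟩, fun z' hstep hmem' ↦ ?_⟩
  · simp only [hbz z hz]
    exact eq_sub_of_add_eq' (congrArg Prod.fst hsolve)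
  · have hb' : (z'.1, z.2) = b z := huniq _ hmem' <| Prod.ext
      (by simpa using (eq_sub_iff_add_eq'.1 hstep.fst_eq)) (by simp)
    exact Prod.ext (congrArg Prod.fst hb' :) (by rw [hstep.snd_eq, hb'])

theorem norm_stepAction_le (hτ : 0 < τ) (hstep : IsStep g z z')
    (hz : (z'.1, z.2) ∈ ball x₀ (5 * τ)) (hJ : ∀ w ∈ ball x₀ (8 * τ), ‖w.1‖ ≤ J) :
    ‖stepAction g z z'‖ ≤ d * (J * κ) + 2 * τ * κ := by
  have hz' := ball_subset_ball (by linarith : 5 * τ ≤ 8 * τ) hz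
  have hstep' := hg.norm_sub_le_of_isStep hτ hstep (ball_subset_ball (by linarith) hz)
  refine (norm_sub_le _ _).trans (add_le_add ((norm_dotProduct_le _ _).trans ?_) (hg.norm_le _ hz'))
  have hJ' := hJ _ hz'
  gcongr
  · exact (norm_nonneg _).trans hJ'
  · exact (norm_snd_le (z' - z)).trans hstep'

end AnalyticBddOn

section Exactness

variable {G : CPhase d → CPhase d} (hG : DifferentiableAt ℂ G z)
  (hg : DifferentiableAt ℂ g ((G z).1, z.2))
include hG hg

theorem differentiableAt_stepAction : DifferentiableAt ℂ (fun z ↦ stepAction g z (G z)) z :=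
  (differentiableAt_dotProduct hG.fst (hG.snd.sub differentiableAt_snd)).sub
    (hg.comp (f := fun z ↦ ((G z).1, z.2)) z (hG.fst.prodMk differentiableAt_snd))

theorem isExactAt_stepAction (hstep : IsStep g z (G z)) :
    IsExactAt G (fun z ↦ stepAction g z (G z)) z := by
  intro v
  have hold : HasFDerivAt Prod.snd (ContinuousLinearMap.snd ℂ (Fin d → ℂ) (Fin d → ℂ)) z :=
    hasFDerivAt_snd
  have hnew := hG.hasFDerivAt
  have haction : actionGrad g ((G z).1, z.2) = (G z).2 - z.2 :=
    (sub_eq_of_eq_add' hstep.snd_eq).symm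
  have hangle : angleGrad g ((G z).1, z.2) = z.1 - (G z).1 := by
    rw [sub_eq_of_eq_add (eq_add_of_sub_eq' hstep.fst_eq.symm)]
  have hgen : fderiv ℂ (fun z ↦ g ((G z).1, z.2)) z v =
      ((G z).2 - z.2) ⬝ᵥ (fderiv ℂ G z v).1 + (z.1 - (G z).1) ⬝ᵥ v.2 := by
    rw [← haction, ← hangle]
    exact (congrArg (· v) (hg.hasFDerivAt.comp (f := fun z ↦ ((G z).1, z.2)) z
      (hnew.fst.prodMk hold)).fderiv).trans (fderiv_apply_eq_dotProduct _)
  have hpair : fderiv ℂ (fun z ↦ (G z).1 ⬝ᵥ ((G z).2 - z.2)) z v =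
      (fderiv ℂ G z v).1 ⬝ᵥ ((G z).2 - z.2) + (G z).1 ⬝ᵥ ((fderiv ℂ G z v).2 - v.2) :=
    fderiv_dotProduct_apply hnew.fst (hnew.snd.sub hold) v
  have hsub : fderiv ℂ (fun z ↦ stepAction g z (G z)) z v =
      fderiv ℂ (fun z ↦ (G z).1 ⬝ᵥ ((G z).2 - z.2)) z v -
        fderiv ℂ (fun z ↦ g ((G z).1, z.2)) z v :=
    congrArg (· v) (fderiv_fun_sub
      (differentiableAt_dotProduct hG.fst (hG.snd.sub differentiableAt_snd))
      (hg.comp (f := fun z ↦ ((G z).1, z.2)) z (hG.fst.prodMk differentiableAt_snd)))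
  rw [hsub, hgen, hpair, dotProduct_comm (fderiv ℂ G z v).1]
  simp only [dotProduct_sub, sub_dotProduct]
  ring

end Exactness

end GeneratedMap

/-! ### Blocks of steps and the energy barrier -/

section ExactNearIdentity

variable {d : ℕ} {f G : CPhase d → CPhase d} {S S' : CPhase d → ℂ} {x₀ : CPhase d}
  {ρ ρ' μ κ M M' : ℝ}

/-- On the ball of radius `ρ` about `x₀` the map `f` is holomorphic, `μ`-close to the identity and
exact symplectic, with a primitive `S` bounded by `M`. -/
structure IsExactNearIdentity (f : CPhase d → CPhase d) (S : CPhase d → ℂ) (x₀ : CPhase d)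
    (ρ μ M : ℝ) : Prop where
  displacement : HolomorphicBddOn (fun z ↦ f z - z) x₀ ρ μ
  primitive : HolomorphicBddOn S x₀ ρ M
  isExactAt : ∀ z ∈ ball x₀ ρ, IsExactAt f S z

namespace IsExactNearIdentity

theorem id : IsExactNearIdentity id (fun _ ↦ 0) x₀ ρ 0 0 where
  displacement := ⟨by simp, by simp⟩
  primitive := ⟨differentiableOn_const 0, by simp⟩
  isExactAt _ _ _ := by simp

theorem mapsTo (hf : IsExactNearIdentity f S x₀ ρ μ M) (hρ : ρ + μ ≤ ρ') :
    Set.MapsTo f (ball x₀ ρ) (ball x₀ ρ') := fun z hz ↦ by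
  have hfz := hf.displacement.norm_le z hz
  rw [mem_ball] at hz ⊢
  rw [← dist_eq_norm] at hfz
  linarith [dist_triangle (f z) z x₀]

theorem comp (hG : IsExactNearIdentity G S' x₀ ρ' κ M') (hf : IsExactNearIdentity f S x₀ ρ μ M)
    (hρ : ρ + μ ≤ ρ') :
    IsExactNearIdentity (G ∘ f) (fun z ↦ S z + S' (f z)) x₀ ρ (μ + κ) (M + M') := by
  have hmaps := hf.mapsTo hρ
  have hfd := hf.displacement.of_sub_id
  have hGd := hG.displacement.of_sub_id
  refine ⟨⟨(hGd.comp hfd hmaps).sub differentiableOn_id, fun z hz ↦ ?_⟩,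
    ⟨hf.primitive.differentiableOn.add (hG.primitive.differentiableOn.comp hfd hmaps),
      fun z hz ↦ ?_⟩, fun z hz v ↦ ?_⟩
  · rw [Function.comp_apply, ← sub_add_sub_cancel _ (f z), add_comm μ]
    exact norm_add_le_of_le (hG.displacement.norm_le _ (hmaps hz)) (hf.displacement.norm_le z hz)
  · exact norm_add_le_of_le (hf.primitive.norm_le z hz) (hG.primitive.norm_le _ (hmaps hz))
  have hfz := hfd.differentiableAt (isOpen_ball.mem_nhds hz)
  have hGz := hGd.differentiableAt (isOpen_ball.mem_nhds (hmaps hz))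
  have hSz := hf.primitive.differentiableAt hz
  have hS'z := hG.primitive.differentiableAt (hmaps hz)
  have hsum : fderiv ℂ (fun z ↦ S z + S' (f z)) z v =
      fderiv ℂ S z v + fderiv ℂ S' (f z) (fderiv ℂ f z v) :=
    congrArg (· v) (hSz.hasFDerivAt.add (hS'z.hasFDerivAt.comp z hfz.hasFDerivAt)).fderiv
  rw [hsum, hf.isExactAt z hz, hG.isExactAt _ (hmaps hz), fderiv_comp z hGz hfz]
  exact sub_add_sub_cancel' _ _ _

end IsExactNearIdentity

end ExactNearIdentity

section Blocks

open Matrix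

variable {d T : ℕ} {g : ℕ → CPhase d → ℂ} {w : ℕ → CPhase d} {x₀ : CPhase d} {τ κ J : ℝ}

/-- The first `T` steps of `w` are generated by `g 0, …, g (T - 1)` and move the actions by at most
`τ / 2` each. The second condition selects the solution of the implicit equations that lies near
the previous point. -/
def IsSlowOrbit (g : ℕ → CPhase d → ℂ) (T : ℕ) (τ : ℝ) (w : ℕ → CPhase d) : Prop :=
  ∀ k < T, IsStep (g k) (w k) (w (k + 1)) ∧ ‖(w (k + 1)).1 - (w k).1‖ ≤ τ / 2

/-- The total action picked up along the first `T` steps of `w`. -/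
def blockAction (g : ℕ → CPhase d → ℂ) (T : ℕ) (w : ℕ → CPhase d) : ℂ :=
  ∑ k ∈ Finset.range T, stepAction (g k) (w k) (w (k + 1))

theorem IsSlowOrbit.norm_succ_sub_le (hw : IsSlowOrbit g T τ w) (hτ : 0 < τ)
    (hg : ∀ k < T, AnalyticBddOn (g k) x₀ (8 * τ) (2 * τ * κ)) {k : ℕ} (hk : k < T)
    (hmem : w k ∈ ball x₀ (4 * τ)) : ‖w (k + 1) - w k‖ ≤ κ :=
  (hg k hk).norm_sub_le_of_isStep hτ (hw k hk).1
    (ball_subset_ball (by linarith) (fst_snd_mem_ball_of_norm_fst_sub_le hτ hmem (hw k hk).2))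

theorem AnalyticBddOn.nonneg_of_two_mul_mul {g : CPhase d → ℂ}
    (hg : AnalyticBddOn g x₀ (8 * τ) (2 * τ * κ)) (hτ : 0 < τ) : 0 ≤ κ :=
  nonneg_of_mul_nonneg_right (hg.holomorphicBddOn.nonneg (by positivity)) (by positivity)

theorem IsSlowOrbit.norm_sub_zero_le (hw : IsSlowOrbit g T τ w) (hτ : 0 < τ)
    (hg : ∀ k < T, AnalyticBddOn (g k) x₀ (8 * τ) (2 * τ * κ)) (hT : T * κ ≤ 2 * τ)
    (hmem : w 0 ∈ ball x₀ (2 * τ)) {k : ℕ} (hk : k ≤ T) : ‖w k - w 0‖ ≤ k * κ := by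
  induction k with
  | zero => simp
  | succ k ih =>
    have hκ := (hg k hk).nonneg_of_two_mul_mul hτ
    have hkT : (k : ℝ) * κ ≤ T * κ := by gcongr; omega
    have hk' : w k ∈ ball x₀ (4 * τ) := by
      have hdist := ih (by omega)
      rw [← dist_eq_norm] at hdist
      rw [mem_ball] at hmem ⊢
      linarith [dist_triangle (w k) (w 0) x₀]
    rw [← sub_add_sub_cancel _ (w k), Nat.cast_succ, add_one_mul, add_comm ((k : ℝ) * κ)]
    exact norm_add_le_of_le (hw.norm_succ_sub_le hτ hg hk hk') (ih (by omega))

theorem exists_isExactNearIdentity_step {g : CPhase d → ℂ} (hτ : 0 < τ) (hκ : 2 * κ ≤ τ)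
    (hg : AnalyticBddOn g x₀ (8 * τ) (2 * τ * κ)) (hJ : ∀ z ∈ ball x₀ (8 * τ), ‖z.1‖ ≤ J) :
    ∃ G S, IsExactNearIdentity G S x₀ (4 * τ) κ (d * (J * κ) + 2 * τ * κ) ∧
      ∀ z ∈ ball x₀ (4 * τ), ∀ z', IsStep g z z' → ‖z'.1 - z.1‖ ≤ τ / 2 →
        G z = z' ∧ S z = stepAction g z z' := by
  obtain ⟨G, hG, hGstep⟩ := hg.exists_isStep hτ hκ
  have hGd (z) (hz : z ∈ ball x₀ (4 * τ)) : DifferentiableAt ℂ G z :=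
    hG.differentiableAt (isOpen_ball.mem_nhds hz)
  have hgd (z) (hz : z ∈ ball x₀ (4 * τ)) : DifferentiableAt ℂ g ((G z).1, z.2) :=
    hg.holomorphicBddOn.differentiableAt (ball_subset_ball (by linarith) (hGstep z hz).1)
  refine ⟨G, fun z ↦ stepAction g z (G z), ⟨⟨hG.sub differentiableOn_id, fun z hz ↦ ?_⟩,
    ⟨fun z hz ↦ ?_, fun z hz ↦ ?_⟩, fun z hz ↦ ?_⟩, fun z hz z' hstep hz' ↦ ?_⟩
  · exact hg.norm_sub_le_of_isStep hτ (hGstep z hz).2.1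
      (ball_subset_ball (by linarith) (hGstep z hz).1)
  · exact (differentiableAt_stepAction (hGd z hz) (hgd z hz)).differentiableWithinAt
  · exact hg.norm_stepAction_le hτ (hGstep z hz).2.1 (hGstep z hz).1 hJ
  · exact isExactAt_stepAction (hGd z hz) (hgd z hz) (hGstep z hz).2.1
  · obtain rfl : z' = G z :=
      (hGstep z hz).2.2 z' hstep (fst_snd_mem_ball_of_norm_fst_sub_le hτ hz hz')
    exact ⟨rfl, rfl⟩

theorem exists_isExactNearIdentity_block (hτ : 0 < τ) (hκ : 2 * κ ≤ τ)
    (hg : ∀ k < T, AnalyticBddOn (g k) x₀ (8 * τ) (2 * τ * κ)) (hT : T * κ ≤ 2 * τ)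
    (hJ : ∀ z ∈ ball x₀ (8 * τ), ‖z.1‖ ≤ J) :
    ∃ f S, IsExactNearIdentity f S x₀ (2 * τ) (T * κ) (T * (d * (J * κ) + 2 * τ * κ)) ∧
      ∀ w, IsSlowOrbit g T τ w → w 0 ∈ ball x₀ (2 * τ) →
        f (w 0) = w T ∧ S (w 0) = blockAction g T w := by
  induction T with
  | zero => exact ⟨id, fun _ ↦ 0, by simpa using .id, fun w _ _ ↦ ⟨rfl, by simp [blockAction]⟩⟩
  | succ T ih =>
    have hκ₀ := (hg T T.lt_succ_self).nonneg_of_two_mul_mul hτ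
    rw [Nat.cast_succ, add_one_mul] at hT
    obtain ⟨f, S, hf, hforbit⟩ := ih (fun k hk ↦ hg k (hk.trans T.lt_succ_self)) (by linarith)
    obtain ⟨G, S', hG, hGstep⟩ := exists_isExactNearIdentity_step hτ hκ (hg T T.lt_succ_self) hJ
    have hradius : 2 * τ + T * κ ≤ 4 * τ := by linarith
    refine ⟨G ∘ f, fun z ↦ S z + S' (f z), ?_, fun w hw hw₀ ↦ ?_⟩
    · rw [Nat.cast_succ, add_one_mul, add_one_mul]
      exact hG.comp hf hradius
    obtain ⟨hfw, hSw⟩ := hforbit w (fun k hk ↦ hw k (hk.trans T.lt_succ_self)) hw₀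
    obtain ⟨hGw, hS'w⟩ := hGstep (w T) (hfw ▸ hf.mapsTo hradius hw₀) _
      (hw T T.lt_succ_self).1 (hw T T.lt_succ_self).2
    refine ⟨(congrArg G hfw).trans hGw, ?_⟩
    rw [blockAction, Finset.sum_range_succ, ← hS'w, ← blockAction, ← hSw, ← hfw]

theorem dotProduct_sub_blockAction_sub_sum :
    (w 0).1 ⬝ᵥ ((w T).2 - (w 0).2) - blockAction g T w - ∑ k ∈ Finset.range T, g k (w 0) =
      ∑ k ∈ Finset.range T, (((w 0).1 - (w (k + 1)).1) ⬝ᵥ ((w (k + 1)).2 - (w k).2) +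
        (g k ((w (k + 1)).1, (w k).2) - g k (w 0))) := by
  rw [← Finset.sum_range_sub (fun k ↦ (w k).2), dotProduct_sum, blockAction,
    ← Finset.sum_sub_distrib, ← Finset.sum_sub_distrib]
  refine Finset.sum_congr rfl fun k _ ↦ ?_
  rw [stepAction, sub_dotProduct]
  ring

theorem IsSlowOrbit.norm_dotProduct_sub_blockAction_sub_sum_le (hw : IsSlowOrbit g T τ w)
    (hτ : 0 < τ) (hg : ∀ k < T, AnalyticBddOn (g k) (w 0) (8 * τ) (2 * τ * κ))
    (hT : T * κ ≤ 2 * τ) :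
    ‖(w 0).1 ⬝ᵥ ((w T).2 - (w 0).2) - blockAction g T w - ∑ k ∈ Finset.range T, g k (w 0)‖ ≤
      (d + 1) * (T * κ) ^ 2 := by
  have hmem := mem_ball_self (x := w 0) (by positivity : 0 < 2 * τ)
  have hnear {k : ℕ} (hk : k ≤ T) : ‖w k - w 0‖ ≤ T * κ := by
    rcases T.eq_zero_or_pos with rfl | hT₀
    · simp [Nat.le_zero.1 hk]
    have hκ := (hg 0 hT₀).nonneg_of_two_mul_mul hτ
    exact (hw.norm_sub_zero_le hτ hg hT hmem hk).trans (by gcongr)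
  have hterm : ∀ k ∈ Finset.range T,
      ‖((w 0).1 - (w (k + 1)).1) ⬝ᵥ ((w (k + 1)).2 - (w k).2) +
        (g k ((w (k + 1)).1, (w k).2) - g k (w 0))‖ ≤ d * (T * κ * κ) + κ * (T * κ) := by
    intro k hk
    rw [Finset.mem_range] at hk
    have hκ := (hg k hk).nonneg_of_two_mul_mul hτ
    have hsucc := hnear hk
    have hprev := hnear hk.le
    have hstep := hw.norm_succ_sub_le hτ hg hk
      (by rw [mem_ball_iff_norm]; linarith)
    have hmixed : ‖((w (k + 1)).1, (w k).2) - w 0‖ ≤ T * κ :=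
      max_le ((norm_fst_le (w (k + 1) - w 0)).trans hsucc) ((norm_snd_le (w k - w 0)).trans hprev)
    refine norm_add_le_of_le ((norm_dotProduct_le _ _).trans ?_) ?_
    · rw [norm_sub_rev (w 0).1]
      gcongr
      · exact (norm_fst_le (w (k + 1) - w 0)).trans hsucc
      · exact (norm_snd_le (w (k + 1) - w k)).trans hstep
    · refine ((hg k hk).holomorphicBddOn.norm_image_sub_le (a := 2 * τ) (by positivity)
        (mem_ball_self (by linarith)) (by rw [mem_ball_iff_norm]; linarith)).trans ?_
      rw [mul_div_cancel_left₀ _ (by positivity)]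
      gcongr
  rw [dotProduct_sub_blockAction_sub_sum]
  exact (norm_sum_le_of_le _ hterm).trans_eq (by simp; ring)

end Blocks

section Confinement

variable {d T m N n : ℕ} {g : ℕ → CPhase d → ℂ} {w : ℕ → CPhase d} {τ κ e E L : ℝ}

/-- The almost conserved energy of the return map over `T` steps, at the `n`-th block of `w`. -/
noncomputable def blockEnergy (m : ℕ) (g : ℕ → CPhase d → ℂ) (T : ℕ) (w : ℕ → CPhase d) (n : ℕ) :
    ℂ :=
  energy m (fun n ↦ w (n * T)) (fun n ↦ blockAction g T fun j ↦ w (n * T + j)) n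

/-- Every block of `w` that starts close to the start of the `n`-th one is generated by the
functions `g 0, …, g (T - 1)`, and these are analytic and small there. -/
structure IsSlowNear (g : ℕ → CPhase d → ℂ) (T : ℕ) (τ κ : ℝ) (w : ℕ → CPhase d) (n : ℕ) :
    Prop where
  analyticBddOn : ∀ k < T, AnalyticBddOn (g k) (w (n * T)) (8 * τ) (2 * τ * κ)
  isSlowOrbit : ∀ k, w (k * T) ∈ ball (w (n * T)) (2 * τ) →
    IsSlowOrbit g T τ fun j ↦ w (k * T + j)
  norm_fst_le : ‖(w (n * T)).1‖ ≤ 2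

theorem norm_fst_le_add {z z₀ : CPhase d} {a b : ℝ} (hz : ‖z - z₀‖ ≤ a) (hz₀ : ‖z₀.1‖ ≤ b) :
    ‖z.1‖ ≤ a + b := by
  rw [← sub_add_cancel z.1 z₀.1]
  exact norm_add_le_of_le ((norm_fst_le (z - z₀)).trans hz) hz₀

namespace IsSlowNear

theorem nonneg (h : IsSlowNear g T τ κ w n) (hτ : 0 < τ) (hT₁ : 1 ≤ T) : 0 ≤ κ :=
  (h.analyticBddOn 0 hT₁).nonneg_of_two_mul_mul hτ

theorem mul_le (h : IsSlowNear g T τ κ w n) (hτ : 0 < τ) (hT₁ : 1 ≤ T) (hm₁ : 1 ≤ m)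
    (hm : 100 * m * (T * κ) ≤ τ) : 100 * (T * κ) ≤ τ := by
  have hκ := h.nonneg hτ hT₁
  have hm₁' : (1 : ℝ) ≤ m := mod_cast hm₁
  have : T * κ ≤ m * (T * κ) := le_mul_of_one_le_left (by positivity) hm₁'
  linarith

theorem norm_sub_le (h : IsSlowNear g T τ κ w n) (hτ : 0 < τ) (hT₁ : 1 ≤ T) (hT : T * κ ≤ 2 * τ)
    {j : ℕ} (hj : j ≤ T) : ‖w (n * T + j) - w (n * T)‖ ≤ T * κ := by
  have hκ := h.nonneg hτ hT₁
  have hmem := mem_ball_self (x := w (n * T)) (by positivity : 0 < 2 * τ)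
  exact ((h.isSlowOrbit n hmem).norm_sub_zero_le hτ h.analyticBddOn hT hmem hj).trans (by gcongr)

theorem exists_returnMap (h : IsSlowNear g T τ κ w n) (hτ : 0 < τ) (hτ₁ : 8 * τ ≤ 1) (hT₁ : 1 ≤ T)
    (hm₁ : 1 ≤ m) (hm : 100 * m * (T * κ) ≤ τ) :
    ∃ f S, IsExactNearIdentity f S (w (n * T)) (2 * τ) (T * κ) (T * (d * (3 * κ) + 2 * τ * κ)) ∧
      ∀ i ≤ m, w ((n + i + 1) * T) = f (w ((n + i) * T)) ∧
        blockAction g T (fun j ↦ w ((n + i) * T + j)) = S (w ((n + i) * T)) := by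
  have hκ := h.nonneg hτ hT₁
  have hTκ := h.mul_le hτ hT₁ hm₁ hm
  have hκT : κ ≤ T * κ := le_mul_of_one_le_left hκ (mod_cast hT₁)
  obtain ⟨f, S, hf, horbit⟩ := exists_isExactNearIdentity_block hτ (by linarith) h.analyticBddOn
    (by linarith) fun z hz ↦ (norm_fst_le_add (mem_ball_iff_norm.1 hz).le h.norm_fst_le).trans
      (by linarith : _ ≤ (3 : ℝ))
  have hnext {k : ℕ} (hk : w (k * T) ∈ ball (w (n * T)) (2 * τ)) :
      f (w (k * T)) = w ((k + 1) * T) ∧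
        S (w (k * T)) = blockAction g T fun j ↦ w (k * T + j) := by
    rw [add_one_mul]
    exact horbit _ (h.isSlowOrbit k hk) hk
  have hclose {i : ℕ} (hi : i ≤ m) : ‖w ((n + i) * T) - w (n * T)‖ ≤ i * (T * κ) ∧
      w ((n + i) * T) ∈ ball (w (n * T)) (2 * τ) := by
    suffices hle : ‖w ((n + i) * T) - w (n * T)‖ ≤ i * (T * κ) by
      refine ⟨hle, mem_ball_iff_norm.2 ?_⟩
      have : (i : ℝ) * (T * κ) ≤ m * (T * κ) := by gcongr
      linarith
    induction i with
    | zero => simp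
    | succ i ih =>
      have hi' := ih (by omega)
      have hmem : w ((n + i) * T) ∈ ball (w (n * T)) (2 * τ) := by
        have : (i : ℝ) * (T * κ) ≤ m * (T * κ) := by gcongr; omega
        rw [mem_ball_iff_norm]
        linarith
      rw [← add_assoc, ← (hnext hmem).1, ← sub_add_sub_cancel _ (w ((n + i) * T)), Nat.cast_succ,
        add_one_mul, add_comm ((i : ℝ) * _)]
      exact norm_add_le_of_le (hf.displacement.norm_le _ hmem) hi'
  exact ⟨f, S, hf, fun i hi ↦
    ⟨(hnext (hclose hi).2).1.symm, (hnext (hclose hi).2).2.symm⟩⟩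

theorem norm_blockEnergy_succ_sub_le (h : IsSlowNear g T τ κ w n) (hτ : 0 < τ) (hτ₁ : 8 * τ ≤ 1)
    (hT₁ : 1 ≤ T) (hm₁ : 1 ≤ m) (hm : 100 * m * (T * κ) ≤ τ) :
    ‖blockEnergy m g T w (n + 1) - blockEnergy m g T w n‖ ≤ 4 * (d + 1) * (2 / 3) ^ m := by
  have := h.nonneg hτ hT₁
  have hTκ := h.mul_le hτ hT₁ hm₁ hm
  obtain ⟨f, S, hf, hfS⟩ := h.exists_returnMap hτ hτ₁ hT₁ hm₁ hm
  have hmem := mem_ball_self (x := w (n * T)) (by positivity : 0 < 2 * τ)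
  have hnext : ‖(w ((n + 1) * T)).1‖ ≤ 3 := by
    rw [add_one_mul]
    exact (norm_fst_le_add (h.norm_sub_le hτ hT₁ (by linarith) le_rfl) h.norm_fst_le).trans
      (by linarith)
  refine (norm_energy_succ_sub_le (y := fun n ↦ w (n * T)) (by positivity : 0 < 2 * τ)
    hf.displacement hf.primitive hnext (hf.isExactAt _ hmem) (fun i hi ↦ (hfS i hi).1)
    (fun i hi ↦ (hfS i hi).2) hm₁ (by linarith)).trans ?_
  gcongr
  have : (0 : ℝ) ≤ d := d.cast_nonneg
  have hS : T * κ * (6 * d + 4 * τ) ≤ 1 * (6 * d + 4 * τ) / 800 := by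
    rw [le_div_iff₀ (by norm_num), mul_right_comm]
    gcongr
    linarith
  have hdτ : d * (8 * τ) ≤ d * 1 := by gcongr
  linarith

theorem norm_blockEnergy_sub_sum_le (h : IsSlowNear g T τ κ w n) (hτ : 0 < τ) (hτ₁ : 8 * τ ≤ 1)
    (hT₁ : 1 ≤ T) (hm₁ : 1 ≤ m) (hm : 100 * m * (T * κ) ≤ τ) :
    ‖blockEnergy m g T w n - ∑ k ∈ Finset.range T, g k (w (n * T))‖ ≤
      20 * (d + 1) * (T * κ) ^ 2 / τ := by
  have := h.nonneg hτ hT₁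
  have hTκ := h.mul_le hτ hT₁ hm₁ hm
  obtain ⟨f, S, hf, hfS⟩ := h.exists_returnMap hτ hτ₁ hT₁ hm₁ hm
  have hmem := mem_ball_self (x := w (n * T)) (by positivity : 0 < 2 * τ)
  have henergy := norm_energy_sub_le (y := fun n ↦ w (n * T))
    (Sq := fun n ↦ blockAction g T fun j ↦ w (n * T + j)) (by positivity : 0 < 2 * τ)
    hf.displacement hf.primitive h.norm_fst_le (fun i hi ↦ (hfS i hi).1) (fun i hi ↦ (hfS i hi).2)
    hm₁ (by linarith)
  have hlead := (h.isSlowOrbit n hmem).norm_dotProduct_sub_blockAction_sub_sum_le hτ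
    h.analyticBddOn (by linarith)
  rw [← add_one_mul] at hlead
  refine (norm_sub_le_norm_sub_add_norm_sub _ _ _).trans ((add_le_add henergy hlead).trans ?_)
  have : (0 : ℝ) ≤ d := d.cast_nonneg
  have hdτ : d * (8 * τ) ≤ d * 1 := by gcongr
  calc 6 * d * 2 * (T * κ) ^ 2 / (2 * τ) + 6 * (T * (d * (3 * κ) + 2 * τ * κ)) * (T * κ) / (2 * τ) +
        (d + 1) * (T * κ) ^ 2
      = (15 * d + 6 * τ + (d + 1) * τ) * (T * κ) ^ 2 / τ := by field
    _ ≤ 20 * (d + 1) * (T * κ) ^ 2 / τ := by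
      gcongr
      linarith

end IsSlowNear

theorem norm_blockEnergy_sub_zero_le
    (hdrift : ∀ k < n, ‖blockEnergy m g T w (k + 1) - blockEnergy m g T w k‖ ≤ E) :
    ‖blockEnergy m g T w n - blockEnergy m g T w 0‖ ≤ n * E := by
  rw [← Finset.sum_range_sub]
  exact (norm_sum_le_of_le _ fun k hk ↦ hdrift k (Finset.mem_range.1 hk)).trans_eq (by simp)

theorem re_sum_le_of_forall_isSlowNear (hτ : 0 < τ) (hτ₁ : 8 * τ ≤ 1) (hT₁ : 1 ≤ T) (hm₁ : 1 ≤ m)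
    (hm : 100 * m * (T * κ) ≤ τ) (hslow : ∀ k ≤ n, IsSlowNear g T τ κ w k)
    (he : (∑ k ∈ Finset.range T, g k (w 0)).re ≤ e) :
    (∑ k ∈ Finset.range T, g k (w (n * T))).re ≤
      e + 2 * (20 * (d + 1) * (T * κ) ^ 2 / τ) + n * (4 * (d + 1) * (2 / 3) ^ m) := by
  have hdrift := norm_blockEnergy_sub_zero_le fun k (hk : k < n) ↦
    (hslow k hk.le).norm_blockEnergy_succ_sub_le hτ hτ₁ hT₁ hm₁ hm
  have hlast := (hslow n le_rfl).norm_blockEnergy_sub_sum_le hτ hτ₁ hT₁ hm₁ hm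
  have hfirst := (hslow 0 n.zero_le).norm_blockEnergy_sub_sum_le hτ hτ₁ hT₁ hm₁ hm
  rw [zero_mul] at hfirst
  have hdrift' := (abs_le.1 ((Complex.abs_re_le_norm _).trans hdrift)).2
  have hlast' := (abs_le.1 ((Complex.abs_re_le_norm _).trans hlast)).1
  have hfirst' := (abs_le.1 ((Complex.abs_re_le_norm _).trans hfirst)).2
  rw [Complex.sub_re] at hdrift' hlast' hfirst'
  linarith

theorem norm_fst_le_two_of_energy_barrier (hτ : 0 < τ) (hτ₁ : 8 * τ ≤ 1) (hT₁ : 1 ≤ T)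
    (hm₁ : 1 ≤ m) (hm : 100 * m * (T * κ) ≤ τ)
    (hslow : ∀ n, ‖(w (n * T)).1‖ ≤ 2 → IsSlowNear g T τ κ w n) (hw₀ : ‖(w 0).1‖ ≤ 1)
    (he : (∑ k ∈ Finset.range T, g k (w 0)).re ≤ e)
    (hL : ∀ n, 1 < ‖(w (n * T)).1‖ → ‖(w (n * T)).1‖ ≤ 2 →
      L ≤ (∑ k ∈ Finset.range T, g k (w (n * T))).re)
    (hN : e + 2 * (20 * (d + 1) * (T * κ) ^ 2 / τ) + N * (4 * (d + 1) * (2 / 3) ^ m) < L)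
    (hn : n ≤ N) {j : ℕ} (hj : j ≤ T) : ‖(w (n * T + j)).1‖ ≤ 2 := by
  have hnext {n : ℕ} (hn : ‖(w (n * T)).1‖ ≤ 1) {j : ℕ} (hj : j ≤ T) :
      ‖(w (n * T + j)).1‖ ≤ 2 := by
    have h := hslow n (by linarith)
    have hTκ := h.mul_le hτ hT₁ hm₁ hm
    exact (norm_fst_le_add (h.norm_sub_le hτ hT₁ (by linarith) hj) hn).trans (by linarith)
  suffices hle : ∀ k ≤ n, ‖(w (k * T)).1‖ ≤ 1 from hnext (hle n le_rfl) hj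
  intro k
  induction k using Nat.strong_induction_on with
  | h k ih =>
  intro hk
  rcases k with _ | k
  · rwa [zero_mul]
  have hle : ‖(w ((k + 1) * T)).1‖ ≤ 2 := by
    rw [add_one_mul]
    exact hnext (ih k k.lt_succ_self (by omega)) le_rfl
  by_contra! hescape
  have henergy := re_sum_le_of_forall_isSlowNear (n := k + 1) hτ hτ₁ hT₁ hm₁ hm (fun i hi ↦ ?_) he
  · have hkN : ((k + 1 : ℕ) : ℝ) * (4 * (d + 1) * (2 / 3) ^ m) ≤
        N * (4 * (d + 1) * (2 / 3) ^ m) := by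
      gcongr
      omega
    linarith [hL _ hescape hle]
  · rcases hi.eq_or_lt with rfl | hi
    · exact hslow _ hle
    · exact hslow i ((ih i hi (by omega)).trans one_le_two)

end Confinement

/-! ### Complex extensions of real-analytic functions -/

section ComplexExtension

open Filter Topology

variable {d : ℕ} {h : (Fin d → ℝ) → ℝ} {x y : Fin d → ℝ} {δ M : ℝ}

/-- The complexification `cx d` of real vectors as a continuous linear map. -/
noncomputable def cxCLM (d : ℕ) : (Fin d → ℝ) →L[ℝ] Fin d → ℂ :=
  .pi fun i ↦ Complex.ofRealCLM.comp (.proj i)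

theorem cx_zero : cx d 0 = 0 :=
  map_zero (cxCLM d)

theorem cx_add (v w : Fin d → ℝ) : cx d (v + w) = cx d v + cx d w :=
  map_add (cxCLM d) v w

theorem cx_sub (v w : Fin d → ℝ) : cx d (v - w) = cx d v - cx d w :=
  map_sub (cxCLM d) v w

theorem cx_smul (c : ℝ) (v : Fin d → ℝ) : cx d (c • v) = (c : ℂ) • cx d v :=
  (map_smul (cxCLM d) c v).trans (Complex.coe_smul c _).symm

theorem cx_single (i : Fin d) : cx d (Pi.single i 1) = Pi.single i 1 := by
  ext j
  rcases eq_or_ne j i with rfl | hj <;> simp [cx, *]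

theorem norm_cx (v : Fin d → ℝ) : ‖cx d v‖ = ‖v‖ := by
  simp [cx, Pi.norm_def]

theorem dist_cx (v w : Fin d → ℝ) : dist (cx d v) (cx d w) = dist v w := by
  rw [dist_eq_norm, ← cx_sub, norm_cx, dist_eq_norm]

theorem tendsto_cx (x : Fin d → ℝ) : Tendsto (cx d) (𝓝 x) (𝓝 (cx d x)) :=
  (cxCLM d).continuous.tendsto x

/-- The power series over `ℂ` whose coefficients in coordinates are those of the real power
series `p`. -/
noncomputable def complexifySeries (p : FormalMultilinearSeries ℝ (Fin d → ℝ) ℝ) :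
    FormalMultilinearSeries ℂ (Fin d → ℂ) ℂ := fun n ↦
  ∑ i : Fin n → Fin d, ((p n fun j ↦ Pi.single (i j) 1 : ℝ) : ℂ) •
    (ContinuousMultilinearMap.mkPiAlgebraFin ℂ n ℂ).compContinuousLinearMap
      fun j ↦ (ContinuousLinearMap.proj (i j) : (Fin d → ℂ) →L[ℂ] ℂ)

theorem complexifySeries_apply (p : FormalMultilinearSeries ℝ (Fin d → ℝ) ℝ) (n : ℕ)
    (z : Fin n → Fin d → ℂ) : complexifySeries p n z =
      ∑ i : Fin n → Fin d, ((p n fun j ↦ Pi.single (i j) 1 : ℝ) : ℂ) * ∏ j, z j (i j) := by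
  simp [complexifySeries, List.prod_ofFn]

theorem complexifySeries_apply_cx (p : FormalMultilinearSeries ℝ (Fin d → ℝ) ℝ) (n : ℕ)
    (v : Fin d → ℝ) : complexifySeries p n (fun _ ↦ cx d v) = (p n fun _ ↦ v : ℝ) := by
  conv_rhs => rw [← LinearMap.sum_single_apply (fun _ : Fin d ↦ ℝ) v]
  rw [complexifySeries_apply, ContinuousMultilinearMap.map_sum, Complex.ofReal_sum]
  refine Finset.sum_congr rfl fun i _ ↦ ?_
  have hsmul : (fun j ↦ Pi.single (i j) (v (i j)) : Fin n → Fin d → ℝ) =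
      fun j ↦ v (i j) • Pi.single (i j) 1 := by
    funext j
    rw [← Pi.single_smul, smul_eq_mul, mul_one]
  rw [hsmul, ContinuousMultilinearMap.map_smul_univ]
  simp [cx, mul_comm]

theorem norm_complexifySeries_le (p : FormalMultilinearSeries ℝ (Fin d → ℝ) ℝ) (n : ℕ) :
    ‖complexifySeries p n‖ ≤ d ^ n * ‖p n‖ := by
  refine ContinuousMultilinearMap.opNorm_le_bound (by positivity) fun z ↦ ?_
  have hterm (i : Fin n → Fin d) :
      ‖((p n fun j ↦ Pi.single (i j) 1 : ℝ) : ℂ) * ∏ j, z j (i j)‖ ≤ ‖p n‖ * ∏ j, ‖z j‖ := by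
    rw [norm_mul, norm_prod, Complex.norm_real]
    gcongr with j
    · exact ((p n).le_opNorm _).trans_eq (by simp [Pi.norm_single])
    · exact norm_le_pi_norm _ _
  rw [complexifySeries_apply]
  exact (norm_sum_le_of_le _ fun i _ ↦ hterm i).trans_eq (by simp [mul_assoc])

theorem radius_complexifySeries_pos {p : FormalMultilinearSeries ℝ (Fin d → ℝ) ℝ}
    (hp : 0 < p.radius) : 0 < (complexifySeries p).radius := by
  obtain ⟨r, hr₀, hr⟩ := ENNReal.lt_iff_exists_nnreal_btwn.1 hp
  obtain ⟨C, -, hC⟩ := p.norm_mul_pow_le_of_lt_radius hr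
  have hpos : 0 < r / (d + 1) := div_pos (by exact_mod_cast hr₀) (by positivity)
  have hle : ((r / (d + 1) : NNReal) : ENNReal) ≤ (complexifySeries p).radius := by
    refine (complexifySeries p).le_radius_of_bound C fun n ↦ ?_
    push_cast
    calc ‖complexifySeries p n‖ * (r / (d + 1)) ^ n
        ≤ (d ^ n * ‖p n‖) * (r / (d + 1)) ^ n := by
          gcongr
          exact norm_complexifySeries_le p n
      _ = ((d / (d + 1) : ℝ) ^ n) * (‖p n‖ * r ^ n) := by rw [div_pow, div_pow]; ring
      _ ≤ 1 * (‖p n‖ * r ^ n) := by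
          gcongr
          exact pow_le_one₀ (by positivity) (div_le_one_of_le₀ (by linarith) (by positivity))
      _ ≤ C := by simpa using hC n
  exact lt_of_lt_of_le (by exact_mod_cast hpos) hle

/-- On the ball of radius `δ` about the real point `x`, the function `H` is an analytic extension of
`h` to complex arguments, bounded by `M`. -/
structure IsComplexExtension (H : (Fin d → ℂ) → ℂ) (h : (Fin d → ℝ) → ℝ) (x : Fin d → ℝ)
    (δ M : ℝ) : Prop extends AnalyticBddOn H (cx d x) δ M where
  apply_cx : ∀ I ∈ ball x δ, H (cx d I) = h I

theorem IsComplexExtension.mono {H : (Fin d → ℂ) → ℂ} (hH : IsComplexExtension H h x δ M)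
    {δ' M' : ℝ} (hδ : δ' + dist y x ≤ δ) (hM : M ≤ M') : IsComplexExtension H h y δ' M' where
  analyticOnNhd := hH.analyticOnNhd.mono (ball_subset_ball' (by rwa [dist_cx]))
  norm_le z hz := (hH.norm_le z (ball_subset_ball' (by rwa [dist_cx]) hz)).trans hM
  apply_cx I hI := hH.apply_cx I (ball_subset_ball' hδ hI)

theorem exists_isComplexExtension (hx : AnalyticAt ℝ h x) :
    ∃ δ > 0, ∃ M H, IsComplexExtension H h x δ M := by
  obtain ⟨p, r, hp⟩ := hx
  let H : (Fin d → ℂ) → ℂ := fun z ↦ (complexifySeries p).sum (z - cx d x)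
  have hH : HasFPowerSeriesAt H (complexifySeries p) (cx d x) := by
    have hsum := (complexifySeries p).hasFPowerSeriesOnBall
      (radius_complexifySeries_pos (hp.r_pos.trans_le hp.r_le))
    simpa [H] using (hsum.comp_sub (cx d x)).hasFPowerSeriesAt
  have hreal : ∀ᶠ I in 𝓝 x, H (cx d I) = h I := by
    filter_upwards [hp.hasFPowerSeriesAt.eventually_hasSum_sub,
      (tendsto_cx x).eventually hH.eventually_hasSum_sub] with I hI hI'
    simp only [← cx_sub, complexifySeries_apply_cx] at hI'
    exact hI'.unique (Complex.hasSum_ofReal.2 hI)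
  have hbdd : ∀ᶠ z in 𝓝 (cx d x), ‖H z‖ < ‖H (cx d x)‖ + 1 :=
    hH.continuousAt.norm.eventually_lt_const (lt_add_one _)
  obtain ⟨δ₁, hδ₁, h₁⟩ := eventually_nhds_iff_ball.1 (hH.analyticAt.eventually_analyticAt.and hbdd)
  obtain ⟨δ₂, hδ₂, h₂⟩ := eventually_nhds_iff_ball.1 hreal
  exact ⟨min δ₁ δ₂, lt_min hδ₁ hδ₂, _, H,
    ⟨fun z hz ↦ (h₁ z (ball_subset_ball (min_le_left _ _) hz)).1,
      fun z hz ↦ (h₁ z (ball_subset_ball (min_le_left _ _) hz)).2.le⟩,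
    fun I hI ↦ h₂ I (ball_subset_ball (min_le_right _ _) hI)⟩

theorem exists_isComplexExtension_of_isCompact {K : Set (Fin d → ℝ)} (hK : IsCompact K)
    (hh : AnalyticOnNhd ℝ h K) : ∃ δ > 0, ∃ M, ∀ x ∈ K, ∃ H, IsComplexExtension H h x δ M := by
  refine hK.induction_on (p := fun K ↦ ∃ δ > 0, ∃ M, ∀ x ∈ K, ∃ H, IsComplexExtension H h x δ M)
    ⟨1, one_pos, 0, by simp⟩ (fun s t hst ⟨δ, hδ, M, ht⟩ ↦ ⟨δ, hδ, M, fun x hx ↦ ht x (hst hx)⟩)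
    ?_ fun x hx ↦ ?_
  · rintro s t ⟨δ, hδ, M, hs⟩ ⟨δ', hδ', M', ht⟩
    refine ⟨min δ δ', lt_min hδ hδ', max M M', ?_⟩
    rintro x (hx | hx)
    · obtain ⟨H, hH⟩ := hs x hx
      exact ⟨H, hH.mono (by simp) (le_max_left _ _)⟩
    · obtain ⟨H, hH⟩ := ht x hx
      exact ⟨H, hH.mono (by simp) (le_max_right _ _)⟩
  · obtain ⟨δ, hδ, M, H, hH⟩ := exists_isComplexExtension (hh x hx)
    refine ⟨ball x (δ / 2), mem_nhdsWithin_of_mem_nhds (ball_mem_nhds x (half_pos hδ)), δ / 2,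
      half_pos hδ, M, fun y hy ↦ ⟨H, hH.mono ?_ le_rfl⟩⟩
    linarith [mem_ball.1 hy]

end ComplexExtension

section AnalyticBddOn

variable {E : Type*} [NormedAddCommGroup E] [NormedSpace ℂ E] {g : E → ℂ} {x₀ x : E} {δ M : ℝ}

theorem AnalyticBddOn.norm_sub_sub_fderiv_le (hg : AnalyticBddOn g x₀ δ M) (hδ : 0 < δ)
    (hx : ‖x - x₀‖ < δ / 4) :
    ‖g x - g x₀ - fderiv ℂ g x₀ (x - x₀)‖ ≤ 8 * M / δ ^ 2 * ‖x - x₀‖ ^ 2 := by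
  have hM := hg.holomorphicBddOn.nonneg hδ
  have hfderiv : HolomorphicBddOn (fderiv ℂ g) x₀ (δ / 2) (M / (δ / 2)) :=
    ⟨hg.analyticOnNhd.fderiv.differentiableOn.mono (ball_subset_ball (by linarith)), fun y hy ↦
      hg.holomorphicBddOn.norm_fderiv_le_of_mem (half_pos hδ) (by rwa [sub_half])⟩
  have hlip (y) (hy : y ∈ closedBall x₀ ‖x - x₀‖) :
      ‖fderiv ℂ g y - fderiv ℂ g x₀‖ ≤ 8 * M / δ ^ 2 * ‖x - x₀‖ := by
    rw [show δ / 4 = δ / 2 - δ / 4 by ring] at hx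
    refine (hfderiv.norm_image_sub_le (a := δ / 4) (by positivity) (mem_ball_self (by linarith))
      (closedBall_subset_ball hx hy)).trans ?_
    rw [mem_closedBall, dist_eq_norm] at hy
    rw [show 8 * M / δ ^ 2 = M / (δ / 2) / (δ / 4) by field_simp; ring]
    gcongr
  refine ((convex_closedBall x₀ ‖x - x₀‖).norm_image_sub_le_of_norm_fderiv_le' (𝕜 := ℂ)
    (fun y hy ↦ (hg.analyticOnNhd y ?_).differentiableAt) hlip (mem_closedBall_self (norm_nonneg _))
    (by rw [mem_closedBall, dist_eq_norm])).trans_eq (by ring)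
  exact closedBall_subset_ball (by linarith) hy

end AnalyticBddOn

/-! ### Real orbits of a quasi-integrable map as complex orbits -/

section RealStep

open Topology Matrix

section RealDerivative

variable {X E : Type*} [NormedAddCommGroup X] [NormedSpace ℝ X] [NormedAddCommGroup E]
  [NormedSpace ℂ E] {g : E → ℂ} {L : X →L[ℝ] E} {x : X}

theorem fderiv_apply_eq_ofReal {f : X → ℝ} {f' : X →L[ℝ] ℝ} (hg : DifferentiableAt ℂ g (L x))
    (hf : HasFDerivAt f f' x) (h : ∀ᶠ y in 𝓝 x, g (L y) = f y) (v : X) :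
    fderiv ℂ g (L x) (L v) = f' v := by
  have hgL := (hg.hasFDerivAt.restrictScalars ℝ).comp x L.hasFDerivAt
  have hfg := (Complex.ofRealCLM.hasFDerivAt.comp x hf).congr_of_eventuallyEq h
  exact congrArg (· v) (hgL.unique hfg)

theorem im_fderiv_apply_eq_zero (hg : DifferentiableAt ℂ g (L x))
    (h : ∀ᶠ y in 𝓝 x, (g (L y)).im = 0) (v : X) : (fderiv ℂ g (L x) (L v)).im = 0 := by
  have hre := Complex.reCLM.hasFDerivAt.comp x
    ((hg.hasFDerivAt.restrictScalars ℝ).comp x L.hasFDerivAt)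
  rw [fderiv_apply_eq_ofReal hg hre (h.mono fun y hy ↦ (Complex.re_add_im _).symm.trans ?_) v,
    Complex.ofReal_im]
  simp [hy]

end RealDerivative

variable {d : ℕ}

/-- The inclusion of the real phase space into the complex one. -/
def cxPhase (x : RPhase d) : CPhase d := (cx d x.1, cx d x.2)

/-- The linear form `u ↦ v · u`. -/
noncomputable abbrev pairing (v : Fin d → ℝ) : (Fin d → ℝ) →L[ℝ] ℝ :=
  ∑ i, v i • (ContinuousLinearMap.proj i : (Fin d → ℝ) →L[ℝ] ℝ)

theorem pairing_apply (v u : Fin d → ℝ) : pairing v u = v ⬝ᵥ u := by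
  simp [pairing, dotProduct]

theorem IsComplexExtension.fderiv_apply {H : (Fin d → ℂ) → ℂ} {h : (Fin d → ℝ) → ℝ}
    {x I v : Fin d → ℝ} {δ M : ℝ} (hH : IsComplexExtension H h x δ M) (hI : I ∈ ball x δ)
    (hv : HasFDerivAt h (pairing v) I) (u : Fin d → ℂ) :
    fderiv ℂ H (cx d I) u = cx d v ⬝ᵥ u := by
  have hdiff : DifferentiableAt ℂ H (cxCLM d I) :=
    (hH.analyticOnNhd (cx d I) (by rwa [mem_ball, dist_cx])).differentiableAt
  refine (linearMap_apply_eq_dotProduct (fderiv ℂ H (cx d I)).toLinearMap u).trans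
    (congrArg (· ⬝ᵥ u) (funext fun i ↦ ?_))
  have hi := fderiv_apply_eq_ofReal hdiff hv (Filter.eventually_of_mem (isOpen_ball.mem_nhds hI)
    hH.apply_cx) (Pi.single i 1)
  rw [pairing_apply, dotProduct_single_one] at hi
  exact (congrArg (fderiv ℂ H (cx d I)) (cx_single i)).symm.trans hi

variable {S : CPhase d → ℂ} {H : (Fin d → ℂ) → ℂ} {z : CPhase d} {ω : (Fin d → ℝ) → Fin d → ℝ}
  {ε δ M : ℝ} {x x' : RPhase d}

theorem norm_angleGrad_le_of_holomorphicBddOn (hS : DifferentiableAt ℂ S z)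
    (hb : HolomorphicBddOn (fun u ↦ S (z.1, u)) z.2 δ M) (hδ : 0 < δ) :
    ‖angleGrad S z‖ ≤ M / δ := by
  have hM := hb.nonneg hδ
  have hpartial : HasFDerivAt (fun u ↦ S (z.1, u)) ((fderiv ℂ S z).comp (.inr ℂ _ _)) z.2 :=
    HasFDerivAt.comp (g := S) z.2 hS.hasFDerivAt (hasFDerivAt_prodMk_right _ _)
  refine (pi_norm_le_iff_of_nonneg (by positivity)).2 fun i ↦ ?_
  have hi := (fderiv ℂ (fun u ↦ S (z.1, u)) z.2).le_of_opNorm_le (hb.norm_fderiv_le hδ)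
    (Pi.single i 1)
  rwa [hpartial.fderiv, Pi.norm_single, norm_one, mul_one] at hi

/-- `x'` is the image of `x` under the exact symplectic map with generating function
`Ī · φ + h₀(Ī) + ε S(Ī, φ)`, where `ω` is the gradient of `h₀`. -/
structure IsRealStep (ω : (Fin d → ℝ) → Fin d → ℝ) (ε : ℝ) (S : CPhase d → ℂ) (x x' : RPhase d) :
    Prop where
  fst_apply_eq : ∀ i, x'.1 i = x.1 i - ε * (angleGrad S (cx d x'.1, cx d x.2) i).re
  snd_apply_eq : ∀ i, x'.2 i = x.2 i + ω x'.1 i + ε * (actionGrad S (cx d x'.1, cx d x.2) i).re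

theorem IsRealStep.norm_fst_sub_le (h : IsRealStep ω ε S x x') (hε : 0 ≤ ε)
    (hS : DifferentiableAt ℂ S (cx d x'.1, cx d x.2))
    (hb : HolomorphicBddOn (fun u ↦ S (cx d x'.1, u)) (cx d x.2) δ M) (hδ : 0 < δ) :
    ‖x'.1 - x.1‖ ≤ ε * (M / δ) := by
  have hgrad := norm_angleGrad_le_of_holomorphicBddOn hS hb hδ
  have hM := hb.nonneg hδ
  refine (pi_norm_le_iff_of_nonneg (by positivity)).2 fun i ↦ ?_
  rw [Pi.sub_apply, h.fst_apply_eq, sub_sub_cancel_left, norm_neg, norm_mul, Real.norm_of_nonneg hε]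
  gcongr
  exact (Complex.abs_re_le_norm _).trans ((norm_le_pi_norm _ i).trans hgrad)

theorem IsRealStep.isStep (h : IsRealStep ω ε S x x') (hH : DifferentiableAt ℂ H (cx d x'.1))
    (hω : ∀ u, fderiv ℂ H (cx d x'.1) u = cx d (ω x'.1) ⬝ᵥ u)
    (hS : DifferentiableAt ℂ S (cx d x'.1, cx d x.2))
    (hreal : ∀ᶠ y in 𝓝 (x'.1, x.2), (S (cxPhase y)).im = 0) :
    IsStep (fun z ↦ H z.1 + ε * S z) (cxPhase x) (cxPhase x') := by
  have hderiv (v : CPhase d) : fderiv ℂ (fun z ↦ H z.1 + ε * S z) (cx d x'.1, cx d x.2) v =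
      cx d (ω x'.1) ⬝ᵥ v.1 + ε * fderiv ℂ S (cx d x'.1, cx d x.2) v := by
    rw [← hω]
    exact congrArg (· v) ((HasFDerivAt.comp (g := H) (cx d x'.1, cx d x.2) hH.hasFDerivAt
      hasFDerivAt_fst).add (hS.hasFDerivAt.const_mul (ε : ℂ))).fderiv
  have him (v : RPhase d) : (fderiv ℂ S (cx d x'.1, cx d x.2) (cxPhase v)).im = 0 :=
    im_fderiv_apply_eq_zero (L := (cxCLM d).prodMap (cxCLM d)) hS hreal v
  have hangle (i : Fin d) : (angleGrad S (cx d x'.1, cx d x.2) i).im = 0 := by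
    simpa [angleGrad, cxPhase, cx_single, cx_zero] using him (0, Pi.single i 1)
  have haction (i : Fin d) : (actionGrad S (cx d x'.1, cx d x.2) i).im = 0 := by
    simpa [actionGrad, cxPhase, cx_single, cx_zero] using him (Pi.single i 1, 0)
  refine ⟨funext fun i ↦ ?_, funext fun i ↦ ?_⟩
  · refine Complex.ext ?_ ?_
    · simpa [cxPhase, cx, angleGrad, hderiv] using h.fst_apply_eq i
    · simpa [cxPhase, cx, angleGrad, hderiv] using Or.inr (hangle i)
  · refine Complex.ext ?_ ?_
    · simpa [cxPhase, cx, actionGrad, hderiv, add_assoc] using h.snd_apply_eq i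
    · simpa [cxPhase, cx, actionGrad, hderiv] using Or.inr (haction i)

end RealStep

/-! ### Simultaneous Diophantine approximation and strong convexity -/

section DirichletConvexity

open Matrix

variable {d : ℕ}

theorem abs_mul_sub_sub_floor_sub_floor_le {N : ℕ} (hN : 0 < N) {x y : ℝ}
    (h : ⌊N * Int.fract x⌋₊ = ⌊N * Int.fract y⌋₊) : |x - y - (⌊x⌋ - ⌊y⌋ : ℤ)| ≤ 1 / N := by
  have hN' : (0 : ℝ) < N := by exact_mod_cast hN
  have hclose := Int.abs_sub_lt_one_of_floor_eq_floor (a := N * Int.fract x) (b := N * Int.fract y)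
    (by rw [← Int.natCast_floor_eq_floor (by positivity), h,
      Int.natCast_floor_eq_floor (by positivity)])
  have hfract : x - y - (⌊x⌋ - ⌊y⌋ : ℤ) = Int.fract x - Int.fract y := by
    rw [← Int.self_sub_floor x, ← Int.self_sub_floor y]
    push_cast
    ring
  rw [← mul_sub, abs_mul, abs_of_pos hN'] at hclose
  rw [hfract, le_div_iff₀' hN']
  exact hclose.le

theorem exists_nat_int_forall_abs_mul_sub_le (v : Fin d → ℝ) {N : ℕ} (hN : 0 < N) :
    ∃ T : ℕ, 0 < T ∧ T ≤ N ^ d ∧ ∃ p : Fin d → ℤ, ∀ i, |T * v i - p i| ≤ 1 / N := by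
  have hlt (x : ℝ) : ⌊N * Int.fract x⌋₊ < N := by
    rw [Nat.floor_lt (by positivity)]
    exact mul_lt_of_lt_one_right (by exact_mod_cast hN) (Int.fract_lt_one x)
  let box (t : ℕ) (i : Fin d) : Fin N := ⟨⌊N * Int.fract (t * v i)⌋₊, hlt _⟩
  have hcard : (Finset.univ : Finset (Fin d → Fin N)).card < (Finset.range (N ^ d + 1)).card := by
    simp
  obtain ⟨a, ha, b, hb, hab, hbox⟩ := Finset.exists_ne_map_eq_of_card_lt_of_maps_to hcard
    (f := box) (fun _ _ ↦ by simp)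
  wlog hlt : b < a generalizing a b
  · exact this b hb a ha hab.symm hbox.symm (hab.lt_of_le (not_lt.1 hlt))
  refine ⟨a - b, by omega, by have := Finset.mem_range.1 ha; omega,
    fun i ↦ ⌊a * v i⌋ - ⌊b * v i⌋, fun i ↦ ?_⟩
  rw [Nat.cast_sub hlt.le, sub_mul]
  exact abs_mul_sub_sub_floor_sub_floor_le hN (congrArg Fin.val (congrFun hbox i))

theorem half_le_sub_sub_of_forall_le_deriv2 {f f' f'' : ℝ → ℝ} {c : ℝ}
    (hf : ∀ t ∈ Set.Icc (0 : ℝ) 1, HasDerivAt f (f' t) t)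
    (hf' : ∀ t ∈ Set.Icc (0 : ℝ) 1, HasDerivAt f' (f'' t) t)
    (hc : ∀ t ∈ Set.Icc (0 : ℝ) 1, c ≤ f'' t) : c / 2 ≤ f 1 - f 0 - f' 0 := by
  have hderiv (t) (ht : t ∈ Set.Icc (0 : ℝ) 1) :
      HasDerivAt (fun t ↦ f t - c / 2 * t ^ 2) (f' t - c * t) t :=
    ((hf t ht).sub ((hasDerivAt_pow 2 t).const_mul (c / 2))).congr_deriv (by simp; ring)
  have hderiv2 (t) (ht : t ∈ Set.Icc (0 : ℝ) 1) :
      HasDerivAt (fun t ↦ f' t - c * t) (f'' t - c) t :=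
    ((hf' t ht).sub ((hasDerivAt_id t).const_mul c)).congr_deriv (by simp)
  have hconvex : ConvexOn ℝ (Set.Icc 0 1) fun t ↦ f t - c / 2 * t ^ 2 :=
    convexOn_of_hasDerivWithinAt2_nonneg (convex_Icc 0 1)
      (fun t ht ↦ (hderiv t ht).continuousAt.continuousWithinAt)
      (fun t ht ↦ (hderiv t (interior_subset ht)).hasDerivWithinAt)
      (fun t ht ↦ (hderiv2 t (interior_subset ht)).hasDerivWithinAt)
      (fun t ht ↦ sub_nonneg.2 (hc t (interior_subset ht)))
  have hslope := hconvex.le_slope_of_hasDerivAt (Set.left_mem_Icc.2 zero_le_one)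
    (Set.right_mem_Icc.2 zero_le_one) zero_lt_one (hderiv 0 (Set.left_mem_Icc.2 zero_le_one))
  norm_num [slope_def_field] at hslope
  linarith

variable {ω : (Fin d → ℝ) → Fin d → ℝ} {x y : Fin d → ℝ} {ν : ℝ}

theorem differentiableAt_of_forall_mul_sum_sq_le (hν : 0 < ν)
    (h : ∀ v : Fin d → ℝ, ν * ∑ i, v i ^ 2 ≤ ∑ i, fderiv ℝ ω x v i * v i) :
    DifferentiableAt ℝ ω x := by
  by_contra hdiff
  have hsum : ν * d ≤ 0 := by
    simpa [fderiv_zero_of_not_differentiableAt hdiff] using h 1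
  have hd : d = 0 := by
    exact_mod_cast (nonpos_of_mul_nonpos_right hsum hν).antisymm d.cast_nonneg
  subst hd
  exact hdiff (hasFDerivAt_of_subsingleton ω x).differentiableAt

theorem half_mul_sum_sq_le_sub_sub_dotProduct {h : (Fin d → ℝ) → ℝ} {s : Set (Fin d → ℝ)}
    (hs : Convex ℝ s) (hν : 0 < ν) (hω : ∀ I ∈ s, HasFDerivAt h (pairing (ω I)) I)
    (hconvex : ∀ I ∈ s, ∀ v : Fin d → ℝ, ν * ∑ i, v i ^ 2 ≤ ∑ i, fderiv ℝ ω I v i * v i)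
    (hx : x ∈ s) (hy : y ∈ s) :
    ν / 2 * ∑ i, (y - x) i ^ 2 ≤ h y - h x - ω x ⬝ᵥ (y - x) := by
  set v := y - x with hv
  have hseg (t) (ht : t ∈ Set.Icc (0 : ℝ) 1) : x + t • v ∈ s := hs.add_smul_sub_mem hx hy ht
  have hline (t : ℝ) : HasDerivAt (fun t : ℝ ↦ x + t • v) v t := by
    simpa using ((hasDerivAt_id t).smul_const v).const_add x
  have hderiv (t) (ht : t ∈ Set.Icc (0 : ℝ) 1) :
      HasDerivAt (fun t : ℝ ↦ h (x + t • v)) (ω (x + t • v) ⬝ᵥ v) t :=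
    ((hω _ (hseg t ht)).comp_hasDerivAt t (hline t)).congr_deriv (pairing_apply _ _)
  have hderiv2 (t) (ht : t ∈ Set.Icc (0 : ℝ) 1) :
      HasDerivAt (fun t : ℝ ↦ ω (x + t • v) ⬝ᵥ v) (∑ i, fderiv ℝ ω (x + t • v) v i * v i) t := by
    have hω' := differentiableAt_of_forall_mul_sum_sq_le hν (hconvex _ (hseg t ht))
    have hcomp := hasDerivAt_pi.1 (hω'.hasFDerivAt.comp_hasDerivAt t (hline t))
    exact HasDerivAt.fun_sum fun i _ ↦ (hcomp i).mul_const (v i)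
  have h₁ := half_le_sub_sub_of_forall_le_deriv2 hderiv hderiv2 fun t ht ↦ hconvex _ (hseg t ht) v
  simp only [one_smul, zero_smul, add_zero, hv, add_sub_cancel] at h₁
  rwa [mul_div_right_comm] at h₁

end DirichletConvexity

/-! ### Rescaling about a base point -/

section Rescale

open Topology Matrix

variable {d : ℕ} {G : CPhase d → ℂ} {a θ Ω : Fin d → ℂ} {ρ : ℂ} {z z' : CPhase d}

/-- The generating function `G` in the coordinates `J = ρ⁻¹ (I - a)`, `ψ = φ - θ`, the angles being
shifted by a further `Ω` after the step. -/
noncomputable def rescale (G : CPhase d → ℂ) (a : Fin d → ℂ) (ρ : ℂ) (θ Ω : Fin d → ℂ) :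
    CPhase d → ℂ :=
  fun z ↦ ρ⁻¹ * G (a + ρ • z.1, z.2 + θ) - Ω ⬝ᵥ z.1

theorem analyticAt_rescale (hG : AnalyticAt ℂ G (a + ρ • z.1, z.2 + θ)) :
    AnalyticAt ℂ (rescale G a ρ θ Ω) z := by
  have hfst (i : Fin d) : AnalyticAt ℂ (fun z : CPhase d ↦ z.1 i) z :=
    ((ContinuousLinearMap.proj (R := ℂ) (φ := fun _ : Fin d ↦ ℂ) i).comp (.fst ℂ _ _)).analyticAt z
  have haffine : AnalyticAt ℂ (fun z : CPhase d ↦ (a + ρ • z.1, z.2 + θ)) z :=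
    (analyticAt_const.fun_add (analyticAt_const.fun_smul analyticAt_fst)).prod
      (analyticAt_snd.fun_add analyticAt_const)
  have hcomp : AnalyticAt ℂ (fun z : CPhase d ↦ G (a + ρ • z.1, z.2 + θ)) z :=
    AnalyticAt.comp (g := G) hG haffine
  exact (analyticAt_const.mul hcomp).sub
    (Finset.analyticAt_fun_sum _ fun i _ ↦ analyticAt_const.mul (hfst i))

theorem fderiv_rescale_apply (hG : DifferentiableAt ℂ G (a + ρ • z.1, z.2 + θ)) (v : CPhase d) :
    fderiv ℂ (rescale G a ρ θ Ω) z v =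
      ρ⁻¹ * fderiv ℂ G (a + ρ • z.1, z.2 + θ) (ρ • v.1, v.2) - Ω ⬝ᵥ v.1 := by
  have haffine : HasFDerivAt (fun z : CPhase d ↦ (a + ρ • z.1, z.2 + θ))
      ((ρ • ContinuousLinearMap.fst ℂ _ _).prod (.snd ℂ _ _)) z :=
    ((hasFDerivAt_fst.const_smul ρ).const_add a).prodMk (hasFDerivAt_snd.add_const θ)
  have hdot := fderiv_dotProduct_apply (hasFDerivAt_const Ω z)
    (hasFDerivAt_fst (𝕜 := ℂ) (p := z)) v
  have hsub := fderiv_fun_sub ((hG.comp z haffine.differentiableAt).const_mul ρ⁻¹)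
    (differentiableAt_dotProduct (differentiableAt_const Ω) (differentiableAt_fst (p := z)))
  refine (congrArg (· v) hsub).trans ?_
  rw [_root_.sub_apply, hdot,
    ((hG.hasFDerivAt.comp z haffine).const_mul ρ⁻¹).fderiv]
  simp

theorem IsStep.rescale (h : IsStep G z z') (hρ : ρ ≠ 0) (hG : DifferentiableAt ℂ G (z'.1, z.2)) :
    IsStep (rescale G a ρ θ Ω) (ρ⁻¹ • (z.1 - a), z.2 - θ) (ρ⁻¹ • (z'.1 - a), z'.2 - (θ + Ω)) := by
  have hpoint : (a + ρ • ρ⁻¹ • (z'.1 - a), z.2 - θ + θ) = (z'.1, z.2) := by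
    rw [smul_inv_smul₀ hρ, add_sub_cancel, sub_add_cancel]
  have hderiv := fderiv_rescale_apply (G := G) (a := a) (ρ := ρ) (θ := θ) (Ω := Ω)
    (z := (ρ⁻¹ • (z'.1 - a), z.2 - θ)) (by rwa [hpoint])
  simp only [hpoint] at hderiv
  refine ⟨funext fun i ↦ ?_, funext fun i ↦ ?_⟩
  · have hi := congrFun h.fst_eq i
    simp only [Pi.sub_apply, Pi.smul_apply, smul_eq_mul, angleGrad, hderiv] at hi ⊢
    rw [hi]
    simp
    ring
  · have hi := congrFun h.snd_eq i
    have hsmul : (ρ • Pi.single i 1, 0) = ρ • ((Pi.single i 1, 0) : CPhase d) := by simp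
    simp only [Pi.sub_apply, Pi.add_apply, actionGrad, hderiv, hsmul, map_smul, smul_eq_mul,
      inv_mul_cancel_left₀ hρ, dotProduct_single_one] at hi ⊢
    rw [hi]
    ring

theorem IsStep.congr {g g' : CPhase d → ℂ} (h : IsStep g z z') (hg : g =ᶠ[𝓝 (z'.1, z.2)] g') :
    IsStep g' z z' where
  fst_eq := by
    refine h.fst_eq.trans (congrArg (z.1 - ·) (funext fun i ↦ ?_))
    rw [angleGrad, angleGrad, hg.fderiv_eq]
  snd_eq := by
    refine h.snd_eq.trans (congrArg (z.2 + ·) (funext fun i ↦ ?_))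
    rw [actionGrad, actionGrad, hg.fderiv_eq]

end Rescale

/-! ### Quasi-integrable generating functions near a base point -/

section QuasiIntegrable

open Matrix

variable {d : ℕ} {H : (Fin d → ℂ) → ℂ} {S : CPhase d → ℂ} {I₀ ω₀ Ω J : Fin d → ℝ}
  {δ ν M μ ρ : ℝ} {z : CPhase d}

/-- The complex neighbourhood of `{I₀} × ℝ^d` of width `δ`. -/
def complexNhd (I₀ : Fin d → ℝ) (δ : ℝ) : Set (CPhase d) :=
  {z | z.1 ∈ ball (cx d I₀) δ ∧ ∀ i, |(z.2 i).im| < δ}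

theorem isOpen_complexNhd : IsOpen (complexNhd I₀ δ) := by
  have him (i : Fin d) : IsOpen {z : CPhase d | |(z.2 i).im| < δ} :=
    isOpen_lt (by fun_prop) continuous_const
  have hset : complexNhd I₀ δ = Prod.fst ⁻¹' ball (cx d I₀) δ ∩ ⋂ i, {z | |(z.2 i).im| < δ} := by
    ext z
    simp [complexNhd]
  rw [hset]
  exact (isOpen_ball.preimage continuous_fst).inter (isOpen_iInter_of_finite him)

/-- `H` is an integrable generating function near `I₀` with frequency `ω₀` at `I₀`, normalised to
vanish there; the last field is what is left of its `ν`-strong convexity. -/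
structure IsConvexGenNear (H : (Fin d → ℂ) → ℂ) (I₀ ω₀ : Fin d → ℝ) (δ M ν : ℝ) : Prop
    extends AnalyticBddOn H (cx d I₀) δ M where
  apply_center : H (cx d I₀) = 0
  fderiv_center : ∀ u, fderiv ℂ H (cx d I₀) u = cx d ω₀ ⬝ᵥ u
  le_re_sub : ∀ I ∈ ball I₀ δ,
    ν / 2 * ∑ i, (I - I₀) i ^ 2 ≤ (H (cx d I)).re - ω₀ ⬝ᵥ (I - I₀)

/-- `S` is an analytic perturbation of size `μ` near the actions `I₀`, periodic in the angles. -/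
structure IsPerturbationNear (S : CPhase d → ℂ) (I₀ : Fin d → ℝ) (δ μ : ℝ) : Prop where
  analyticOnNhd : AnalyticOnNhd ℂ S (complexNhd I₀ δ)
  norm_le : ∀ z ∈ complexNhd I₀ δ, ‖S z‖ ≤ μ
  periodic : ∀ z ∈ complexNhd I₀ δ, ∀ e : Fin d → ℤ, S (z.1, z.2 + cx d fun i ↦ e i) = S z

theorem IsConvexGenNear.norm_sub_dotProduct_le (hH : IsConvexGenNear H I₀ ω₀ δ M ν) (hδ : 0 < δ)
    {u : Fin d → ℂ} (hu : ‖u‖ < δ / 4) :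
    ‖H (cx d I₀ + u) - cx d ω₀ ⬝ᵥ u‖ ≤ 8 * M / δ ^ 2 * ‖u‖ ^ 2 := by
  simpa [hH.apply_center, hH.fderiv_center] using
    hH.toAnalyticBddOn.norm_sub_sub_fderiv_le hδ (x := cx d I₀ + u) (by simpa using hu)

/-- The generating function of the `k`-th step in the coordinates `J = (I - I₀) / ρ` and
`ψ = φ - k Ω` which turn with the frequency `Ω`. -/
noncomputable def rescaledGen (H : (Fin d → ℂ) → ℂ) (S : CPhase d → ℂ) (I₀ Ω : Fin d → ℝ) (ρ : ℝ)
    (k : ℕ) : CPhase d → ℂ :=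
  rescale (fun z ↦ H z.1 + S z) (cx d I₀) ρ (cx d (k • Ω)) (cx d Ω)

theorem rescaledGen_apply (hρ : ρ ≠ 0) (k : ℕ) : rescaledGen H S I₀ Ω ρ k z =
    (ρ : ℂ)⁻¹ * (H (cx d I₀ + (ρ : ℂ) • z.1) - cx d ω₀ ⬝ᵥ ((ρ : ℂ) • z.1) +
      S (cx d I₀ + (ρ : ℂ) • z.1, z.2 + cx d (k • Ω))) + cx d (ω₀ - Ω) ⬝ᵥ z.1 := by
  have hρ' : (ρ : ℂ) ≠ 0 := by exact_mod_cast hρ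
  rw [rescaledGen, rescale, cx_sub, dotProduct_smul, sub_dotProduct, smul_eq_mul]
  field_simp
  ring

theorem mem_complexNhd_of_norm_le (hρ : 0 < ρ) (hρδ : 12 * ρ < δ) (hz : ‖z.1‖ ≤ 3)
    (him : ∀ i, |(z.2 i).im| < δ) (θ : Fin d → ℝ) :
    (cx d I₀ + (ρ : ℂ) • z.1, z.2 + cx d θ) ∈ complexNhd I₀ δ := by
  refine ⟨?_, fun i ↦ by simpa [cx] using him i⟩
  rw [mem_ball, dist_eq_norm, add_sub_cancel_left, norm_smul, Complex.norm_real,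
    Real.norm_of_nonneg hρ.le]
  nlinarith

section Bounds

variable (hH : IsConvexGenNear H I₀ ω₀ δ M ν) (hS : IsPerturbationNear S I₀ δ μ) (hρ : 0 < ρ)
  (hρδ : 12 * ρ < δ)
include hH hS hρ hρδ

theorem analyticAt_rescaledGen (hz : ‖z.1‖ ≤ 3) (him : ∀ i, |(z.2 i).im| < δ) (k : ℕ) :
    AnalyticAt ℂ (rescaledGen H S I₀ Ω ρ k) z := by
  have hmem := mem_complexNhd_of_norm_le (I₀ := I₀) hρ hρδ hz him (k • Ω)
  have hH' : AnalyticAt ℂ H (cx d I₀ + (ρ : ℂ) • z.1, z.2 + cx d (k • Ω)).1 :=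
    hH.analyticOnNhd _ hmem.1
  exact analyticAt_rescale ((hH'.comp analyticAt_fst).add (hS.analyticOnNhd _ hmem))

theorem norm_rescaledGen_le (hΩ : ‖ω₀ - Ω‖ ≤ ρ) {K : ℝ} (hμ : μ ≤ ρ ^ 2 * K) (hz : ‖z.1‖ ≤ 3)
    (him : ∀ i, |(z.2 i).im| < δ) (k : ℕ) :
    ‖rescaledGen H S I₀ Ω ρ k z‖ ≤ ρ * (72 * M / δ ^ 2 + 3 * d + K) := by
  have hmem := mem_complexNhd_of_norm_le (I₀ := I₀) hρ hρδ hz him (k • Ω)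
  have hδ : 0 < δ := by linarith
  have hM : 0 ≤ M := hH.holomorphicBddOn.nonneg hδ
  have hnorm : ‖(ρ : ℂ) • z.1‖ ≤ 3 * ρ := by
    rw [norm_smul, Complex.norm_real, Real.norm_of_nonneg hρ.le]
    nlinarith
  have hTaylor : ‖H (cx d I₀ + (ρ : ℂ) • z.1) - cx d ω₀ ⬝ᵥ ((ρ : ℂ) • z.1)‖ ≤
      8 * M / δ ^ 2 * (3 * ρ) ^ 2 :=
    (hH.norm_sub_dotProduct_le hδ (by linarith)).trans (by gcongr)
  have hdetuning : ‖cx d (ω₀ - Ω) ⬝ᵥ z.1‖ ≤ d * (ρ * 3) := by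
    refine (norm_dotProduct_le _ _).trans ?_
    rw [norm_cx]
    gcongr
  rw [rescaledGen_apply hρ.ne']
  calc _ ≤ ρ⁻¹ * (8 * M / δ ^ 2 * (3 * ρ) ^ 2 + ρ ^ 2 * K) + d * (ρ * 3) := by
        refine norm_add_le_of_le ?_ hdetuning
        rw [norm_mul, norm_inv, Complex.norm_real, Real.norm_of_nonneg hρ.le]
        gcongr
        exact norm_add_le_of_le hTaylor ((hS.norm_le _ hmem).trans hμ)
    _ = _ := by field_simp; ring

theorem analyticBddOn_rescaledGen (hΩ : ‖ω₀ - Ω‖ ≤ ρ) {K : ℝ} (hμ : μ ≤ ρ ^ 2 * K) {τ : ℝ}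
    (hτ : 8 * τ ≤ min 1 δ) (hz : ‖z.1‖ ≤ 2) (him : ∀ i, (z.2 i).im = 0) (k : ℕ) :
    AnalyticBddOn (rescaledGen H S I₀ Ω ρ k) z (8 * τ) (ρ * (72 * M / δ ^ 2 + 3 * d + K)) := by
  have hdomain (x) (hx : x ∈ ball z (8 * τ)) : ‖x.1‖ ≤ 3 ∧ ∀ i, |(x.2 i).im| < δ := by
    rw [mem_ball, dist_eq_norm] at hx
    refine ⟨?_, fun i ↦ ?_⟩
    · have := (norm_fst_le (x - z)).trans (hx.le.trans (hτ.trans (min_le_left _ _)))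
      rw [Prod.fst_sub] at this
      linarith [norm_le_norm_add_norm_sub' x.1 z.1]
    · calc |(x.2 i).im| = |((x - z).2 i).im| := by simp [him]
        _ ≤ ‖(x - z).2 i‖ := Complex.abs_im_le_norm _
        _ ≤ ‖x - z‖ := (norm_le_pi_norm _ i).trans (norm_snd_le _)
        _ < δ := hx.trans_le (hτ.trans (min_le_right _ _))
  exact ⟨fun x hx ↦ analyticAt_rescaledGen hH hS hρ hρδ (hdomain x hx).1 (hdomain x hx).2 k,
    fun x hx ↦ norm_rescaledGen_le hH hS hρ hρδ hΩ hμ (hdomain x hx).1 (hdomain x hx).2 k⟩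

end Bounds

end QuasiIntegrable

/-! ### The energy well -/

section Energy

open Matrix

variable {d : ℕ} {H : (Fin d → ℂ) → ℂ} {S : CPhase d → ℂ} {I₀ ω₀ Ω J : Fin d → ℝ}
  {δ ν M μ ρ : ℝ} {z : CPhase d}

theorem sq_norm_le_sum_sq {ι : Type*} [Fintype ι] (v : ι → ℝ) : ‖v‖ ^ 2 ≤ ∑ i, v i ^ 2 := by
  have hnorm : ‖v‖ ≤ √(∑ i, v i ^ 2) :=
    (pi_norm_le_iff_of_nonneg (Real.sqrt_nonneg _)).2 fun i ↦ Real.abs_le_sqrt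
      (Finset.single_le_sum (f := fun i ↦ v i ^ 2) (fun _ _ ↦ sq_nonneg _) (Finset.mem_univ i))
  exact (Real.le_sqrt (norm_nonneg v) (by positivity)).1 hnorm

theorem cx_dotProduct_cx (v u : Fin d → ℝ) : cx d v ⬝ᵥ cx d u = ((v ⬝ᵥ u : ℝ) : ℂ) := by
  simp [cx, dotProduct]

theorem re_rescaledGen (hρ : 0 < ρ) (hz : z.1 = cx d J) (k : ℕ) :
    (rescaledGen H S I₀ Ω ρ k z).re =
      ρ⁻¹ * ((H (cx d (I₀ + ρ • J))).re - ρ * (ω₀ ⬝ᵥ J) +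
        (S (cx d I₀ + (ρ : ℂ) • z.1, z.2 + cx d (k • Ω))).re) + (ω₀ - Ω) ⬝ᵥ J := by
  rw [rescaledGen_apply (ω₀ := ω₀) hρ.ne', ← Complex.ofReal_inv, Complex.add_re,
    Complex.re_ofReal_mul, Complex.add_re, Complex.sub_re, dotProduct_smul, smul_eq_mul,
    Complex.re_ofReal_mul, hz, cx_dotProduct_cx, cx_dotProduct_cx, Complex.ofReal_re,
    Complex.ofReal_re, cx_add, cx_smul]

variable (hS : IsPerturbationNear S I₀ δ μ) (hρ : 0 < ρ) (hρδ : 12 * ρ < δ)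
include hS hρ hρδ

theorem re_rescaledGen_le (hH : H (cx d I₀) = 0) (hz : z.1 = 0) (him : ∀ i, (z.2 i).im = 0)
    (k : ℕ) : (rescaledGen H S I₀ Ω ρ k z).re ≤ μ / ρ := by
  have hmem := mem_complexNhd_of_norm_le (I₀ := I₀) (z := z) hρ hρδ (by simp [hz])
    (fun i ↦ by rw [him]; simpa using by linarith) (k • Ω)
  refine (Complex.re_le_norm _).trans ?_
  rw [rescaledGen_apply (ω₀ := 0) hρ.ne']
  simp only [hz, smul_zero, add_zero, hH, dotProduct_zero, sub_zero, zero_add] at hmem ⊢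
  rw [norm_mul, norm_inv, Complex.norm_real, Real.norm_of_nonneg hρ.le, div_eq_inv_mul]
  gcongr
  exact hS.norm_le _ hmem

theorem le_re_rescaledGen (hH : IsConvexGenNear H I₀ ω₀ δ M ν) (hν : 0 ≤ ν)
    (hΩ : d * ‖ω₀ - Ω‖ ≤ ν * ρ / 4) (hz : z.1 = cx d J) (hJ₁ : 1 ≤ ‖J‖) (hJ₂ : ‖J‖ ≤ 2)
    (him : ∀ i, (z.2 i).im = 0) (k : ℕ) :
    ρ * ν / 4 - μ / ρ ≤ (rescaledGen H S I₀ Ω ρ k z).re := by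
  have hmem := mem_complexNhd_of_norm_le (I₀ := I₀) (z := z) hρ hρδ
    (by rw [hz, norm_cx]; linarith) (fun i ↦ by rw [him]; simpa using by linarith) (k • Ω)
  have hball : I₀ + ρ • J ∈ ball I₀ δ := by
    rw [mem_ball, ← dist_cx, cx_add, cx_smul, ← hz]
    exact hmem.1
  have hwell : ν / 2 * (ρ ^ 2 * ‖J‖ ^ 2) ≤
      (H (cx d (I₀ + ρ • J))).re - ρ * (ω₀ ⬝ᵥ J) := by
    have := hH.le_re_sub _ hball
    simp only [add_sub_cancel_left, Pi.smul_apply, smul_eq_mul, mul_pow, ← Finset.mul_sum,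
      dotProduct_smul] at this
    refine le_trans ?_ this
    gcongr
    exact sq_norm_le_sum_sq J
  have hpert := (abs_le.1 ((Complex.abs_re_le_norm _).trans (hS.norm_le _ hmem))).1
  have hdetuning : -(ν * ρ / 4 * ‖J‖) ≤ (ω₀ - Ω) ⬝ᵥ J := by
    refine (abs_le.1 ((norm_dotProduct_le (ω₀ - Ω) J).trans ?_)).1
    rw [← mul_assoc]
    gcongr
  have hsquare : 0 ≤ ν * ρ * ((‖J‖ - 1) * (2 * ‖J‖ + 1)) := by
    have := sub_nonneg.2 hJ₁
    positivity
  calc ρ * ν / 4 - μ / ρ ≤ ρ * ν / 2 * ‖J‖ ^ 2 - μ / ρ - ν * ρ / 4 * ‖J‖ := by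
        linear_combination hsquare / 4
    _ = ρ⁻¹ * (ν / 2 * (ρ ^ 2 * ‖J‖ ^ 2) + -μ) + -(ν * ρ / 4 * ‖J‖) := by
        field_simp
        ring
    _ ≤ _ := by
        rw [re_rescaledGen (ω₀ := ω₀) hρ hz]
        gcongr

theorem re_sum_rescaledGen_le (hH : H (cx d I₀) = 0) (hz : z.1 = 0) (him : ∀ i, (z.2 i).im = 0)
    (T : ℕ) : (∑ k ∈ Finset.range T, rescaledGen H S I₀ Ω ρ k z).re ≤ T * (μ / ρ) := by
  rw [Complex.re_sum]
  exact (Finset.sum_le_card_nsmul _ _ _ fun k _ ↦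
    re_rescaledGen_le hS hρ hρδ hH hz him k).trans_eq (by simp)

theorem le_re_sum_rescaledGen (hH : IsConvexGenNear H I₀ ω₀ δ M ν) (hν : 0 ≤ ν)
    (hΩ : d * ‖ω₀ - Ω‖ ≤ ν * ρ / 4) (hz : z.1 = cx d J) (hz₁ : 1 ≤ ‖z.1‖) (hz₂ : ‖z.1‖ ≤ 2)
    (him : ∀ i, (z.2 i).im = 0) (T : ℕ) :
    T * (ρ * ν / 4 - μ / ρ) ≤ (∑ k ∈ Finset.range T, rescaledGen H S I₀ Ω ρ k z).re := by
  rw [hz, norm_cx] at hz₁ hz₂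
  rw [Complex.re_sum]
  exact le_trans (by simp) (Finset.card_nsmul_le_sum _ _ _ fun k _ ↦
    le_re_rescaledGen hS hρ hρδ hH hν hΩ hz hz₁ hz₂ him k)

end Energy

/-! ### Orbits in rescaled coordinates -/

section RescaledOrbit

open Topology

variable {d T : ℕ} {H : (Fin d → ℂ) → ℂ} {S : CPhase d → ℂ} {I₀ Ω : Fin d → ℝ}
  {δ μ β ρ : ℝ} {x : ℕ → RPhase d}

/-- As long as its actions stay within `δ / 2` of the initial ones `I₀`, the orbit `x` is generated
by `H + S` and moves the actions by at most `β` per step. -/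
structure IsOrbitNear (H : (Fin d → ℂ) → ℂ) (S : CPhase d → ℂ) (I₀ : Fin d → ℝ) (δ β : ℝ)
    (x : ℕ → RPhase d) : Prop where
  fst_zero : (x 0).1 = I₀
  isStep : ∀ k, (x k).1 ∈ ball I₀ (δ / 2) →
    IsStep (fun z ↦ H z.1 + S z) (cxPhase (x k)) (cxPhase (x (k + 1)))
  norm_fst_succ_sub_le : ∀ k, (x k).1 ∈ ball I₀ (δ / 2) → ‖(x (k + 1)).1 - (x k).1‖ ≤ β

/-- The orbit `x` in the coordinates of `rescaledGen`. -/
noncomputable def rescaledOrbit (I₀ Ω : Fin d → ℝ) (ρ : ℝ) (x : ℕ → RPhase d) (k : ℕ) : CPhase d :=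
  ((ρ : ℂ)⁻¹ • (cx d (x k).1 - cx d I₀), cx d (x k).2 - cx d (k • Ω))

theorem rescaledOrbit_fst (k : ℕ) :
    (rescaledOrbit I₀ Ω ρ x k).1 = cx d (ρ⁻¹ • ((x k).1 - I₀)) := by
  rw [cx_smul, cx_sub, Complex.ofReal_inv, rescaledOrbit]

theorem im_rescaledOrbit_snd (k : ℕ) (i : Fin d) : ((rescaledOrbit I₀ Ω ρ x k).2 i).im = 0 := by
  simp [rescaledOrbit, cx]

theorem norm_rescaledOrbit_fst (hρ : 0 < ρ) (k : ℕ) :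
    ‖(rescaledOrbit I₀ Ω ρ x k).1‖ = ‖(x k).1 - I₀‖ / ρ := by
  rw [rescaledOrbit_fst, norm_cx, norm_smul, norm_inv, Real.norm_of_nonneg hρ.le, div_eq_inv_mul]

theorem norm_rescaledOrbit_fst_sub (hρ : 0 < ρ) (k : ℕ) :
    ‖(rescaledOrbit I₀ Ω ρ x (k + 1)).1 - (rescaledOrbit I₀ Ω ρ x k).1‖ =
      ‖(x (k + 1)).1 - (x k).1‖ / ρ := by
  rw [rescaledOrbit_fst, rescaledOrbit_fst, ← cx_sub, norm_cx, ← smul_sub, sub_sub_sub_cancel_right,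
    norm_smul, norm_inv, Real.norm_of_nonneg hρ.le, div_eq_inv_mul]

theorem mem_ball_of_norm_rescaledOrbit_le (hρ : 0 < ρ) (hρδ : 12 * ρ < δ) {k : ℕ}
    (hk : ‖(rescaledOrbit I₀ Ω ρ x k).1‖ ≤ 5 / 2) : (x k).1 ∈ ball I₀ (δ / 2) := by
  rw [norm_rescaledOrbit_fst hρ, div_le_iff₀ hρ] at hk
  rw [mem_ball_iff_norm]
  linarith

theorem IsPerturbationNear.rescaledGen_mul_add (hS : IsPerturbationNear S I₀ δ μ) {p : Fin d → ℤ}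
    (hp : T • Ω = fun i ↦ (p i : ℝ)) (n j : ℕ) {z : CPhase d}
    (hz : (cx d I₀ + (ρ : ℂ) • z.1, z.2 + cx d (j • Ω)) ∈ complexNhd I₀ δ) :
    rescaledGen H S I₀ Ω ρ (n * T + j) z = rescaledGen H S I₀ Ω ρ j z := by
  have hshift : cx d ((n * T + j) • Ω) = cx d (j • Ω) + cx d fun i ↦ ((n * p i : ℤ) : ℝ) := by
    rw [← cx_add, add_smul, mul_smul, hp, add_comm]
    congr 2
    ext i
    simp
  rw [rescaledGen, rescaledGen, rescale, rescale, hshift, ← add_assoc]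
  congr 3
  exact hS.periodic _ hz _

theorem IsPerturbationNear.rescaledGen_mul_add_eventuallyEq (hS : IsPerturbationNear S I₀ δ μ)
    {p : Fin d → ℤ} (hp : T • Ω = fun i ↦ (p i : ℝ)) (n j : ℕ) {z : CPhase d}
    (hz : (cx d I₀ + (ρ : ℂ) • z.1, z.2 + cx d (j • Ω)) ∈ complexNhd I₀ δ) :
    rescaledGen H S I₀ Ω ρ (n * T + j) =ᶠ[𝓝 z] rescaledGen H S I₀ Ω ρ j := by
  have hcont : Continuous fun z : CPhase d ↦ (cx d I₀ + (ρ : ℂ) • z.1, z.2 + cx d (j • Ω)) := by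
    fun_prop
  filter_upwards [hcont.continuousAt.preimage_mem_nhds (isOpen_complexNhd.mem_nhds hz)] with z hz
  exact hS.rescaledGen_mul_add hp n j hz

namespace IsOrbitNear

variable (hx : IsOrbitNear H S I₀ δ β x) (hρ : 0 < ρ) (hρδ : 12 * ρ < δ)
include hx hρ hρδ

theorem norm_rescaledOrbit_fst_sub_le {k : ℕ} (hk : ‖(rescaledOrbit I₀ Ω ρ x k).1‖ ≤ 5 / 2) :
    ‖(rescaledOrbit I₀ Ω ρ x (k + 1)).1 - (rescaledOrbit I₀ Ω ρ x k).1‖ ≤ β / ρ := by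
  rw [norm_rescaledOrbit_fst_sub hρ]
  gcongr
  exact hx.norm_fst_succ_sub_le k (mem_ball_of_norm_rescaledOrbit_le hρ hρδ hk)

theorem norm_rescaledOrbit_fst_succ_le (hβ : β / ρ ≤ 1 / 2) {k : ℕ}
    (hk : ‖(rescaledOrbit I₀ Ω ρ x k).1‖ ≤ 5 / 2) :
    ‖(rescaledOrbit I₀ Ω ρ x (k + 1)).1‖ ≤ 3 := by
  linarith [hx.norm_rescaledOrbit_fst_sub_le hρ hρδ hk,
    norm_le_norm_add_norm_sub' (rescaledOrbit I₀ Ω ρ x (k + 1)).1 (rescaledOrbit I₀ Ω ρ x k).1]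

variable (hS : IsPerturbationNear S I₀ δ μ)
include hS

theorem isStep_rescaledOrbit (hH : AnalyticOnNhd ℂ H (ball (cx d I₀) δ)) (hβ : β / ρ ≤ 1 / 2)
    {k : ℕ} (hk : ‖(rescaledOrbit I₀ Ω ρ x k).1‖ ≤ 5 / 2) :
    IsStep (rescaledGen H S I₀ Ω ρ k) (rescaledOrbit I₀ Ω ρ x k)
      (rescaledOrbit I₀ Ω ρ x (k + 1)) := by
  have hsucc := hx.norm_rescaledOrbit_fst_succ_le hρ hρδ hβ hk
  rw [norm_rescaledOrbit_fst hρ, div_le_iff₀ hρ] at hsucc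
  have hmem : ((cxPhase (x (k + 1))).1, (cxPhase (x k)).2) ∈ complexNhd I₀ δ := by
    refine ⟨?_, fun i ↦ by simpa [cxPhase, cx] using by linarith⟩
    rw [cxPhase, mem_ball, dist_cx, dist_eq_norm]
    linarith
  have hG : DifferentiableAt ℂ (fun z ↦ H z.1 + S z)
      ((cxPhase (x (k + 1))).1, (cxPhase (x k)).2) :=
    (DifferentiableAt.comp (g := H) _ (hH _ hmem.1).differentiableAt differentiableAt_fst).add
      (hS.analyticOnNhd _ hmem).differentiableAt
  have hstep := (hx.isStep k (mem_ball_of_norm_rescaledOrbit_le hρ hρδ hk)).rescale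
    (a := cx d I₀) (ρ := ρ) (θ := cx d (k • Ω)) (Ω := cx d Ω) (by exact_mod_cast hρ.ne') hG
  rwa [← cx_add, ← succ_nsmul] at hstep

end IsOrbitNear

end RescaledOrbit

/-! ### Stability near a resonance -/

section BlockDrift

variable {d T N m n : ℕ} {H : (Fin d → ℂ) → ℂ} {S : CPhase d → ℂ} {I₀ ω₀ Ω : Fin d → ℝ}
  {δ ν M μ β ρ τ K : ℝ} {x : ℕ → RPhase d} {p : Fin d → ℤ}

/-- The frequency `Ω` has period `T` and is so close to `ω₀` that the detuning `ω₀ - Ω` does not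
destroy the energy well of convexity `ν` at distance `ρ`. -/
structure IsResonantNear (Ω ω₀ : Fin d → ℝ) (T : ℕ) (ν ρ : ℝ) : Prop where
  period_pos : 0 < T
  exists_int : ∃ p : Fin d → ℤ, T • Ω = fun i ↦ (p i : ℝ)
  norm_sub_le : ‖ω₀ - Ω‖ ≤ ρ
  mul_norm_sub_le : d * ‖ω₀ - Ω‖ ≤ ν * ρ / 4

namespace IsOrbitNear

variable (hx : IsOrbitNear H S I₀ δ β x) (hρ : 0 < ρ) (hρδ : 12 * ρ < δ)
  (hS : IsPerturbationNear S I₀ δ μ) (hp : T • Ω = fun i ↦ (p i : ℝ)) (hτ₁ : 8 * τ ≤ min 1 δ)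
  (hβτ : β / ρ ≤ τ / 2) (hβT : T * (β / ρ) ≤ 1 / 4)
include hx hρ hρδ hS hp hτ₁ hβτ hβT

theorem isSlowOrbit_rescaledOrbit (hH : AnalyticOnNhd ℂ H (ball (cx d I₀) δ))
    (hn : ‖(rescaledOrbit I₀ Ω ρ x (n * T)).1‖ ≤ 9 / 4) :
    IsSlowOrbit (rescaledGen H S I₀ Ω ρ) T τ fun j ↦ rescaledOrbit I₀ Ω ρ x (n * T + j) := by
  have hβ := (norm_nonneg _).trans
    (hx.norm_rescaledOrbit_fst_sub_le (Ω := Ω) (k := n * T) hρ hρδ (by linarith))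
  have hβ₂ : β / ρ ≤ 1 / 2 := by linarith [min_le_left 1 δ]
  have hle : ∀ j ≤ T, ‖(rescaledOrbit I₀ Ω ρ x (n * T + j)).1‖ ≤ 9 / 4 + j * (β / ρ) := by
    intro j
    induction j with
    | zero => simpa using hn
    | succ j ih =>
      intro hj
      have hjβ : j * (β / ρ) ≤ T * (β / ρ) := by
        gcongr
        exact j.le_succ.trans hj
      have hstep := hx.norm_rescaledOrbit_fst_sub_le hρ hρδ
        ((ih (j.le_succ.trans hj)).trans (by linarith))
      rw [Nat.cast_succ, add_one_mul, ← add_assoc (n * T)]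
      linarith [ih (j.le_succ.trans hj), norm_le_norm_add_norm_sub'
        (rescaledOrbit I₀ Ω ρ x (n * T + j + 1)).1 (rescaledOrbit I₀ Ω ρ x (n * T + j)).1]
  have hle' (j : ℕ) (hj : j ≤ T) : ‖(rescaledOrbit I₀ Ω ρ x (n * T + j)).1‖ ≤ 5 / 2 := by
    have : j * (β / ρ) ≤ T * (β / ρ) := by gcongr
    linarith [hle j hj]
  intro j hj
  have hj₂ := hle' j hj.le
  refine ⟨(hx.isStep_rescaledOrbit hρ hρδ hS hH hβ₂ hj₂).congr ?_,
    (hx.norm_rescaledOrbit_fst_sub_le hρ hρδ hj₂).trans hβτ⟩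
  refine hS.rescaledGen_mul_add_eventuallyEq hp n j
    (mem_complexNhd_of_norm_le hρ hρδ ((hle' (j + 1) hj).trans (by norm_num)) (fun i ↦ ?_) _)
  rw [im_rescaledOrbit_snd, abs_zero]
  linarith

theorem isSlowNear_rescaledOrbit (hH : IsConvexGenNear H I₀ ω₀ δ M ν) (hτ : 0 < τ)
    (hΩ : ‖ω₀ - Ω‖ ≤ ρ) (hμ : μ ≤ ρ ^ 2 * K)
    (hn : ‖(rescaledOrbit I₀ Ω ρ x (n * T)).1‖ ≤ 2) :
    IsSlowNear (rescaledGen H S I₀ Ω ρ) T τ (ρ * (72 * M / δ ^ 2 + 3 * d + K) / (2 * τ))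
      (rescaledOrbit I₀ Ω ρ x) n where
  analyticBddOn k _ := by
    rw [mul_div_cancel₀ _ (by positivity)]
    exact analyticBddOn_rescaledGen hH hS hρ hρδ hΩ hμ hτ₁ hn (im_rescaledOrbit_snd _) k
  isSlowOrbit k hk := by
    refine hx.isSlowOrbit_rescaledOrbit hρ hρδ hS hp hτ₁ hβτ hβT hH.analyticOnNhd ?_
    refine (norm_fst_le_add (mem_ball_iff_norm.1 hk).le hn).trans ?_
    linarith [min_le_left 1 δ]
  norm_fst_le := hn

omit hp in
theorem norm_fst_sub_le_of_block_drift (hH : IsConvexGenNear H I₀ ω₀ δ M ν) (hν : 0 ≤ ν)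
    (hτ : 0 < τ) (hΩ : IsResonantNear Ω ω₀ T ν ρ) (hμ : μ ≤ ρ ^ 2 * (ν / 32)) (hm₁ : 1 ≤ m) {κ : ℝ}
    (hκ : κ = ρ * (72 * M / δ ^ 2 + 3 * d + ν / 32) / (2 * τ)) (hm : 100 * m * (T * κ) ≤ τ)
    (hN : 2 * (20 * (d + 1) * (T * κ) ^ 2 / τ) + N * (4 * (d + 1) * (2 / 3) ^ m) <
      3 / 16 * (ν * (T * ρ)))
    (hn : n ≤ N) {j : ℕ} (hj : j ≤ T) : ‖(x (n * T + j)).1 - I₀‖ ≤ 2 * ρ := by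
  obtain ⟨p, hp⟩ := hΩ.exists_int
  have hw₀ : (rescaledOrbit I₀ Ω ρ x 0).1 = 0 := by
    rw [rescaledOrbit, hx.fst_zero, sub_self, smul_zero]
  have hμρ : μ / ρ ≤ ρ * ν / 32 := by
    rw [div_le_iff₀ hρ]
    linarith
  have hbarrier := norm_fst_le_two_of_energy_barrier hτ (hτ₁.trans (min_le_left 1 δ))
    hΩ.period_pos hm₁ hm (fun n hn ↦ hκ ▸
      hx.isSlowNear_rescaledOrbit hρ hρδ hS hp hτ₁ hβτ hβT hH hτ hΩ.norm_sub_le hμ hn)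
    (by simp [hw₀])
    (re_sum_rescaledGen_le hS hρ hρδ hH.apply_center hw₀ (im_rescaledOrbit_snd 0) T)
    (fun n h₁ h₂ ↦ le_re_sum_rescaledGen hS hρ hρδ hH hν hΩ.mul_norm_sub_le
      (rescaledOrbit_fst (n * T)) h₁.le h₂ (im_rescaledOrbit_snd _) T)
    (by linarith [mul_le_mul_of_nonneg_left hμρ (Nat.cast_nonneg (α := ℝ) T)]) hn hj
  rwa [norm_rescaledOrbit_fst hρ, div_le_iff₀ hρ] at hbarrier

end IsOrbitNear

end BlockDrift

theorem mul_two_thirds_pow_floor_le {a b c q : ℝ} (ha : 0 < a) (hq : 0 < q) (hc : 0 ≤ c)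
    (hb : b ≤ c * Real.exp (a / 6 / q)) : b * (2 / 3) ^ ⌊a / q⌋₊ ≤ 12 * c * q / a := by
  have hbase : (2 / 3 : ℝ) ≤ Real.exp (-(1 / 3)) := by
    linarith [Real.add_one_le_exp (-(1 / 3 : ℝ))]
  have hpow : (2 / 3 : ℝ) ^ ⌊a / q⌋₊ ≤ Real.exp (1 / 3) * Real.exp (-(a / 3 / q)) := by
    calc (2 / 3 : ℝ) ^ ⌊a / q⌋₊ ≤ Real.exp (-(1 / 3)) ^ ⌊a / q⌋₊ := by gcongr
      _ = Real.exp (⌊a / q⌋₊ * -(1 / 3)) := (Real.exp_nat_mul _ _).symm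
      _ ≤ Real.exp (1 / 3 + -(a / 3 / q)) := by
        have : a / 3 / q = a / q / 3 := by ring
        gcongr
        linarith [Nat.lt_floor_add_one (a / q)]
      _ = _ := Real.exp_add _ _
  have hexp : Real.exp (1 / 3) ≤ 2 := by
    rw [← inv_le_inv₀ (by norm_num) (Real.exp_pos _), ← Real.exp_neg]
    linarith
  have hdecay : Real.exp (-(a / 6 / q)) ≤ 6 * q / a := by
    rw [Real.exp_neg, inv_le_comm₀ (Real.exp_pos _) (by positivity), inv_div, ← div_div]
    linarith [Real.add_one_le_exp (a / 6 / q)]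
  calc b * (2 / 3) ^ ⌊a / q⌋₊
      ≤ c * Real.exp (a / 6 / q) * (Real.exp (1 / 3) * Real.exp (-(a / 3 / q))) := by gcongr
    _ = c * Real.exp (1 / 3) * Real.exp (-(a / 6 / q)) := by
      rw [show -(a / 3 / q) = -(a / 6 / q) + -(a / 6 / q) by ring, Real.exp_add, Real.exp_neg]
      field_simp
    _ ≤ c * 2 * (6 * q / a) := by gcongr
    _ = 12 * c * q / a := by ring

section ExponentialTime

variable {d T k : ℕ} {H : (Fin d → ℂ) → ℂ} {S : CPhase d → ℂ} {I₀ ω₀ Ω : Fin d → ℝ}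
  {δ ν M μ ρ τ C a : ℝ} {x : ℕ → RPhase d}

/-- The energy is measured with `m = ⌊a / (T * ρ)⌋₊` averaged differences over the blocks of `T`
steps: this is the largest admissible choice. -/
theorem IsOrbitNear.norm_fst_sub_le_of_le_exp (hx : IsOrbitNear H S I₀ δ (μ / δ) x) (hρ : 0 < ρ)
    (hS : IsPerturbationNear S I₀ δ μ) (hH : IsConvexGenNear H I₀ ω₀ δ M ν)
    (hΩ : IsResonantNear Ω ω₀ T ν ρ) (hμ : μ ≤ ρ ^ 2 * (ν / 32)) (hν : 0 < ν) (hτ : 0 < τ)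
    (hτ₁ : 8 * τ ≤ min 1 δ) (hC : C = 72 * M / δ ^ 2 + 3 * d + ν / 32) (hC₀ : 0 < C)
    (ha : a = τ ^ 2 / (50 * C)) (hqδ : 12 * (T * ρ) < δ) (hqτ : T * ρ * ν / (32 * δ) ≤ τ / 2)
    (hqa : T * ρ ≤ a) (hqν : 160 * (d + 1) * C ^ 2 * (T * ρ) ≤ ν * τ ^ 3)
    (hk : k ≤ ν * a / (768 * (d + 1)) * Real.exp (a / 6 / (T * ρ))) :
    ‖(x k).1 - I₀‖ ≤ 2 * ρ := by
  have hT₁ : (1 : ℝ) ≤ T := by exact_mod_cast hΩ.period_pos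
  have hδ : 0 < δ := by linarith [min_le_right 1 δ]
  have ha₀ : 0 < a := by rw [ha]; positivity
  have hq₀ : 0 < T * ρ := by positivity
  have hρq : ρ ≤ T * ρ := le_mul_of_one_le_left hρ.le hT₁
  have hTstep : T * (μ / δ / ρ) ≤ τ / 2 := by
    calc T * (μ / δ / ρ) ≤ T * (ρ ^ 2 * (ν / 32) / δ / ρ) := by gcongr
      _ = T * ρ * ν / (32 * δ) := by field_simp
      _ ≤ τ / 2 := hqτ
  have hstep : μ / δ / ρ ≤ τ / 2 := by
    rcases le_total 0 (μ / δ / ρ) with h | h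
    · exact (le_mul_of_one_le_left h hT₁).trans hTstep
    · linarith
  have hTκ : T * (ρ * C / (2 * τ)) = C * (T * ρ) / (2 * τ) := by ring
  have hblocks : 100 * ⌊a / (T * ρ)⌋₊ * (C * (T * ρ) / (2 * τ)) ≤ τ := by
    calc _ ≤ 100 * (a / (T * ρ)) * (C * (T * ρ) / (2 * τ)) := by
          gcongr
          exact Nat.floor_le (by positivity)
      _ = τ := by rw [ha]; field_simp; norm_num
  have hsecond : 2 * (20 * (d + 1) * (C * (T * ρ) / (2 * τ)) ^ 2 / τ) ≤ ν * (T * ρ) / 16 := by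
    calc _ = 160 * (d + 1) * C ^ 2 * (T * ρ) * (T * ρ) / (16 * τ ^ 3) := by ring
      _ ≤ ν * τ ^ 3 * (T * ρ) / (16 * τ ^ 3) := by gcongr
      _ = ν * (T * ρ) / 16 := by field_simp
  have hdrift :
      ((k / T : ℕ) : ℝ) * (4 * (d + 1) * (2 / 3) ^ ⌊a / (T * ρ)⌋₊) ≤ ν * (T * ρ) / 16 := by
    have hkT : ((k / T : ℕ) : ℝ) ≤ k := by exact_mod_cast Nat.div_le_self k T
    calc _ = 4 * (d + 1) * (((k / T : ℕ) : ℝ) * (2 / 3) ^ ⌊a / (T * ρ)⌋₊) := by ring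
      _ ≤ 4 * (d + 1) * (12 * (ν * a / (768 * (d + 1))) * (T * ρ) / a) := by
        gcongr
        exact mul_two_thirds_pow_floor_le ha₀ hq₀ (by positivity) (hkT.trans hk)
      _ = ν * (T * ρ) / 16 := by field_simp; norm_num
  have hconfined := hx.norm_fst_sub_le_of_block_drift (N := k / T) hρ (by linarith) hS hτ₁ hstep
    (by linarith [min_le_left 1 δ]) hH hν.le hτ hΩ hμ
    (Nat.floor_pos.2 ((one_le_div hq₀).2 hqa)) (hC ▸ rfl) (hTκ ▸ hblocks)
    (by rw [hTκ]; linarith [mul_pos hν hq₀]) le_rfl (Nat.mod_lt k hΩ.period_pos).le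
  rwa [mul_comm, Nat.div_add_mod] at hconfined

theorem exists_forall_isOrbitNear_norm_fst_sub_le (d : ℕ) (hδ : 0 < δ) (hν : 0 < ν) (hM : 0 ≤ M) :
    ∃ q₀ > 0, ∃ c₂ > 0, ∃ c₃ > 0, ∀ {H : (Fin d → ℂ) → ℂ} {S : CPhase d → ℂ} {I₀ ω₀ Ω : Fin d → ℝ}
      {μ ρ : ℝ} {T : ℕ} {x : ℕ → RPhase d}, IsOrbitNear H S I₀ δ (μ / δ) x →
      IsPerturbationNear S I₀ δ μ → IsConvexGenNear H I₀ ω₀ δ M ν → IsResonantNear Ω ω₀ T ν ρ →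
      0 < ρ → μ ≤ ρ ^ 2 * (ν / 32) → T * ρ ≤ q₀ →
      ∀ k : ℕ, k ≤ c₂ * Real.exp (c₃ / (T * ρ)) → ‖(x k).1 - I₀‖ ≤ 2 * ρ := by
  have hτ : 0 < min 1 δ / 8 := by positivity
  set τ := min 1 δ / 8 with hτdef
  set C := 72 * M / δ ^ 2 + 3 * d + ν / 32 with hC
  have hC₀ : 0 < C := by positivity
  set a := τ ^ 2 / (50 * C) with ha
  have : 0 < a := by positivity
  refine ⟨min (min (δ / 24) (16 * δ * τ / ν)) (min a (ν * τ ^ 3 / (160 * (d + 1) * C ^ 2))),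
    by positivity, ν * a / (768 * (d + 1)), by positivity, a / 6, by positivity, ?_⟩
  intro H S I₀ ω₀ Ω μ ρ T x hx hS hH hΩ hρ hμ hq k hk
  rw [le_min_iff, le_min_iff, le_min_iff] at hq
  obtain ⟨⟨hqδ, hqτ⟩, hqa, hqν⟩ := hq
  refine hx.norm_fst_sub_le_of_le_exp hρ hS hH hΩ hμ hν hτ (by linarith) hC hC₀ ha (by linarith) ?_
    hqa ?_ hk
  · rw [le_div_iff₀ hν] at hqτ
    rw [div_le_iff₀ (by positivity)]
    linarith
  · rw [le_div_iff₀ (by positivity)] at hqν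
    linarith

end ExponentialTime

/-! ### Quasi-integrable maps -/

section QuasiIntegrableMap

open Matrix

variable {d : ℕ} {K : Set (Fin d → ℝ)} {H : (Fin d → ℂ) → ℂ} {S : CPhase d → ℂ}
  {F : RPhase d → RPhase d} {h : (Fin d → ℝ) → ℝ} {ω : (Fin d → ℝ) → Fin d → ℝ}
  {I₀ I : Fin d → ℝ} {σ r ν δ M μ ε η A : ℝ} {x x' : RPhase d}

/-- The complex domain `𝒟_F`, with an arbitrary set `K` of actions in place of the ball `B_R`. -/
def complexDomain (K : Set (Fin d → ℝ)) (σ r : ℝ) : Set (CPhase d) :=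
  {z | (∃ y ∈ K, dist z.1 (cx d y) ≤ σ) ∧ ∀ i, |(z.2 i).im| ≤ r}

/-- `S` is a real-analytic function of size `μ` on `D`, periodic in the angles. -/
structure IsPerturbationOn (S : CPhase d → ℂ) (D : Set (CPhase d)) (μ : ℝ) : Prop where
  analyticOnNhd : AnalyticOnNhd ℂ S D
  im_eq_zero : ∀ x, cxPhase x ∈ D → (S (cxPhase x)).im = 0
  norm_le : ∀ z ∈ D, ‖S z‖ ≤ μ
  periodic : ∀ z ∈ D, ∀ e : Fin d → ℤ, S (z.1, z.2 + cx d fun i ↦ e i) = S z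

/-- Where the actions are within `σ / 2` of `K`, the map `F` is the exact symplectic map with
generating function `Ī · φ + h₀(Ī) + ε S(Ī, φ)` and keeps them within `σ`. -/
structure IsGeneratedNear (F : RPhase d → RPhase d) (ω : (Fin d → ℝ) → Fin d → ℝ) (ε : ℝ)
    (S : CPhase d → ℂ) (K : Set (Fin d → ℝ)) (σ : ℝ) : Prop where
  exists_dist_le : ∀ x : RPhase d, (∃ y ∈ K, dist x.1 y ≤ σ / 2) → ∃ y ∈ K, dist (F x).1 y ≤ σ
  isRealStep : ∀ x : RPhase d, (∃ y ∈ K, dist x.1 y ≤ σ / 2) → IsRealStep ω ε S x (F x)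

theorem complexNhd_subset_complexDomain (hI : I ∈ K) (hσ : δ ≤ σ) (hr : δ ≤ r) :
    complexNhd I δ ⊆ complexDomain K σ r := fun _ hz ↦
  ⟨⟨I, hI, (mem_ball.1 hz.1).le.trans hσ⟩, fun i ↦ (hz.2 i).le.trans hr⟩

theorem cxPhase_mem_complexNhd (hx : x.1 ∈ ball I δ) : cxPhase x ∈ complexNhd I δ := by
  have hδ : 0 < δ := pos_of_mem_ball hx
  exact ⟨by rwa [cxPhase, mem_ball, dist_cx], fun i ↦ by simpa [cxPhase, cx]⟩

theorem IsComplexExtension.isConvexGenNear (hH : IsComplexExtension H h I₀ δ M) (hδ : 0 < δ)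
    (hν : 0 < ν) (hω : ∀ I ∈ ball I₀ δ, HasFDerivAt h (pairing (ω I)) I)
    (hconvex : ∀ I ∈ ball I₀ δ, ∀ v : Fin d → ℝ,
      ν * ∑ i, v i ^ 2 ≤ ∑ i, fderiv ℝ ω I v i * v i) :
    IsConvexGenNear (fun z ↦ H z - H (cx d I₀)) I₀ (ω I₀) δ (2 * M) ν where
  analyticOnNhd z hz := (hH.analyticOnNhd z hz).sub analyticAt_const
  norm_le z hz := (norm_sub_le_of_le (hH.norm_le z hz)
    (hH.norm_le _ (mem_ball_self hδ))).trans_eq (two_mul M).symm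
  apply_center := sub_self _
  fderiv_center u := by
    rw [fderiv_sub_const]
    exact hH.fderiv_apply (mem_ball_self hδ) (hω I₀ (mem_ball_self hδ)) u
  le_re_sub I hI := by
    rw [hH.apply_cx I hI, hH.apply_cx I₀ (mem_ball_self hδ), ← Complex.ofReal_sub,
      Complex.ofReal_re]
    exact half_mul_sum_sq_le_sub_sub_dotProduct (convex_ball I₀ δ) hν hω hconvex
      (mem_ball_self hδ) hI

namespace IsPerturbationOn

variable (hS : IsPerturbationOn S (complexDomain K σ r) μ)
include hS

theorem isPerturbationNear (hI₀ : I₀ ∈ K) (hσ : δ ≤ σ) (hr : δ ≤ r) (hε : 0 ≤ ε) :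
    IsPerturbationNear (fun z ↦ ε * S z) I₀ δ (ε * μ) where
  analyticOnNhd z hz :=
    analyticAt_const.mul (hS.analyticOnNhd z (complexNhd_subset_complexDomain hI₀ hσ hr hz))
  norm_le z hz := by
    rw [norm_mul, Complex.norm_real, Real.norm_of_nonneg hε]
    gcongr
    exact hS.norm_le z (complexNhd_subset_complexDomain hI₀ hσ hr hz)
  periodic z hz e := by
    rw [hS.periodic z (complexNhd_subset_complexDomain hI₀ hσ hr hz) e]

theorem holomorphicBddOn_angles (hI : ∃ y ∈ K, dist I y ≤ σ) (hr : δ ≤ r) (φ : Fin d → ℝ) :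
    HolomorphicBddOn (fun u ↦ S (cx d I, u)) (cx d φ) δ μ := by
  have hdomain (u) (hu : u ∈ ball (cx d φ) δ) : (cx d I, u) ∈ complexDomain K σ r := by
    refine ⟨by simpa only [dist_cx] using hI, fun i ↦ ?_⟩
    calc |(u i).im| = |((u - cx d φ) i).im| := by simp [cx]
      _ ≤ ‖u - cx d φ‖ := (Complex.abs_im_le_norm _).trans (norm_le_pi_norm _ i)
      _ ≤ r := (mem_ball_iff_norm.1 hu).le.trans hr
  exact ⟨fun u hu ↦ ((hS.analyticOnNhd _ (hdomain u hu)).differentiableAt.comp u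
    (by fun_prop)).differentiableWithinAt, fun u hu ↦ hS.norm_le _ (hdomain u hu)⟩

theorem norm_fst_sub_le_of_isRealStep (h : IsRealStep ω ε S x x') (hε : 0 ≤ ε)
    (hx' : ∃ y ∈ K, dist x'.1 y ≤ σ) (hδ : 0 < δ) (hr : δ ≤ r) :
    ‖x'.1 - x.1‖ ≤ ε * μ / δ := by
  have hmem : (cx d x'.1, cx d x.2) ∈ complexDomain K σ r :=
    ⟨by simpa only [dist_cx] using hx', fun i ↦ by simpa [cx] using hδ.le.trans hr⟩
  rw [mul_div_assoc]
  exact h.norm_fst_sub_le hε (hS.analyticOnNhd _ hmem).differentiableAt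
    (hS.holomorphicBddOn_angles hx' hr x.2) hδ

theorem isStep_of_isRealStep (h : IsRealStep ω ε S x x') (hI₀ : I₀ ∈ K) (hσ : δ ≤ σ) (hr : δ ≤ r)
    (hx' : x'.1 ∈ ball I₀ δ) (hH : AnalyticOnNhd ℂ H (ball (cx d I₀) δ))
    (hω : ∀ u, fderiv ℂ H (cx d x'.1) u = cx d (ω x'.1) ⬝ᵥ u) :
    IsStep (fun z ↦ H z.1 + ε * S z) (cxPhase x) (cxPhase x') := by
  have hdomain {y : RPhase d} (hy : y.1 ∈ ball I₀ δ) : cxPhase y ∈ complexDomain K σ r :=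
    complexNhd_subset_complexDomain hI₀ hσ hr (cxPhase_mem_complexNhd hy)
  refine h.isStep (hH _ (by rwa [mem_ball, dist_cx])).differentiableAt hω
    (hS.analyticOnNhd _ (hdomain (y := (x'.1, x.2)) hx')).differentiableAt ?_
  filter_upwards [(isOpen_ball.preimage continuous_fst).mem_nhds hx'] with y hy
  exact hS.im_eq_zero y (hdomain hy)

theorem isOrbitNear_iterate (hF : IsGeneratedNear F ω ε S K σ) (hε : 0 ≤ ε) (hδ : 0 < δ)
    (hσ : δ ≤ σ) (hr : δ ≤ r) (hεμ : ε * μ / δ ≤ δ / 2) (hx : x.1 ∈ K)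
    (hH : AnalyticOnNhd ℂ H (ball (cx d x.1) δ))
    (hω : ∀ I ∈ ball x.1 δ, ∀ u, fderiv ℂ H (cx d I) u = cx d (ω I) ⬝ᵥ u) :
    IsOrbitNear H (fun z ↦ ε * S z) x.1 δ (ε * μ / δ) fun k ↦ F^[k] x := by
  have hnear (k) (hk : (F^[k] x).1 ∈ ball x.1 (δ / 2)) : ∃ y ∈ K, dist (F^[k] x).1 y ≤ σ / 2 :=
    ⟨x.1, hx, (mem_ball.1 hk).le.trans (by linarith)⟩
  have hsucc (k) (hk : (F^[k] x).1 ∈ ball x.1 (δ / 2)) :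
      ‖(F^[k + 1] x).1 - (F^[k] x).1‖ ≤ ε * μ / δ := by
    rw [Function.iterate_succ_apply']
    exact hS.norm_fst_sub_le_of_isRealStep (hF.isRealStep _ (hnear k hk)) hε
      (hF.exists_dist_le _ (hnear k hk)) hδ hr
  refine ⟨rfl, fun k hk ↦ ?_, hsucc⟩
  have hball : (F^[k + 1] x).1 ∈ ball x.1 δ := by
    rw [mem_ball, dist_eq_norm] at hk ⊢
    linarith [hsucc k hk, norm_sub_le_norm_sub_add_norm_sub (F^[k + 1] x).1 (F^[k] x).1 x.1]
  rw [Function.iterate_succ_apply'] at hball ⊢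
  exact hS.isStep_of_isRealStep (hF.isRealStep _ (hnear k hk)) hx hσ hr hball hH (hω _ hball)

end IsPerturbationOn

theorem exists_isResonantNear (ω₀ : Fin d → ℝ) (hη : 0 < η) (hη₁ : η ≤ 1) (hA : 1 ≤ A)
    (hAν : 4 * d ≤ ν * A) : ∃ (T : ℕ) (Ω : Fin d → ℝ), (T : ℝ) ≤ (2 / η) ^ d ∧
      IsResonantNear Ω ω₀ T ν (A * η / T) := by
  have hN : 0 < ⌈η⁻¹⌉₊ := Nat.ceil_pos.2 (inv_pos.2 hη)
  obtain ⟨T, hT, hTN, p, hp⟩ := exists_nat_int_forall_abs_mul_sub_le ω₀ hN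
  have hT' : (0 : ℝ) < T := by exact_mod_cast hT
  have hnorm : ‖ω₀ - fun i ↦ p i / (T : ℝ)‖ ≤ η / T := by
    refine (pi_norm_le_iff_of_nonneg (by positivity)).2 fun i ↦ ?_
    rw [le_div_iff₀' hT', ← Nat.abs_cast T, Real.norm_eq_abs, ← abs_mul, Pi.sub_apply, mul_sub,
      Nat.abs_cast, mul_div_cancel₀ _ hT'.ne']
    refine (hp i).trans ?_
    rw [one_div, inv_le_comm₀ (by exact_mod_cast hN) hη]
    exact Nat.le_ceil _
  refine ⟨T, fun i ↦ p i / (T : ℝ), ?_, hT, ⟨p, ?_⟩, hnorm.trans ?_, ?_⟩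
  · calc (T : ℝ) ≤ (⌈η⁻¹⌉₊ : ℝ) ^ d := by exact_mod_cast hTN
      _ ≤ (2 / η) ^ d := by
        gcongr
        rw [div_eq_mul_inv, two_mul]
        linarith [Nat.ceil_lt_add_one (inv_pos.2 hη).le, (one_le_inv₀ hη).2 hη₁]
  · ext i
    rw [Pi.smul_apply, nsmul_eq_mul, mul_div_cancel₀ _ hT'.ne']
  · gcongr
    exact le_mul_of_one_le_left hη.le hA
  · calc _ ≤ d * (η / T) := by gcongr
      _ = 4 * d * (η / T) / 4 := by ring
      _ ≤ ν * A * (η / T) / 4 := by gcongr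
      _ = ν * (A * η / T) / 4 := by ring

/-- `T ≤ (2 / η) ^ d` makes `ρ = A η / T` at least of the order `η ^ (d + 1)`, hence `ρ ^ 2` of the
order of the perturbation: this is the origin of the exponent `1 / (2 (d + 1))`. -/
theorem exists_forall_exists_isResonantNear (d : ℕ) (hν : 0 < ν) (μ : ℝ) :
    ∃ A : ℝ, 1 ≤ A ∧ ∀ (ω₀ : Fin d → ℝ) (η : ℝ), 0 < η → η ≤ 1 →
      ∃ (T : ℕ) (Ω : Fin d → ℝ) (ρ : ℝ), IsResonantNear Ω ω₀ T ν ρ ∧ 0 < ρ ∧ T * ρ = A * η ∧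
        η ^ (2 * (d + 1)) * μ ≤ ρ ^ 2 * (ν / 32) := by
  have hA : 1 ≤ 1 + 4 * d / ν + 32 * 4 ^ d * |μ| / ν := by
    linarith [show 0 ≤ 4 * d / ν by positivity, show 0 ≤ 32 * 4 ^ d * |μ| / ν by positivity]
  set A := 1 + 4 * d / ν + 32 * 4 ^ d * |μ| / ν with hAdef
  have hνA : ν * A = ν + 4 * d + 32 * 4 ^ d * |μ| := by rw [hAdef]; field_simp
  have hd₀ : 0 ≤ 32 * 4 ^ d * |μ| := by positivity
  refine ⟨A, hA, fun ω₀ η hη hη₁ ↦ ?_⟩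
  obtain ⟨T, Ω, hT, hΩ⟩ := exists_isResonantNear ω₀ hη hη₁ hA (ν := ν) (by linarith)
  have hT₀ : (0 : ℝ) < T := by exact_mod_cast hΩ.period_pos
  refine ⟨T, Ω, A * η / T, hΩ, by positivity, mul_div_cancel₀ _ hT₀.ne', ?_⟩
  have hμ : 4 ^ d * μ ≤ A ^ 2 * (ν / 32) := by
    calc 4 ^ d * μ ≤ 4 ^ d * |μ| := by gcongr; exact le_abs_self μ
      _ ≤ A * (A * (ν / 32)) := by nlinarith
      _ = A ^ 2 * (ν / 32) := by ring
  calc η ^ (2 * (d + 1)) * μ = (η ^ d) ^ 2 / 4 ^ d * η ^ 2 * (4 ^ d * μ) := by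
        field_simp; ring
    _ ≤ (η ^ d) ^ 2 / 4 ^ d * η ^ 2 * (A ^ 2 * (ν / 32)) := by gcongr
    _ = (A * η / (2 / η) ^ d) ^ 2 * (ν / 32) := by
      rw [div_pow 2 η, show (4 : ℝ) = 2 ^ 2 by norm_num, pow_right_comm 2]
      field_simp
    _ ≤ (A * η / T) ^ 2 * (ν / 32) := by gcongr

theorem exists_forall_isGeneratedNear_norm_fst_sub_le (hK : IsCompact K) (hσ : 0 < σ) (hr : 0 < r)
    (hν : 0 < ν) (hh : AnalyticOnNhd ℝ h K)
    (hω : ∀ y ∈ K, ∀ I ∈ closedBall y σ, HasFDerivAt h (pairing (ω I)) I)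
    (hconvex : ∀ y ∈ K, ∀ I ∈ closedBall y σ, ∀ v : Fin d → ℝ,
      ν * ∑ i, v i ^ 2 ≤ ∑ i, fderiv ℝ ω I v i * v i) (μ : ℝ) :
    ∃ ε₁ > 0, ∃ q₀ > 0, ∃ c₂ > 0, ∃ c₃ > 0, ∀ {ε : ℝ} {S : CPhase d → ℂ} {F : RPhase d → RPhase d},
      0 ≤ ε → ε ≤ ε₁ → IsPerturbationOn S (complexDomain K σ r) μ → IsGeneratedNear F ω ε S K σ →
      ∀ {x : RPhase d} {Ω : Fin d → ℝ} {T : ℕ} {ρ : ℝ}, x.1 ∈ K →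
        IsResonantNear Ω (ω x.1) T ν ρ → 0 < ρ → ε * μ ≤ ρ ^ 2 * (ν / 32) → T * ρ ≤ q₀ →
        ∀ k : ℕ, k ≤ c₂ * Real.exp (c₃ / (T * ρ)) → ‖(F^[k] x).1 - x.1‖ ≤ 2 * ρ := by
  obtain ⟨δ₀, hδ₀, M, hext⟩ := exists_isComplexExtension_of_isCompact hK hh
  have hδ : 0 < min δ₀ (min σ r) := by positivity
  set δ := min δ₀ (min σ r)
  have hδσ : δ ≤ σ := (min_le_right _ _).trans (min_le_left _ _)
  have hδr : δ ≤ r := (min_le_right _ _).trans (min_le_right _ _)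
  obtain ⟨q₀, hq₀, c₂, hc₂, c₃, hc₃, hstable⟩ :=
    exists_forall_isOrbitNear_norm_fst_sub_le d hδ hν (M := 2 * |M|) (by positivity)
  refine ⟨δ ^ 2 / (2 * (|μ| + 1)), by positivity, q₀, hq₀, c₂, hc₂, c₃, hc₃, ?_⟩
  intro ε S F hε hεδ hS hF x Ω T ρ hx hΩ hρ hμ hq k hk
  have hball : ball x.1 δ ⊆ closedBall x.1 σ :=
    ball_subset_closedBall.trans (closedBall_subset_closedBall hδσ)
  obtain ⟨H, hH₀⟩ := hext x.1 hx
  have hH : IsComplexExtension H h x.1 δ |M| := hH₀.mono (by simp [δ]) (le_abs_self M)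
  have hconv := hH.isConvexGenNear hδ hν (fun I hI ↦ hω _ hx I (hball hI))
    fun I hI ↦ hconvex _ hx I (hball hI)
  have hεμ : ε * μ / δ ≤ δ / 2 := by
    rw [le_div_iff₀ (by positivity)] at hεδ
    rw [div_le_iff₀ hδ]
    nlinarith [le_abs_self μ]
  refine hstable (hS.isOrbitNear_iterate hF hε hδ hδσ hδr hεμ hx hconv.analyticOnNhd
    fun I hI u ↦ ?_) (hS.isPerturbationNear hx hδσ hδr hε) hconv hΩ hρ hμ hq k hk
  rw [fderiv_sub_const]
  exact hH.fderiv_apply hI (hω _ hx I (hball hI)) u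

end QuasiIntegrableMap

end Nekhoroshev

open Nekhoroshev Metric in
theorem nekhoroshev_quasi_integrable_map_general {d : ℕ} {σ r ν εbar Ms : ℝ}
    (hσ : 0 < σ) (hr : 0 < r) (hν : 0 < ν) (hεbar : 0 < εbar)
    {K : Set (Fin d → ℝ)} (hK : IsCompact K)
    {h₀ : (Fin d → ℝ) → ℝ} (hh₀ : AnalyticOnNhd ℝ h₀ K) {ω : (Fin d → ℝ) → Fin d → ℝ}
    (hω : ∀ y ∈ K, ∀ I ∈ closedBall y σ, HasFDerivAt h₀ (pairing (ω I)) I)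
    (hconvex : ∀ y ∈ K, ∀ I ∈ closedBall y σ, ∀ v : Fin d → ℝ,
      ν * ∑ i, v i ^ 2 ≤ ∑ i, fderiv ℝ ω I v i * v i)
    {s : ℝ → CPhase d → ℂ}
    (hs : ∀ ε ∈ Set.Icc 0 εbar, IsPerturbationOn (s ε) (complexDomain K σ r) Ms)
    {F : ℝ → RPhase d → RPhase d}
    (hF : ∀ ε ∈ Set.Icc 0 εbar, IsGeneratedNear (F ε) ω ε (s ε) K σ) :
    ∃ ε₀ c₁ c₂ c₃ : ℝ, 0 < ε₀ ∧ ε₀ ≤ εbar ∧ 0 < c₁ ∧ 0 < c₂ ∧ 0 < c₃ ∧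
      ∀ ε : ℝ, 0 < ε → ε ≤ ε₀ → ∀ x₀ : RPhase d, x₀.1 ∈ K →
        ∀ k : ℕ, (k : ℝ) ≤ c₂ * Real.exp (c₃ * ε ^ (-(1 / (2 * ((d : ℝ) + 1))))) →
          ‖((F ε)^[k] x₀).1 - x₀.1‖ < c₁ * ε ^ (1 / (2 * ((d : ℝ) + 1))) := by
  obtain ⟨A, hA, hscale⟩ := exists_forall_exists_isResonantNear d hν Ms
  have hA₀ : 0 < A := one_pos.trans_le hA
  obtain ⟨ε₁, hε₁, q₀, hq₀, c₂, hc₂, c₃, hc₃, hstable⟩ :=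
    exists_forall_isGeneratedNear_norm_fst_sub_le hK hσ hr hν hh₀ hω hconvex Ms
  refine ⟨min εbar (min ε₁ (min 1 (q₀ / A) ^ (2 * (d + 1)))), 3 * A, c₂, c₃ / A, by positivity,
    min_le_left _ _, by positivity, hc₂, by positivity, fun ε hε hεle x₀ hx₀ k hk ↦ ?_⟩
  obtain ⟨hεbar', hεε₁, hεη⟩ := by simpa only [le_min_iff] using hεle
  have hεIcc : ε ∈ Set.Icc 0 εbar := ⟨hε.le, hεbar'⟩
  have hexponent : 1 / (2 * ((d : ℝ) + 1)) = ((2 * (d + 1) : ℕ) : ℝ)⁻¹ := by push_cast; ring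
  rw [Real.rpow_neg hε.le, hexponent, ← div_eq_mul_inv, div_div] at hk
  rw [hexponent]
  set η := ε ^ ((2 * (d + 1) : ℕ) : ℝ)⁻¹
  have hη : 0 < η := Real.rpow_pos_of_pos hε _
  have hηε : η ^ (2 * (d + 1)) = ε := Real.rpow_inv_natCast_pow hε.le (by omega)
  obtain ⟨hη₁, hηA⟩ := le_min_iff.1 (le_of_pow_le_pow_left₀ (by omega) (by positivity) (hηε ▸ hεη))
  obtain ⟨T, Ω, ρ, hΩ, hρ, hTρ, hμ⟩ := hscale (ω x₀.1) η hη hη₁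
  have hρA : ρ ≤ A * η := hTρ ▸ le_mul_of_one_le_left hρ.le (by exact_mod_cast hΩ.period_pos)
  refine (hstable hε.le hεε₁ (hs ε hεIcc) (hF ε hεIcc) hx₀ hΩ hρ (hηε ▸ hμ)
    (hTρ ▸ (le_div_iff₀' hA₀).1 hηA) k (hTρ ▸ hk)).trans_lt ?_
  linarith

/-- **Nekhoroshev theorem for a quasi-integrable exact symplectic map.**
Setting: `B_R` a closed ball in `ℝ^d`, `𝒟_F` the complex domain
`{(I,φ) : dist(I,B_R) ≤ σ, |Im φ| ≤ r}`; `h₀` real-analytic on the `σ`-neighbourhood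
`U_σ` of `B_R`, with gradient `ω` and strongly convex with parameter `ν > 0`
(`h₀''(I)(v,v) ≥ ν |v|₂²`); for `0 ≤ ε ≤ ε̄`, `s_ε` is analytic on `𝒟_F`, real at real
points, `1`-periodic in the angles and uniformly bounded by `M_s`; `F_ε` is the lift of
the exact symplectic map defined implicitly by the generating function
`Ī·φ + h₀(Ī) + ε s_ε(Ī,φ)`, i.e. `Ī = I − ε ∂_φ s_ε(Ī,φ)`,
`φ̄ = φ + ω(Ī) + ε ∂_I s_ε(Ī,φ)`.
Conclusion: there are positive constants `ε₀, c₁, c₂, c₃` such that for `0 < ε ≤ ε₀`,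
every trajectory starting in `B_R × ℝ^d` satisfies `|I_k − I₀| < c₁ ε^{1/(2(d+1))}`
for all `0 ≤ k ≤ c₂ exp(c₃ ε^{−1/(2(d+1))})`. -/
theorem nekhoroshev_quasi_integrable_map (d : ℕ) (hd : 1 ≤ d)
    (R σ r ν εbar Ms : ℝ)
    (hR : 0 < R) (hσ : 0 < σ) (hr : 0 < r) (hν : 0 < ν) (hεbar : 0 < εbar)
    (c₀ : Fin d → ℝ) (BR : Set (Fin d → ℝ)) (hBR : BR = Metric.closedBall c₀ R)
    (Uσ : Set (Fin d → ℝ)) (hUσ : Uσ = {I | ∃ y ∈ BR, dist I y ≤ σ})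
    (DF : Set (CPhase d))
    (hDF : DF = {z : CPhase d |
      (∃ y ∈ BR, dist z.1 (cx d y) ≤ σ) ∧ ∀ i, |(z.2 i).im| ≤ r})
    (h₀ : (Fin d → ℝ) → ℝ) (hh₀ : AnalyticOnNhd ℝ h₀ Uσ)
    (ω : (Fin d → ℝ) → Fin d → ℝ)
    (hω : ∀ I ∈ Uσ, HasFDerivAt h₀
      (∑ i, ω I i • (ContinuousLinearMap.proj i : (Fin d → ℝ) →L[ℝ] ℝ)) I)
    (hconvex : ∀ I ∈ Uσ, ∀ v : Fin d → ℝ,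
      ν * ∑ i, v i ^ 2 ≤ ∑ i, fderiv ℝ ω I v i * v i)
    (s : ℝ → CPhase d → ℂ)
    (hsa : ∀ ε ∈ Set.Icc (0 : ℝ) εbar, AnalyticOnNhd ℂ (s ε) DF)
    (hsreal : ∀ ε ∈ Set.Icc (0 : ℝ) εbar, ∀ x : RPhase d,
      (cx d x.1, cx d x.2) ∈ DF → (s ε (cx d x.1, cx d x.2)).im = 0)
    (hsper : ∀ ε ∈ Set.Icc (0 : ℝ) εbar, ∀ z ∈ DF, ∀ e : Fin d → ℤ,
      s ε (z.1, z.2 + fun i => ((e i : ℝ) : ℂ)) = s ε z)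
    (hsbound : ∀ ε ∈ Set.Icc (0 : ℝ) εbar, ∀ z ∈ DF, ‖s ε z‖ ≤ Ms)
    (F : ℝ → RPhase d → RPhase d)
    (hF : ∀ ε ∈ Set.Icc (0 : ℝ) εbar, ∀ x : RPhase d,
      (∃ y ∈ BR, dist x.1 y ≤ σ / 2) →
      (∃ y ∈ BR, dist (F ε x).1 y ≤ σ) ∧
      (∀ i, (F ε x).1 i = x.1 i -
        ε * (fderiv ℂ (s ε) (cx d (F ε x).1, cx d x.2) (0, Pi.single i 1)).re) ∧
      (∀ i, (F ε x).2 i = x.2 i + ω (F ε x).1 i +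
        ε * (fderiv ℂ (s ε) (cx d (F ε x).1, cx d x.2) (Pi.single i 1, 0)).re))
    (hlift : ∀ ε ∈ Set.Icc (0 : ℝ) εbar, ∀ x : RPhase d, ∀ e : Fin d → ℤ,
      F ε (x.1, x.2 + fun i => (e i : ℝ)) = ((F ε x).1, (F ε x).2 + fun i => (e i : ℝ))) :
    ∃ ε₀ c₁ c₂ c₃ : ℝ, 0 < ε₀ ∧ ε₀ ≤ εbar ∧ 0 < c₁ ∧ 0 < c₂ ∧ 0 < c₃ ∧
      ∀ ε : ℝ, 0 < ε → ε ≤ ε₀ → ∀ x₀ : RPhase d, x₀.1 ∈ BR →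
        ∀ k : ℕ, (k : ℝ) ≤ c₂ * Real.exp (c₃ * ε ^ (-(1 / (2 * ((d : ℝ) + 1))))) →
          ‖((F ε)^[k] x₀).1 - x₀.1‖ < c₁ * ε ^ (1 / (2 * ((d : ℝ) + 1))) := by
  subst hBR hUσ hDF
  exact nekhoroshev_quasi_integrable_map_general hσ hr hν hεbar (isCompact_closedBall c₀ R)
    (fun y hy ↦ hh₀ y ⟨y, hy, by simpa using hσ.le⟩) (fun y hy I hI ↦ hω I ⟨y, hy, hI⟩)
    (fun y hy I hI ↦ hconvex I ⟨y, hy, hI⟩)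
    (fun ε hε ↦ ⟨hsa ε hε, hsreal ε hε, hsbound ε hε, hsper ε hε⟩)
    fun ε hε ↦ ⟨fun x hx ↦ (hF ε hε x hx).1, fun x hx ↦ ⟨(hF ε hε x hx).2.1, (hF ε hε x hx).2.2⟩⟩
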